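/- arXiv:2506.03625 — 2 statements merged into one kernel-verified Lean document; each statement's English description precedes it below -/
import Mathlib

section
/- Let m ≥ 1 and l be coprime integers. Then there exists a constant X(m) such that for all real x ≥ X(m), x/(φ(m) log x) < π(x; m, l) < (x/(φ(m) log x)) · (1 + 5/(2 log x)), where π(x; m, l) is the number of primes p ≤ x with p ≡ l (mod m) and φ is Euler's totient function. -/
/-- `piMod x m l` is the number of primes `p ≤ x` with `p ≡ l (mod m)`. -/
noncomputable def piMod (x : ℝ) (m : ℕ) (l : ℤ) : ℕ :=
  Set.ncard {p : ℕ | p.Prime ∧ (p : ℝ) ≤ x ∧ (p : ℤ) ≡ l [ZMOD (m : ℤ)]}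

/-!
Write `Λ_a` for the von Mangoldt function restricted to the residue class `a` modulo `q`. Its
Dirichlet series minus `φ(q)⁻¹ / (s - 1)` extends analytically across the line `re s = 1`, because
the Dirichlet `L`-functions do not vanish there. The argument makes this quantitative: on
`re s ≥ 1` the extension and its derivatives grow slowly in `im s`. Dividing by `s ^ 2` makes them
integrable, and what results is the Laplace transform of the error term in the smoothed sum
`∑ Λ_a(n) (u - log n)₊`. By Fourier inversion on `re s = 1` and integration by parts, that
error term is `o(e ^ u / u ^ k)` for every `k`. The smoothed sum is convex with derivative
`∑_{n ≤ e ^ u} Λ_a(n)`, so comparing slopes over an interval of length `u ^ (-k)` removes the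
smoothing at the cost of half the exponent. Partial summation then gives
`π(x; q, a) = φ(q)⁻¹ (x / log x + x / log² x) + o(x / log² x)`, and `0 < 1 < 5 / 2`.
-/

namespace SiegelWalfisz

open Complex Filter Topology MeasureTheory Set

open ArithmeticFunction.vonMangoldt (residueClass LFunctionResidueClassAux)

section PartialSums

variable {f : ℕ → ℂ} {c : ℂ} {K : ℝ} {X : ℕ} {s : ℂ}

/-- The error `∑_{X < k ≤ t} f k - c (t - X)` made by approximating the summatory function of `f`
beyond `X` by a linear function of slope `c`; it vanishes for `t ≤ X`. -/
noncomputable def tailDiscrepancy (f : ℕ → ℂ) (c : ℂ) (X : ℕ) : ℝ → ℂ :=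
  (Ioi (X : ℝ)).indicator fun t ↦ ∑ k ∈ Finset.Ioc X ⌊t⌋₊, f k - c * (t - X)

/-- The continuation of `LSeries f` to `0 < re s`, `s ≠ 1`, when `f` has mean value `c` with
bounded error: the series is truncated at the cut-off `X`, on which the value does not depend, and
partial summation is applied to the tail. -/
noncomputable def continuedLSeries (f : ℕ → ℂ) (c : ℂ) (X : ℕ) (s : ℂ) : ℂ :=
  ∑ n ∈ Finset.Ioc 0 X, f n * (n : ℂ) ^ (-s) + c * ((X : ℂ) ^ (1 - s) / (s - 1)) +
    s * mellin (tailDiscrepancy f c X) (-s)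

lemma norm_le_of_norm_sum_sub_le (hK : ∀ M : ℕ, ‖∑ k ∈ Finset.Ioc 0 M, f k - c * M‖ ≤ K) {n : ℕ}
    (hn : n ≠ 0) : ‖f n‖ ≤ 2 * K + ‖c‖ := by
  obtain ⟨m, rfl⟩ := Nat.exists_eq_add_one_of_ne_zero hn
  have hf : f (m + 1) = (∑ k ∈ Finset.Ioc 0 (m + 1), f k - c * (m + 1 : ℕ)) -
      (∑ k ∈ Finset.Ioc 0 m, f k - c * m) + c := by
    rw [Finset.sum_Ioc_succ_top (Nat.zero_le m)]
    push_cast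
    ring
  calc ‖f (m + 1)‖ ≤ K + K + ‖c‖ := hf ▸ norm_add_le_of_le (norm_sub_le_of_le (hK _) (hK _)) le_rfl
    _ = 2 * K + ‖c‖ := by ring

lemma norm_tailDiscrepancy_le (hK : ∀ M : ℕ, ‖∑ k ∈ Finset.Ioc 0 M, f k - c * M‖ ≤ K) (X : ℕ)
    (t : ℝ) : ‖tailDiscrepancy f c X t‖ ≤ 2 * K + ‖c‖ := by
  have hK0 : 0 ≤ K := (norm_nonneg _).trans (hK 0)
  by_cases ht : t ∈ Ioi (X : ℝ)
  · have hfloor : (⌊t⌋₊ : ℝ) ≤ t := Nat.floor_le ((Nat.cast_nonneg X).trans (mem_Ioi.1 ht).le)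
    have hfract : ‖((t - ⌊t⌋₊ : ℝ) : ℂ)‖ ≤ 1 := by
      rw [norm_real, Real.norm_of_nonneg (by linarith)]
      linarith [Nat.lt_floor_add_one t]
    have hsplit : tailDiscrepancy f c X t = (∑ k ∈ Finset.Ioc 0 ⌊t⌋₊, f k - c * ⌊t⌋₊) -
        (∑ k ∈ Finset.Ioc 0 X, f k - c * X) - c * ((t - ⌊t⌋₊ : ℝ) : ℂ) := by
      rw [tailDiscrepancy, indicator_of_mem ht,
        ← Finset.sum_Ioc_consecutive f X.zero_le (Nat.le_floor (mem_Ioi.1 ht).le)]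
      push_cast
      ring
    calc ‖tailDiscrepancy f c X t‖ ≤ K + K + ‖c‖ * 1 := by
          rw [hsplit]
          exact norm_sub_le_of_le (norm_sub_le_of_le (hK _) (hK _))
            (norm_mul_le_of_le le_rfl hfract)
      _ = 2 * K + ‖c‖ := by ring
  · rw [tailDiscrepancy, indicator_of_notMem ht, norm_zero]
    positivity

lemma measurable_tailDiscrepancy (f : ℕ → ℂ) (c : ℂ) (X : ℕ) :
    Measurable (tailDiscrepancy f c X) :=
  Measurable.indicator (((measurable_from_nat (f := fun n ↦ ∑ k ∈ Finset.Ioc X n, f k)).comp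
    Nat.measurable_floor).sub (by fun_prop)) measurableSet_Ioi

lemma locallyIntegrableOn_tailDiscrepancy
    (hK : ∀ M : ℕ, ‖∑ k ∈ Finset.Ioc 0 M, f k - c * M‖ ≤ K) (X : ℕ) :
    LocallyIntegrableOn (tailDiscrepancy f c X) (Ioi 0) :=
  ((locallyIntegrable_const (2 * K + ‖c‖)).mono
    (measurable_tailDiscrepancy f c X).aestronglyMeasurable <| .of_forall fun t ↦
      (norm_tailDiscrepancy_le hK X t).trans (Real.le_norm_self _)).locallyIntegrableOn _

lemma tailDiscrepancy_isBigO_atTop (hK : ∀ M : ℕ, ‖∑ k ∈ Finset.Ioc 0 M, f k - c * M‖ ≤ K)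
    (X : ℕ) : tailDiscrepancy f c X =O[atTop] fun t : ℝ ↦ t ^ (-0 : ℝ) :=
  .of_bound (2 * K + ‖c‖) <| .of_forall fun t ↦ by simpa using norm_tailDiscrepancy_le hK X t

lemma tailDiscrepancy_isBigO_nhdsGT_zero (f : ℕ → ℂ) (c : ℂ) (hX : 0 < X) (b : ℝ) :
    tailDiscrepancy f c X =O[𝓝[>] 0] fun t : ℝ ↦ t ^ (-b) := by
  have hzero : tailDiscrepancy f c X =ᶠ[𝓝[>] 0] fun _ ↦ 0 := by
    filter_upwards [mem_nhdsWithin_of_mem_nhds (Iio_mem_nhds (Nat.cast_pos.2 hX))] with t ht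
    exact indicator_of_notMem (notMem_Ioi.2 (mem_Iio.1 ht).le) _
  exact hzero.trans_isBigO (Asymptotics.isBigO_zero _ _)

lemma mellinConvergent_tailDiscrepancy
    (hK : ∀ M : ℕ, ‖∑ k ∈ Finset.Ioc 0 M, f k - c * M‖ ≤ K) (hX : 0 < X) (hs : s.re < 0) :
    MellinConvergent (tailDiscrepancy f c X) s :=
  mellinConvergent_of_isBigO_rpow (locallyIntegrableOn_tailDiscrepancy hK X)
    (tailDiscrepancy_isBigO_atTop hK X) hs
    (tailDiscrepancy_isBigO_nhdsGT_zero f c hX (s.re - 1)) (sub_one_lt _)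

lemma differentiableAt_mellin_tailDiscrepancy
    (hK : ∀ M : ℕ, ‖∑ k ∈ Finset.Ioc 0 M, f k - c * M‖ ≤ K) (hX : 0 < X) (hs : s.re < 0) :
    DifferentiableAt ℂ (mellin (tailDiscrepancy f c X)) s :=
  mellin_differentiableAt_of_isBigO_rpow (locallyIntegrableOn_tailDiscrepancy hK X)
    (tailDiscrepancy_isBigO_atTop hK X) hs
    (tailDiscrepancy_isBigO_nhdsGT_zero f c hX (s.re - 1)) (sub_one_lt _)

lemma mellin_tailDiscrepancy_eq_setIntegral (f : ℕ → ℂ) (c : ℂ) (X : ℕ) (s : ℂ) :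
    mellin (tailDiscrepancy f c X) s =
      ∫ t in Ioi (X : ℝ), (t : ℂ) ^ (s - 1) • tailDiscrepancy f c X t := by
  refine setIntegral_eq_of_subset_of_forall_sdiff_eq_zero measurableSet_Ioi
    (Ioi_subset_Ioi X.cast_nonneg) fun t ht ↦ ?_
  rw [tailDiscrepancy, indicator_of_notMem ht.2, smul_zero]

lemma norm_mellin_tailDiscrepancy_le
    (hK : ∀ M : ℕ, ‖∑ k ∈ Finset.Ioc 0 M, f k - c * M‖ ≤ K) (hX : 0 < X) (hs : 0 < s.re) :
    ‖mellin (tailDiscrepancy f c X) (-s)‖ ≤ (2 * K + ‖c‖) * ((X : ℝ) ^ (-s.re) / s.re) := by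
  have hX' : (0 : ℝ) < X := Nat.cast_pos.2 hX
  have hmajorant : ∫ t in Ioi (X : ℝ), (2 * K + ‖c‖) * t ^ (-s.re - 1) =
      (2 * K + ‖c‖) * ((X : ℝ) ^ (-s.re) / s.re) := by
    rw [integral_const_mul, integral_Ioi_rpow_of_lt (by linarith) hX', sub_add_cancel,
      neg_div_neg_eq]
  rw [mellin_tailDiscrepancy_eq_setIntegral, ← hmajorant]
  refine norm_integral_le_of_norm_le
    ((integrableOn_Ioi_rpow_of_lt (by linarith) hX').const_mul _) ?_
  filter_upwards [ae_restrict_mem measurableSet_Ioi] with t ht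
  have ht0 : 0 < t := hX'.trans ht
  rw [norm_smul, norm_cpow_eq_rpow_re_of_pos ht0, mul_comm, sub_re, neg_re, one_re]
  gcongr
  exact norm_tailDiscrepancy_le hK X t

lemma LSeries_eq_sum_add_LSeries_indicator (hf : LSeriesSummable f s) (X : ℕ) :
    LSeries f s =
      ∑ n ∈ Finset.Ioc 0 X, f n * (n : ℂ) ^ (-s) + LSeries ((Ioi X).indicator f) s := by
  have hterm : LSeries.term ((Ioi X).indicator f) s = (Ioi X).indicator (LSeries.term f s) := by
    ext n
    by_cases hn : n ∈ Ioi X <;> simp [LSeries.term, hn]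
  have hcompl : ((↑(Finset.Iic X) : Set ℕ)ᶜ) = Ioi X := by simp
  rw [LSeries, LSeries, ← hf.sum_add_tsum_compl (s := Finset.Iic X), tsum_subtype, hcompl, hterm,
    ← Finset.Icc_bot, bot_eq_zero, ← Finset.Ioc_insert_left X.zero_le, Finset.sum_insert (by simp),
    LSeries.term_zero, zero_add]
  congr 1
  refine Finset.sum_congr rfl fun n hn ↦ ?_
  rw [LSeries.term_of_ne_zero (Finset.mem_Ioc.1 hn).1.ne', cpow_neg, div_eq_mul_inv]

lemma LSeries_indicator_Ioi_eq_mul_integral {B : ℝ} (hB : ∀ n ≠ 0, ‖f n‖ ≤ B) (hX : 0 < X)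
    (hs : 1 < s.re) : LSeries ((Ioi X).indicator f) s =
      s * ∫ t in Ioi (X : ℝ), (∑ k ∈ Finset.Ioc X ⌊t⌋₊, f k) * (t : ℂ) ^ (-(s + 1)) := by
  have hsum (n : ℕ) : ∑ k ∈ Finset.Icc 1 n, (Ioi X).indicator f k = ∑ k ∈ Finset.Ioc X n, f k := by
    rw [Finset.sum_indicator_eq_sum_filter]
    congr 1
    ext k
    simp only [mem_Ioi, Finset.mem_filter, Finset.mem_Icc, Finset.mem_Ioc]
    lia
  have hpartial : (fun n : ℕ ↦ ∑ k ∈ Finset.Icc 1 n, ‖(Ioi X).indicator f k‖) =O[atTop]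
      fun n : ℕ ↦ (n : ℝ) ^ (1 : ℝ) := by
    refine .of_bound B (.of_forall fun n ↦ ?_)
    rw [Real.rpow_one, Real.norm_natCast, Real.norm_of_nonneg (by positivity)]
    calc ∑ k ∈ Finset.Icc 1 n, ‖(Ioi X).indicator f k‖ ≤ ∑ _k ∈ Finset.Icc 1 n, B :=
          Finset.sum_le_sum fun k hk ↦ (norm_indicator_le_norm_self f k).trans
            (hB k (Nat.one_le_iff_ne_zero.1 (Finset.mem_Icc.1 hk).1))
      _ = B * n := by simp [mul_comm]
  rw [LSeries_eq_mul_integral' _ zero_le_one hs hpartial]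
  simp only [hsum]
  congr 1
  refine setIntegral_eq_of_subset_of_forall_sdiff_eq_zero measurableSet_Ioi
    (Ioi_subset_Ioi (by exact_mod_cast hX)) fun t ht ↦ ?_
  rw [Finset.Ioc_eq_empty, Finset.sum_empty, zero_mul]
  simpa using Nat.floor_le_of_le (notMem_Ioi.1 ht.2)

lemma sub_mul_cpow_eqOn {x : ℝ} (hx : 0 < x) (s : ℂ) :
    EqOn (fun t : ℝ ↦ (t : ℂ) ^ (-s) - x * (t : ℂ) ^ (-s - 1))
      (fun t ↦ ((t : ℂ) - x) * (t : ℂ) ^ (-s - 1)) (Ioi x) := by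
  intro t ht
  have ht0 : (t : ℂ) ≠ 0 := ofReal_ne_zero.2 (hx.trans ht).ne'
  simp only [sub_mul, cpow_sub _ _ ht0, cpow_one, mul_div_cancel₀ _ ht0]

lemma integrableOn_Ioi_sub_mul_cpow (hs : 1 < s.re) {x : ℝ} (hx : 0 < x) :
    IntegrableOn (fun t : ℝ ↦ ((t : ℂ) - x) * (t : ℂ) ^ (-s - 1)) (Ioi x) := by
  refine IntegrableOn.congr_fun ?_ (sub_mul_cpow_eqOn hx s) measurableSet_Ioi
  exact (integrableOn_Ioi_cpow_of_lt (by simpa using hs) hx).sub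
    ((integrableOn_Ioi_cpow_of_lt (by simp; linarith) hx).const_mul (x : ℂ))

lemma mul_integral_Ioi_sub_mul_cpow (hs : 1 < s.re) {x : ℝ} (hx : 0 < x) :
    s * ∫ t in Ioi x, ((t : ℂ) - x) * (t : ℂ) ^ (-s - 1) = (x : ℂ) ^ (1 - s) / (s - 1) := by
  have hs0 : s ≠ 0 := by rintro rfl; norm_num at hs
  have hs1 : s - 1 ≠ 0 := sub_ne_zero.2 (by rintro rfl; norm_num at hs)
  have hx0 : (x : ℂ) ≠ 0 := ofReal_ne_zero.2 hx.ne'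
  have hre : (-s).re < -1 := by simpa using hs
  have hre' : (-s - 1).re < -1 := by simp; linarith
  rw [← setIntegral_congr_fun measurableSet_Ioi (sub_mul_cpow_eqOn hx s),
    integral_sub (integrableOn_Ioi_cpow_of_lt hre hx)
      ((integrableOn_Ioi_cpow_of_lt hre' hx).const_mul _), integral_const_mul,
    integral_Ioi_cpow_of_lt hre hx, integral_Ioi_cpow_of_lt hre' hx, sub_add_cancel,
    show 1 - s = -s + 1 by ring, cpow_add _ _ hx0, cpow_one, show -s + 1 = -(s - 1) by ring]
  field_simp
  ring

lemma LSeries_eq_continuedLSeries (hK : ∀ M : ℕ, ‖∑ k ∈ Finset.Ioc 0 M, f k - c * M‖ ≤ K)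
    (hX : 0 < X) (hs : 1 < s.re) : LSeries f s = continuedLSeries f c X s := by
  have hX' : (0 : ℝ) < X := Nat.cast_pos.2 hX
  have hbound (n : ℕ) (hn : n ≠ 0) := norm_le_of_norm_sum_sub_le hK hn
  have hint : IntegrableOn (fun t : ℝ ↦ (t : ℂ) ^ (-s - 1) • tailDiscrepancy f c X t) (Ioi X) :=
    (mellinConvergent_tailDiscrepancy hK hX (s := -s) (by simp; linarith)).mono_set
      (Ioi_subset_Ioi hX'.le)
  have hsplit : EqOn (fun t : ℝ ↦ (∑ k ∈ Finset.Ioc X ⌊t⌋₊, f k) * (t : ℂ) ^ (-(s + 1)))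
      (fun t ↦ c * (((t : ℂ) - (X : ℝ)) * (t : ℂ) ^ (-s - 1)) +
        (t : ℂ) ^ (-s - 1) • tailDiscrepancy f c X t) (Ioi X) := by
    intro t ht
    simp only [tailDiscrepancy, indicator_of_mem ht, smul_eq_mul, neg_add', ofReal_natCast]
    ring
  have htail : LSeries ((Ioi X).indicator f) s =
      c * ((X : ℂ) ^ (1 - s) / (s - 1)) + s * mellin (tailDiscrepancy f c X) (-s) := by
    rw [LSeries_indicator_Ioi_eq_mul_integral hbound hX hs,
      setIntegral_congr_fun measurableSet_Ioi hsplit,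
      integral_add ((integrableOn_Ioi_sub_mul_cpow hs hX').const_mul c) hint, integral_const_mul,
      mul_add, mul_left_comm, mul_integral_Ioi_sub_mul_cpow hs hX',
      ← mellin_tailDiscrepancy_eq_setIntegral, ofReal_natCast]
  rw [LSeries_eq_sum_add_LSeries_indicator (LSeriesSummable_of_bounded_of_one_lt_re hbound hs) X,
    htail, ← add_assoc, continuedLSeries]

lemma differentiableAt_continuedLSeries (hK : ∀ M : ℕ, ‖∑ k ∈ Finset.Ioc 0 M, f k - c * M‖ ≤ K)
    (hX : 0 < X) (hs : 0 < s.re) (hs1 : s ≠ 1) :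
    DifferentiableAt ℂ (continuedLSeries f c X) s := by
  have hmellin : DifferentiableAt ℂ (fun z ↦ mellin (tailDiscrepancy f c X) (-z)) s :=
    (differentiableAt_mellin_tailDiscrepancy hK hX (s := -s) (by simpa using hs)).comp s
      differentiable_neg.differentiableAt
  have hhead : DifferentiableAt ℂ (fun z ↦ ∑ n ∈ Finset.Ioc 0 X, f n * (n : ℂ) ^ (-z)) s := by
    refine .fun_sum fun n hn ↦ (DifferentiableAt.const_cpow (by fun_prop) (.inl ?_)).const_mul _
    exact Nat.cast_ne_zero.2 (Finset.mem_Ioc.1 hn).1.ne'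
  have hpow : DifferentiableAt ℂ (fun z : ℂ ↦ (X : ℂ) ^ (1 - z)) s :=
    .const_cpow (by fun_prop) (.inl (Nat.cast_ne_zero.2 hX.ne'))
  have hpole : DifferentiableAt ℂ (fun z : ℂ ↦ (X : ℂ) ^ (1 - z) / (z - 1)) s :=
    hpow.fun_div (differentiableAt_fun_id.sub_const 1) (sub_ne_zero.2 hs1)
  unfold continuedLSeries
  exact (hhead.fun_add (hpole.const_mul c)).fun_add (differentiableAt_fun_id.fun_mul hmellin)

lemma norm_sum_mul_cpow_neg_le {B η : ℝ} (hB : ∀ n ≠ 0, ‖f n‖ ≤ B) (hX : 0 < X) (hη : 0 < η)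
    (hs : 1 - η ≤ s.re) :
    ‖∑ n ∈ Finset.Ioc 0 X, f n * (n : ℂ) ^ (-s)‖ ≤ B * (1 + 1 / η) * (X : ℝ) ^ (2 * η) := by
  have hB0 : 0 ≤ B := (norm_nonneg _).trans (hB 1 one_ne_zero)
  have hX1 : (1 : ℝ) ≤ X := Nat.one_le_cast.2 hX
  have hone : 1 ≤ (X : ℝ) ^ η := Real.one_le_rpow hX1 hη.le
  calc ‖∑ n ∈ Finset.Ioc 0 X, f n * (n : ℂ) ^ (-s)‖
      ≤ ∑ n ∈ Finset.Ioc 0 X, B * ((X : ℝ) ^ η * (n : ℝ)⁻¹) := by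
        refine norm_sum_le_of_le _ fun n hn ↦ ?_
        obtain ⟨hn0, hnX⟩ := Finset.mem_Ioc.1 hn
        have hn1 : (1 : ℝ) ≤ n := Nat.one_le_cast.2 hn0
        rw [norm_mul, norm_natCast_cpow_of_pos hn0]
        have hpow : (n : ℝ) ^ (-s).re ≤ (X : ℝ) ^ η * (n : ℝ)⁻¹ :=
          calc (n : ℝ) ^ (-s).re ≤ (n : ℝ) ^ (η - 1) :=
                Real.rpow_le_rpow_of_exponent_le hn1 (by rw [neg_re]; linarith)
            _ = (n : ℝ) ^ η * (n : ℝ)⁻¹ := by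
                rw [Real.rpow_sub_one (by positivity), div_eq_mul_inv]
            _ ≤ (X : ℝ) ^ η * (n : ℝ)⁻¹ := by gcongr
        gcongr
        exact hB n hn0.ne'
    _ = B * ((X : ℝ) ^ η * (harmonic X : ℚ)) := by
        rw [← Finset.mul_sum, ← Finset.mul_sum, harmonic_eq_sum_Icc,
          ← Finset.Icc_add_one_left_eq_Ioc]
        push_cast
        rfl
    _ ≤ B * ((X : ℝ) ^ η * (1 + Real.log X)) := by gcongr; exact harmonic_le_one_add_log X
    _ ≤ B * ((X : ℝ) ^ η * ((X : ℝ) ^ η + (X : ℝ) ^ η / η)) := by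
        gcongr
        exact Real.log_le_rpow_div (by positivity) hη
    _ = B * (1 + 1 / η) * (X : ℝ) ^ (2 * η) := by
        rw [two_mul, Real.rpow_add (by positivity)]
        ring

lemma norm_mul_mellin_tailDiscrepancy_le {η : ℝ}
    (hK : ∀ M : ℕ, ‖∑ k ∈ Finset.Ioc 0 M, f k - c * M‖ ≤ K) (hX : 0 < X) (hs : 1 - η ≤ s.re)
    (hs' : 1 / 2 ≤ s.re) (hsX : ‖s‖ ≤ 4 * X) :
    ‖s * mellin (tailDiscrepancy f c X) (-s)‖ ≤ 8 * (2 * K + ‖c‖) * (X : ℝ) ^ η := by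
  have hX1 : (1 : ℝ) ≤ X := Nat.one_le_cast.2 hX
  have hK0 : 0 ≤ K := (norm_nonneg _).trans (hK 0)
  have hpow : (X : ℝ) ^ (-s.re) ≤ (X : ℝ) ^ η / X := by
    rw [← Real.rpow_sub_one (by positivity)]
    exact Real.rpow_le_rpow_of_exponent_le hX1 (by linarith)
  have hquot : (X : ℝ) ^ (-s.re) / s.re ≤ (X : ℝ) ^ η / X / (1 / 2) := by gcongr
  calc ‖s * mellin (tailDiscrepancy f c X) (-s)‖
      ≤ 4 * X * ((2 * K + ‖c‖) * ((X : ℝ) ^ η / X / (1 / 2))) :=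
        norm_mul_le_of_le hsX ((norm_mellin_tailDiscrepancy_le hK hX (by linarith)).trans
          (by gcongr))
    _ = 8 * (2 * K + ‖c‖) * (X : ℝ) ^ η := by field_simp; ring

lemma norm_continuedLSeries_le {η : ℝ}
    (hK : ∀ M : ℕ, ‖∑ k ∈ Finset.Ioc 0 M, f k - c * M‖ ≤ K) (hX : 0 < X) (hη : 0 < η)
    (hs : 1 - η ≤ s.re) (hs' : 1 / 2 ≤ s.re) (hs1 : 1 ≤ ‖s - 1‖) (hsX : ‖s‖ ≤ 4 * X) :
    ‖continuedLSeries f c X s‖ ≤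
      ((2 * K + ‖c‖) * (9 + 1 / η) + ‖c‖) * (X : ℝ) ^ (2 * η) := by
  have hX1 : (1 : ℝ) ≤ X := Nat.one_le_cast.2 hX
  have hK0 : 0 ≤ K := (norm_nonneg _).trans (hK 0)
  have hmono : (X : ℝ) ^ η ≤ (X : ℝ) ^ (2 * η) :=
    Real.rpow_le_rpow_of_exponent_le hX1 (by linarith)
  have hpole : ‖c * ((X : ℂ) ^ (1 - s) / (s - 1))‖ ≤ ‖c‖ * (X : ℝ) ^ η := by
    rw [norm_mul, norm_div, norm_natCast_cpow_of_pos hX]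
    gcongr
    refine (div_le_self (by positivity) hs1).trans (Real.rpow_le_rpow_of_exponent_le hX1 ?_)
    rw [sub_re, one_re]
    linarith
  calc ‖continuedLSeries f c X s‖
      ≤ (2 * K + ‖c‖) * (1 + 1 / η) * (X : ℝ) ^ (2 * η) + ‖c‖ * (X : ℝ) ^ η +
          8 * (2 * K + ‖c‖) * (X : ℝ) ^ η :=
        norm_add_le_of_le (norm_add_le_of_le
          (norm_sum_mul_cpow_neg_le (fun n hn ↦ norm_le_of_norm_sum_sub_le hK hn) hX hη hs) hpole)
          (norm_mul_mellin_tailDiscrepancy_le hK hX hs hs' hsX)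
    _ ≤ (2 * K + ‖c‖) * (1 + 1 / η) * (X : ℝ) ^ (2 * η) + ‖c‖ * (X : ℝ) ^ (2 * η) +
          8 * (2 * K + ‖c‖) * (X : ℝ) ^ (2 * η) := by gcongr
    _ = ((2 * K + ‖c‖) * (9 + 1 / η) + ‖c‖) * (X : ℝ) ^ (2 * η) := by ring

end PartialSums

section DirichletLFunction

lemma exists_norm_sum_sub_le_of_periodic {f : ℕ → ℂ} {N : ℕ} (hf : Function.Periodic f N)
    (hN : N ≠ 0) : ∃ (c : ℂ) (K : ℝ), ∀ M : ℕ, ‖∑ k ∈ Finset.Ioc 0 M, f k - c * M‖ ≤ K := by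
  have hN' : (N : ℂ) ≠ 0 := Nat.cast_ne_zero.2 hN
  have hrange (M : ℕ) : ∑ k ∈ Finset.Ioc 0 M, f k = ∑ k ∈ Finset.range M, f (k + 1) := by
    rw [Finset.range_eq_Ico, Finset.sum_Ico_add' f 0 M 1]
    rfl
  set c : ℂ := (∑ k ∈ Finset.range N, f (k + 1)) / N with hc
  set D : ℕ → ℂ := fun M ↦ ∑ k ∈ Finset.Ioc 0 M, f k - c * M with hD
  have hperiodic : Function.Periodic D N := by
    intro M
    have hshift (k : ℕ) : f (N + k + 1) = f (k + 1) := by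
      rw [show N + k + 1 = k + 1 + N by ring, hf]
    simp only [hD, hrange]
    rw [add_comm M N, Finset.sum_range_add, ← div_mul_cancel₀ (∑ k ∈ Finset.range N, f (k + 1)) hN',
      ← hc]
    simp only [hshift]
    push_cast
    ring
  refine ⟨c, ∑ j ∈ Finset.range N, ‖D j‖, fun M ↦ ?_⟩
  calc ‖D M‖ = ‖D (M % N)‖ := by rw [hperiodic.map_mod_nat M]
    _ ≤ ∑ j ∈ Finset.range N, ‖D j‖ :=
      Finset.single_le_sum (f := fun j ↦ ‖D j‖) (fun _ _ ↦ norm_nonneg _)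
        (Finset.mem_range.2 (Nat.mod_lt _ hN.bot_lt))

variable {N : ℕ} [NeZero N] (χ : DirichletCharacter ℂ N) {s : ℂ} {ε : ℝ}

lemma exists_norm_sum_dirichletCharacter_sub_le :
    ∃ (c : ℂ) (K : ℝ), ∀ M : ℕ, ‖∑ k ∈ Finset.Ioc 0 M, χ k - c * M‖ ≤ K :=
  exists_norm_sum_sub_le_of_periodic (f := fun k ↦ χ k) (N := N) (fun k ↦ by simp) (NeZero.ne N)

lemma LFunction_eq_continuedLSeries {c : ℂ} {K : ℝ} {X : ℕ}
    (hK : ∀ M : ℕ, ‖∑ k ∈ Finset.Ioc 0 M, χ k - c * M‖ ≤ K) (hX : 0 < X) (hs : 0 < s.re)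
    (him : s.im ≠ 0) : χ.LFunction s = continuedLSeries (fun n ↦ χ n) c X s := by
  set U : Set ℂ := {z | 0 < z.re} ∩ {z | 0 < s.im * z.im}
  have hUopen : IsOpen U := (isOpen_lt continuous_const continuous_re).inter
    (isOpen_lt continuous_const (continuous_const.mul continuous_im))
  have hUconvex : Convex ℝ U := (convex_halfSpace_re_gt 0).inter <|
    convex_halfSpace_gt ⟨fun z w ↦ by simp [mul_add], fun r z ↦ by simp [mul_left_comm]⟩ 0
  have hne (z : ℂ) (hz : z ∈ U) : z ≠ 1 := by
    rintro rfl
    simpa using hz.2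
  have hL : AnalyticOnNhd ℂ χ.LFunction U := DifferentiableOn.analyticOnNhd (fun z hz ↦
    (χ.differentiableAt_LFunction z (.inl (hne z hz))).differentiableWithinAt) hUopen
  have hcont : AnalyticOnNhd ℂ (continuedLSeries (fun n ↦ χ n) c X) U :=
    DifferentiableOn.analyticOnNhd (fun z hz ↦
      (differentiableAt_continuedLSeries hK hX hz.1 (hne z hz)).differentiableWithinAt) hUopen
  refine hL.eqOn_of_preconnected_of_eventuallyEq hcont hUconvex.isPreconnected
    (z₀ := ⟨2, s.im⟩) ⟨zero_lt_two' ℝ, mul_self_pos.2 him⟩ ?_ ⟨hs, mul_self_pos.2 him⟩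
  filter_upwards [(isOpen_lt continuous_const continuous_re).mem_nhds
    (show (1 : ℝ) < (⟨2, s.im⟩ : ℂ).re from one_lt_two)] with z hz
  rw [χ.LFunction_eq_LSeries hz, LSeries_eq_continuedLSeries hK hX hz]

lemma rpow_le_two_mul_rpow {y z : ℝ} (hε : 0 ≤ ε) (hε1 : ε ≤ 1) (hy : 0 ≤ y) (hz : 0 ≤ z)
    (hzy : z ≤ 2 * y) : z ^ ε ≤ 2 * y ^ ε :=
  calc z ^ ε ≤ (2 * y) ^ ε := Real.rpow_le_rpow hz hzy hε
    _ = 2 ^ ε * y ^ ε := Real.mul_rpow zero_le_two hy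
    _ ≤ 2 ^ (1 : ℝ) * y ^ ε := by
        gcongr
        exact one_le_two
    _ = 2 * y ^ ε := by rw [Real.rpow_one]

lemma exists_norm_LFunction_le (hε : 0 < ε) (hε1 : ε ≤ 1) :
    ∃ C : ℝ, 0 < C ∧ ∀ s : ℂ, 1 - ε / 2 ≤ s.re → s.re ≤ 3 → 1 ≤ |s.im| →
      ‖χ.LFunction s‖ ≤ C * |s.im| ^ ε := by
  obtain ⟨c, K, hK⟩ := exists_norm_sum_dirichletCharacter_sub_le χ
  have hK0 : 0 ≤ K := (norm_nonneg _).trans (hK 0)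
  set C := (2 * K + ‖c‖) * (9 + 1 / (ε / 2)) + ‖c‖
  have : 0 ≤ C := by positivity
  refine ⟨2 * C + 1, by positivity, fun s hs hs3 ht ↦ ?_⟩
  have hle_ceil : |s.im| ≤ ⌈|s.im|⌉₊ := Nat.le_ceil _
  have hceil : (⌈|s.im|⌉₊ : ℝ) ≤ 2 * |s.im| := by
    linarith [Nat.ceil_lt_add_one (abs_nonneg s.im)]
  have hX : 0 < ⌈|s.im|⌉₊ := Nat.ceil_pos.2 (by linarith)
  have hnorm : ‖s‖ ≤ 4 * ⌈|s.im|⌉₊ := by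
    have h := norm_le_abs_re_add_abs_im s
    rw [abs_of_pos (by linarith : 0 < s.re)] at h
    linarith
  calc ‖χ.LFunction s‖ ≤ C * (⌈|s.im|⌉₊ : ℝ) ^ (2 * (ε / 2)) := by
        rw [LFunction_eq_continuedLSeries χ hK hX (by linarith) (abs_pos.1 (by linarith))]
        exact norm_continuedLSeries_le hK hX (half_pos hε) hs (by linarith)
          (ht.trans (by simpa using abs_im_le_norm (s - 1))) hnorm
    _ = C * (⌈|s.im|⌉₊ : ℝ) ^ ε := by rw [mul_div_cancel₀ ε two_ne_zero]
    _ ≤ C * (2 * |s.im| ^ ε) := by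
        gcongr
        exact rpow_le_two_mul_rpow hε.le hε1 (abs_nonneg _) (Nat.cast_nonneg _) hceil
    _ ≤ (2 * C + 1) * |s.im| ^ ε := by
        linarith [Real.rpow_nonneg (abs_nonneg s.im) ε]

lemma ne_one_of_abs_im_pos (hs : 0 < |s.im|) : s ≠ 1 := by
  rintro rfl
  simp at hs

lemma exists_norm_deriv_LFunction_le (hε : 0 < ε) (hε1 : ε ≤ 1) :
    ∃ C : ℝ, 0 < C ∧ ∀ s : ℂ, 1 - ε / 4 ≤ s.re → s.re ≤ 2 → 2 ≤ |s.im| →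
      ‖deriv χ.LFunction s‖ ≤ C * |s.im| ^ ε := by
  obtain ⟨C, hC, hL⟩ := exists_norm_LFunction_le χ hε hε1
  refine ⟨C * 2 / (ε / 4), by positivity, fun s hs hs2 ht ↦ ?_⟩
  have hball (z : ℂ) (hz : z ∈ Metric.closedBall s (ε / 4)) :
      1 - ε / 2 ≤ z.re ∧ z.re ≤ 3 ∧ 1 ≤ |z.im| ∧ |z.im| ≤ 2 * |s.im| := by
    rw [mem_closedBall_iff_norm] at hz
    have hre := abs_le.1 ((abs_re_le_norm (z - s)).trans hz)
    have him := abs_le.1 ((abs_abs_sub_abs_le _ _).trans ((abs_im_le_norm (z - s)).trans hz))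
    rw [sub_re] at hre
    exact ⟨by linarith, by linarith, by linarith, by linarith⟩
  have hdiff : DiffContOnCl ℂ χ.LFunction (Metric.ball s (ε / 4)) :=
    DifferentiableOn.diffContOnCl_ball (fun z hz ↦ (χ.differentiableAt_LFunction z
      (.inl (ne_one_of_abs_im_pos (by linarith [hball z hz])))).differentiableWithinAt) subset_rfl
  have hsphere (z : ℂ) (hz : z ∈ Metric.sphere s (ε / 4)) :
      ‖χ.LFunction z‖ ≤ C * (2 * |s.im| ^ ε) := by
    obtain ⟨hre, hre', him, him'⟩ := hball z (Metric.sphere_subset_closedBall hz)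
    refine (hL z hre hre' him).trans ?_
    gcongr
    exact rpow_le_two_mul_rpow hε.le hε1 (abs_nonneg _) (abs_nonneg _) him'
  calc ‖deriv χ.LFunction s‖ ≤ C * (2 * |s.im| ^ ε) / (ε / 4) :=
        norm_deriv_le_of_forall_mem_sphere_norm_le (by positivity) hdiff hsphere
    _ = C * 2 / (ε / 4) * |s.im| ^ ε := by ring

variable (N) in
lemma exists_norm_LFunctionTrivChar_le : ∃ C : ℝ, 0 < C ∧ ∀ x : ℝ, 0 < x → x ≤ 1 →
    ‖DirichletCharacter.LFunctionTrivChar N (1 + x)‖ ≤ C / x := by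
  obtain ⟨C, hC⟩ := (isCompact_Icc (a := (0 : ℝ)) (b := 1)).exists_bound_of_continuousOn
    (f := fun x : ℝ ↦ DirichletCharacter.LFunctionTrivChar₁ N (1 + x))
    ((DirichletCharacter.differentiable_LFunctionTrivChar₁ N).continuous.comp
      (by fun_prop)).continuousOn
  refine ⟨max C 1, by positivity, fun x hx hx1 ↦ (le_div_iff₀' hx).2 ?_⟩
  have hne : (1 : ℂ) + x ≠ 1 := by simpa using hx.ne'
  have hbound := hC x ⟨hx.le, hx1⟩
  rw [DirichletCharacter.LFunctionTrivChar₁, Function.update_of_ne hne, add_sub_cancel_left,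
    norm_mul, norm_real, Real.norm_of_nonneg hx.le] at hbound
  exact hbound.trans (le_max_left _ _)

lemma exists_le_norm_LFunction_pow_four (hε : 0 < ε) (hε1 : ε ≤ 1) :
    ∃ m : ℝ, 0 < m ∧ ∀ s : ℂ, 1 < s.re → s.re ≤ 2 → 1 ≤ |s.im| →
      m * (s.re - 1) ^ 3 / |s.im| ^ ε ≤ ‖χ.LFunction s‖ ^ 4 := by
  obtain ⟨C₀, hC₀, htriv⟩ := exists_norm_LFunctionTrivChar_le N
  obtain ⟨C₂, hC₂, hsq⟩ := exists_norm_LFunction_le (χ ^ 2) hε hε1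
  refine ⟨(C₀ ^ 3 * (C₂ * 2))⁻¹, by positivity, fun s hs hs2 ht ↦ ?_⟩
  have hx : 0 < s.re - 1 := sub_pos.2 hs
  have ht0 : 0 < |s.im| := by linarith
  have hs_eq : 1 + ((s.re - 1 : ℝ) : ℂ) + I * s.im = s := by apply Complex.ext <;> simp
  have hsq_le :
      ‖(χ ^ 2).LFunction (1 + ((s.re - 1 : ℝ) : ℂ) + 2 * I * s.im)‖ ≤ C₂ * (2 * |s.im| ^ ε) := by
    have him : (1 + ((s.re - 1 : ℝ) : ℂ) + 2 * I * s.im).im = 2 * s.im := by simp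
    have habs : |2 * s.im| = 2 * |s.im| := by rw [abs_mul, abs_two]
    refine (hsq _ (by simp; linarith) (by simp; linarith) (by rw [him]; linarith)).trans ?_
    gcongr
    rw [him]
    exact rpow_le_two_mul_rpow hε.le hε1 ht0.le (abs_nonneg _) habs.le
  have hproduct : 1 ≤ (C₀ / (s.re - 1)) ^ 3 * ‖χ.LFunction s‖ ^ 4 * (C₂ * (2 * |s.im| ^ ε)) := by
    refine (χ.norm_LFunction_product_ge_one hx s.im).trans ?_
    rw [norm_mul, norm_mul, norm_pow, norm_pow, hs_eq]
    gcongr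
    exact htriv _ hx (by linarith)
  calc (C₀ ^ 3 * (C₂ * 2))⁻¹ * (s.re - 1) ^ 3 / |s.im| ^ ε
      ≤ (C₀ ^ 3 * (C₂ * 2))⁻¹ * (s.re - 1) ^ 3 / |s.im| ^ ε *
          ((C₀ / (s.re - 1)) ^ 3 * ‖χ.LFunction s‖ ^ 4 * (C₂ * (2 * |s.im| ^ ε))) :=
        le_mul_of_one_le_right (by positivity) hproduct
    _ = ‖χ.LFunction s‖ ^ 4 := by field_simp

lemma norm_image_sub_le_of_norm_deriv_le_horizontal {f : ℂ → ℂ} {z w : ℂ} {a b C : ℝ}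
    (hf : ∀ u : ℂ, u.re ∈ Icc a b → u.im = z.im → DifferentiableAt ℂ f u)
    (hC : ∀ u : ℂ, u.re ∈ Icc a b → u.im = z.im → ‖deriv f u‖ ≤ C) (hz : z.re ∈ Icc a b)
    (hw : w.re ∈ Icc a b) (him : w.im = z.im) : ‖f w - f z‖ ≤ C * |w.re - z.re| := by
  have hconvex : Convex ℝ (Icc a b ×ℂ {z.im}) :=
    ((convex_Icc a b).linear_preimage reLm).inter ((convex_singleton z.im).linear_preimage imLm)
  have hsub : w - z = ((w.re - z.re : ℝ) : ℂ) := by apply Complex.ext <;> simp [him]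
  simpa only [hsub, norm_real, Real.norm_eq_abs] using
    hconvex.norm_image_sub_le_of_norm_deriv_le (fun u hu ↦ hf u hu.1 hu.2)
      (fun u hu ↦ hC u hu.1 hu.2) ⟨hz, rfl⟩ ⟨hw, him⟩

lemma exists_mul_le_norm_LFunction_of_one_lt_re (hε : 0 < ε) (hε1 : ε ≤ 1) {C : ℝ} (hC : 0 < C) :
    ∃ δ : ℝ, 0 < δ ∧ δ ≤ 1 ∧ ∀ s : ℂ, 1 + δ / (|s.im| ^ ε) ^ 5 ≤ s.re → s.re ≤ 2 → 1 ≤ |s.im| →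
      C * δ / (|s.im| ^ ε) ^ 4 ≤ ‖χ.LFunction s‖ := by
  obtain ⟨m, hm, hpow_four⟩ := exists_le_norm_LFunction_pow_four χ hε hε1
  set δ := min 1 (m / C ^ 4)
  have hδ : 0 < δ := by positivity
  have hδm : C ^ 4 * δ ≤ m := (le_div_iff₀' (by positivity)).1 (min_le_right _ _)
  refine ⟨δ, hδ, min_le_left _ _, fun s hs hs2 ht ↦ ?_⟩
  have hs1 : δ / (|s.im| ^ ε) ^ 5 ≤ s.re - 1 := by linarith
  have hx : 0 < δ / (|s.im| ^ ε) ^ 5 := by positivity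
  refine le_of_pow_le_pow_left₀ four_ne_zero (norm_nonneg _) ?_
  calc (C * δ / (|s.im| ^ ε) ^ 4) ^ 4
      = C ^ 4 * δ * (δ / (|s.im| ^ ε) ^ 5) ^ 3 / |s.im| ^ ε := by field_simp
    _ ≤ m * (s.re - 1) ^ 3 / |s.im| ^ ε := by gcongr
    _ ≤ ‖χ.LFunction s‖ ^ 4 := hpow_four s (by linarith) hs2 ht

lemma exists_le_norm_LFunction (hε : 0 < ε) (hε1 : ε ≤ 1) :
    ∃ δ c : ℝ, 0 < δ ∧ 0 < c ∧ ∀ s : ℂ, 1 - δ / (|s.im| ^ ε) ^ 5 ≤ s.re → s.re ≤ 2 →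
      2 ≤ |s.im| → c / (|s.im| ^ ε) ^ 4 ≤ ‖χ.LFunction s‖ := by
  obtain ⟨C, hC, hderiv⟩ := exists_norm_deriv_LFunction_le χ hε hε1
  obtain ⟨δ, hδ, hδ1, hright⟩ :=
    exists_mul_le_norm_LFunction_of_one_lt_re χ hε hε1 (C := 2 * C) (by positivity)
  refine ⟨min (δ / 2) (ε / 4), C * δ / 2, by positivity, by positivity, fun s hs hs2 ht ↦ ?_⟩
  have hT : 1 ≤ |s.im| ^ ε := Real.one_le_rpow (by linarith) hε.le
  set T := |s.im| ^ ε with hT_def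
  have hxT : δ / T ^ 5 ≤ 1 := div_le_one_of_le₀ (hδ1.trans (one_le_pow₀ hT)) (by positivity)
  have hx0 : 0 < δ / T ^ 5 := by positivity
  have hre : 1 - δ / 2 / T ^ 5 ≤ s.re ∧ 1 - ε / 4 ≤ s.re := by
    refine ⟨le_trans (by gcongr; exact min_le_left _ _) hs, le_trans (sub_le_sub_left ?_ 1) hs⟩
    exact (div_le_self (by positivity) (one_le_pow₀ hT)).trans (min_le_right _ _)
  -- Move right to a point `w` where the lower bound exceeds what the derivative bound loses.
  set w : ℂ := ⟨max s.re (1 + δ / T ^ 5), s.im⟩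
  have hw : 1 + δ / T ^ 5 ≤ w.re := le_max_right _ _
  have hw2 : w.re ≤ 2 := max_le hs2 (by linarith)
  have hlower : 2 * C * δ / T ^ 4 ≤ ‖χ.LFunction w‖ :=
    hright w hw hw2 (show 1 ≤ |s.im| by linarith)
  have hloss : ‖χ.LFunction w - χ.LFunction s‖ ≤ 3 / 2 * C * δ / T ^ 4 :=
    calc ‖χ.LFunction w - χ.LFunction s‖ ≤ C * T * |w.re - s.re| := by
          refine norm_image_sub_le_of_norm_deriv_le_horizontal (a := 1 - ε / 4) (b := 2)
            (fun u _ hu ↦ χ.differentiableAt_LFunction u (.inl (ne_one_of_abs_im_pos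
              (by rw [hu]; linarith)))) (fun u hu hu' ↦ ?_) ⟨hre.2, hs2⟩ ⟨by linarith, hw2⟩ rfl
          rw [hT_def, ← hu']
          exact hderiv u hu.1 hu.2 (by rwa [hu'])
      _ ≤ C * T * (3 / 2 * (δ / T ^ 5)) := by
          gcongr
          have hshift : w.re ≤ s.re + 3 / 2 * (δ / T ^ 5) :=
            max_le (by linarith) (by linarith [hre.1, div_right_comm δ 2 (T ^ 5)])
          rw [abs_of_nonneg (sub_nonneg.2 (le_max_left _ _))]
          linarith
      _ = 3 / 2 * C * δ / T ^ 4 := by field_simp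
  have htriangle := norm_sub_norm_le (χ.LFunction w) (χ.LFunction s)
  have hsplit : 2 * C * δ / T ^ 4 - 3 / 2 * C * δ / T ^ 4 = C * δ / 2 / T ^ 4 := by ring
  linarith

theorem exists_norm_logDeriv_LFunction_le (hε : 0 < ε) (hε1 : ε ≤ 1) :
    ∃ δ C : ℝ, 0 < δ ∧ 0 < C ∧ ∀ s : ℂ, 1 - δ / (|s.im| ^ ε) ^ 5 ≤ s.re → s.re ≤ 2 →
      2 ≤ |s.im| → χ.LFunction s ≠ 0 ∧ ‖logDeriv χ.LFunction s‖ ≤ C * (|s.im| ^ ε) ^ 5 := by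
  obtain ⟨C, hC, hderiv⟩ := exists_norm_deriv_LFunction_le χ hε hε1
  obtain ⟨δ, c, hδ, hc, hlower⟩ := exists_le_norm_LFunction χ hε hε1
  refine ⟨min δ (ε / 4), C / c, by positivity, by positivity, fun s hs hs2 ht ↦ ?_⟩
  have hT : 1 ≤ |s.im| ^ ε := Real.one_le_rpow (by linarith) hε.le
  have hL : c / (|s.im| ^ ε) ^ 4 ≤ ‖χ.LFunction s‖ :=
    hlower s (le_trans (by gcongr; exact min_le_left _ _) hs) hs2 ht
  have hL' : ‖deriv χ.LFunction s‖ ≤ C * |s.im| ^ ε := by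
    refine hderiv s (le_trans (sub_le_sub_left ?_ 1) hs) hs2 ht
    exact (div_le_self (by positivity) (one_le_pow₀ hT)).trans (min_le_right _ _)
  refine ⟨norm_pos_iff.1 (lt_of_lt_of_le (by positivity) hL), ?_⟩
  calc ‖logDeriv χ.LFunction s‖ = ‖deriv χ.LFunction s‖ / ‖χ.LFunction s‖ := by
        rw [logDeriv_apply, norm_div]
    _ ≤ C * |s.im| ^ ε / (c / (|s.im| ^ ε) ^ 4) := by gcongr
    _ = C / c * (|s.im| ^ ε) ^ 5 := by field_simp

end DirichletLFunction

section ResidueClass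

variable {q : ℕ} [NeZero q] {s : ℂ}

lemma LFunctionTrivChar₁_ne_zero (hs : s = 1 ∨ DirichletCharacter.LFunctionTrivChar q s ≠ 0) :
    DirichletCharacter.LFunctionTrivChar₁ q s ≠ 0 := by
  rcases eq_or_ne s 1 with rfl | hs1
  · exact DirichletCharacter.LFunctionTrivChar₁_apply_one_ne_zero _
  · rw [DirichletCharacter.LFunctionTrivChar₁, Function.update_of_ne hs1]
    exact mul_ne_zero (sub_ne_zero.2 hs1) (hs.resolve_left hs1)

lemma logDeriv_LFunctionTrivChar₁ (hs1 : s ≠ 1)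
    (hs : DirichletCharacter.LFunctionTrivChar q s ≠ 0) :
    logDeriv (DirichletCharacter.LFunctionTrivChar₁ q) s =
      (s - 1)⁻¹ + logDeriv (DirichletCharacter.LFunctionTrivChar q) s := by
  have hs1' : s - 1 ≠ 0 := sub_ne_zero.2 hs1
  rw [logDeriv_apply, DirichletCharacter.deriv_LFunctionTrivChar₁_apply_of_ne_one _ hs1,
    DirichletCharacter.LFunctionTrivChar₁, Function.update_of_ne hs1, logDeriv_apply]
  field_simp
  ring

lemma analyticAt_LFunctionResidueClassAux (a : ZMod q)
    (hs : s = 1 ∨ ∀ χ : DirichletCharacter ℂ q, χ.LFunction s ≠ 0) :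
    AnalyticAt ℂ (LFunctionResidueClassAux a) s := by
  classical
  have htriv : AnalyticAt ℂ (DirichletCharacter.LFunctionTrivChar₁ q) s :=
    (DirichletCharacter.differentiable_LFunctionTrivChar₁ q).analyticAt s
  refine analyticAt_const.mul ((htriv.deriv.neg.div htriv
    (LFunctionTrivChar₁_ne_zero (hs.imp_right fun h ↦ h 1))).sub ?_)
  refine Finset.analyticAt_fun_sum _ fun χ hχ ↦ ?_
  have hχ1 : χ ≠ 1 := by simpa only [Finset.mem_compl, Finset.mem_singleton] using hχ
  have hχL : AnalyticAt ℂ χ.LFunction s :=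
    (DirichletCharacter.differentiable_LFunction hχ1).analyticAt s
  refine (analyticAt_const.mul hχL.deriv).div hχL ?_
  rcases hs with rfl | hs
  · exact χ.LFunction_ne_zero_of_one_le_re (.inl hχ1) le_rfl
  · exact hs χ

lemma norm_LFunctionResidueClassAux_le (a : ZMod q) (hs1 : s ≠ 1)
    (hs : ∀ χ : DirichletCharacter ℂ q, χ.LFunction s ≠ 0) :
    ‖LFunctionResidueClassAux a s‖ ≤ (q.totient : ℝ)⁻¹ *
      (‖s - 1‖⁻¹ + ∑ χ : DirichletCharacter ℂ q, ‖logDeriv χ.LFunction s‖) := by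
  classical
  have hAux : LFunctionResidueClassAux a s = (q.totient : ℂ)⁻¹ *
      (-logDeriv (DirichletCharacter.LFunctionTrivChar₁ q) s -
        ∑ χ ∈ {1}ᶜ, χ a⁻¹ * logDeriv (DirichletCharacter.LFunction χ) s) := by
    simp only [LFunctionResidueClassAux, logDeriv_apply, mul_div_assoc, neg_div]
    congr!
  rw [hAux, norm_mul, norm_inv, norm_natCast, logDeriv_LFunctionTrivChar₁ hs1 (hs 1),
    Fintype.sum_eq_add_sum_compl (1 : DirichletCharacter ℂ q), ← add_assoc]
  gcongr
  refine norm_sub_le_of_le ?_ (norm_sum_le_of_le _ fun χ _ ↦ ?_)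
  · rw [norm_neg, ← norm_inv]
    exact norm_add_le _ _
  · rw [norm_mul]
    exact mul_le_of_le_one_left (norm_nonneg _) (χ.norm_le_one _)

theorem exists_norm_LFunctionResidueClassAux_le (a : ZMod q) {η : ℝ} (hη : 0 < η) (hη1 : η ≤ 1) :
    ∃ δ C : ℝ, 0 < δ ∧ 0 < C ∧ ∀ s : ℂ, 1 - δ / |s.im| ^ η ≤ s.re → s.re ≤ 2 → 2 ≤ |s.im| →
      AnalyticAt ℂ (LFunctionResidueClassAux a) s ∧
      ‖LFunctionResidueClassAux a s‖ ≤ C * |s.im| ^ η := by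
  choose δ C hδ hC hbound using fun χ : DirichletCharacter ℂ q ↦
    exists_norm_logDeriv_LFunction_le χ (ε := η / 5) (by positivity) (by linarith)
  obtain ⟨χ₀, hδ_min⟩ := Finite.exists_min δ
  have hφ : 0 < (q.totient : ℝ) := Nat.cast_pos.2 (Nat.totient_pos.2 (NeZero.pos q))
  have hCsum : 0 ≤ ∑ χ, C χ := Finset.sum_nonneg fun χ _ ↦ (hC χ).le
  refine ⟨δ χ₀, (q.totient : ℝ)⁻¹ * (1 + ∑ χ, C χ), hδ χ₀, by positivity, fun s hs hs2 ht ↦ ?_⟩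
  have hT : 1 ≤ |s.im| ^ η := Real.one_le_rpow (by linarith) hη.le
  have hpow : (|s.im| ^ (η / 5)) ^ 5 = |s.im| ^ η := by
    rw [← Real.rpow_mul_natCast (abs_nonneg _), Nat.cast_ofNat, div_mul_cancel₀ η (by norm_num)]
  have hχ (χ : DirichletCharacter ℂ q) :
      χ.LFunction s ≠ 0 ∧ ‖logDeriv χ.LFunction s‖ ≤ C χ * |s.im| ^ η := by
    refine hpow ▸ hbound χ s (le_trans ?_ hs) hs2 ht
    rw [hpow]
    gcongr
    exact hδ_min χ
  have hdist : 1 ≤ ‖s - 1‖ :=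
    (by simpa using abs_im_le_norm (s - 1) : |s.im| ≤ ‖s - 1‖).trans' (by linarith)
  refine ⟨analyticAt_LFunctionResidueClassAux a (.inr fun χ ↦ (hχ χ).1), ?_⟩
  calc ‖LFunctionResidueClassAux a s‖
      ≤ (q.totient : ℝ)⁻¹ * (‖s - 1‖⁻¹ + ∑ χ : DirichletCharacter ℂ q, ‖logDeriv χ.LFunction s‖) :=
        norm_LFunctionResidueClassAux_le a (ne_one_of_abs_im_pos (by linarith)) fun χ ↦ (hχ χ).1
    _ ≤ (q.totient : ℝ)⁻¹ * (|s.im| ^ η + ∑ χ, C χ * |s.im| ^ η) := by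
        gcongr with χ
        · exact (inv_le_one_of_one_le₀ hdist).trans hT
        · exact (hχ χ).2
    _ = (q.totient : ℝ)⁻¹ * (1 + ∑ χ, C χ) * |s.im| ^ η := by rw [← Finset.sum_mul]; ring

end ResidueClass

open scoped FourierTransform

section Laplace

/-- The two-sided Laplace transform `∫ f(u) e^{-su} du` converges absolutely at `s`, with value
`w`. -/
structure HasLaplaceAt (f : ℝ → ℂ) (s w : ℂ) : Prop where
  integrable : Integrable fun u : ℝ ↦ f u * cexp (-(s * u))
  integral_eq : ∫ u : ℝ, f u * cexp (-(s * u)) = w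

/-- The point `σ + 2πiξ`: the Laplace transform of `f` there is the Fourier transform of
`u ↦ f(u) e^{-σu}` at `ξ`. -/
noncomputable def linePoint (σ ξ : ℝ) : ℂ := σ + 2 * Real.pi * I * ξ

@[simp]
lemma linePoint_re (σ ξ : ℝ) : (linePoint σ ξ).re = σ := by simp [linePoint]

@[simp]
lemma linePoint_im (σ ξ : ℝ) : (linePoint σ ξ).im = 2 * Real.pi * ξ := by simp [linePoint]

lemma hasDerivAt_linePoint (σ ξ : ℝ) : HasDerivAt (linePoint σ) (2 * Real.pi * I) ξ := by
  have hξ : HasDerivAt (fun ξ : ℝ ↦ (ξ : ℂ)) 1 ξ := ofRealCLM.hasDerivAt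
  have h := (hξ.const_mul (2 * Real.pi * I)).const_add (σ : ℂ)
  rwa [mul_one] at h

variable {f : ℝ → ℂ} {G : ℂ → ℂ} {M : ℝ → ℝ} {a b σ : ℝ}

lemma fourier_mul_exp_neg_mul (f : ℝ → ℂ) (σ ξ : ℝ) :
    𝓕 (fun u : ℝ ↦ f u * cexp (-(σ * u))) ξ = ∫ u : ℝ, f u * cexp (-(linePoint σ ξ * u)) := by
  rw [Real.fourier_real_eq_integral_exp_smul]
  congr 1
  ext u
  rw [smul_eq_mul, mul_left_comm, ← Complex.exp_add, linePoint]
  congr 2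
  push_cast
  ring

lemma iteratedDeriv_comp_linePoint {n : ℕ} (hG : ∀ ξ, AnalyticAt ℂ G (linePoint σ ξ)) :
    iteratedDeriv n (fun ξ ↦ G (linePoint σ ξ)) =
      fun ξ ↦ (2 * Real.pi * I) ^ n * iteratedDeriv n G (linePoint σ ξ) := by
  induction n with
  | zero => simp
  | succ n ih =>
    ext ξ
    have han : AnalyticAt ℂ (iteratedDeriv n G) (linePoint σ ξ) := by
      simpa only [iteratedDeriv_eq_iterate] using (hG ξ).iterated_deriv n
    have hd : HasDerivAt (iteratedDeriv n G) (iteratedDeriv (n + 1) G (linePoint σ ξ))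
        (linePoint σ ξ) := by
      rw [iteratedDeriv_succ]
      exact han.differentiableAt.hasDerivAt
    have hd' := HasDerivAt.scomp ξ hd (hasDerivAt_linePoint σ ξ)
    simp only [smul_eq_mul] at hd'
    rw [iteratedDeriv_succ, ih]
    refine (hd'.const_mul _).deriv.trans ?_
    ring

lemma fourierInv_comp_linePoint (hf : Continuous f)
    (hL : ∀ ξ, HasLaplaceAt f (linePoint σ ξ) (G (linePoint σ ξ)))
    (hG : Integrable fun ξ ↦ G (linePoint σ ξ)) (u : ℝ) :
    𝓕⁻ (fun ξ ↦ G (linePoint σ ξ)) u = f u * cexp (-(σ * u)) := by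
  have hfourier : 𝓕 (fun u : ℝ ↦ f u * cexp (-(σ * u))) = fun ξ ↦ G (linePoint σ ξ) := by
    ext ξ
    rw [fourier_mul_exp_neg_mul, (hL ξ).integral_eq]
  have hint : Integrable fun u : ℝ ↦ f u * cexp (-(σ * u)) := by
    simpa [linePoint] using (hL 0).integrable
  rw [← hfourier]
  exact congrFun (Continuous.fourierInv_fourier_eq (by fun_prop) hint (hfourier ▸ hG)) u

lemma continuous_comp_linePoint (hG : ∀ s, a ≤ s.re → s.re ≤ b → ContinuousAt G s)
    (hσ : σ ∈ Icc a b) : Continuous fun ξ ↦ G (linePoint σ ξ) :=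
  continuous_iff_continuousAt.2 fun ξ ↦
    (hG _ (by simpa using hσ.1) (by simpa using hσ.2)).comp
      (hasDerivAt_linePoint σ ξ).continuousAt

/-- The inversion formula persists on the boundary line of the half-plane of convergence. -/
lemma fourierInv_comp_linePoint_left (hab : a < b) (hf : Continuous f)
    (hL : ∀ s : ℂ, a < s.re → s.re ≤ b → HasLaplaceAt f s (G s))
    (hG : ∀ s, a ≤ s.re → s.re ≤ b → ContinuousAt G s)
    (hM : Integrable M) (hGM : ∀ s, a ≤ s.re → s.re ≤ b → ‖G s‖ ≤ M s.im) (u : ℝ) :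
    𝓕⁻ (fun ξ ↦ G (linePoint a ξ)) u = f u * cexp (-(a * u)) := by
  have hIoc : ∀ᶠ σ in 𝓝[>] a, σ ∈ Ioc a b := Ioc_mem_nhdsGT hab
  have hM' : Integrable fun ξ : ℝ ↦ M (2 * Real.pi * ξ) :=
    hM.comp_mul_left' (by positivity)
  have hbound : ∀ σ ∈ Icc a b, ∀ ξ, ‖G (linePoint σ ξ)‖ ≤ M (2 * Real.pi * ξ) := fun σ hσ ξ ↦ by
    simpa using hGM (linePoint σ ξ) (by simpa using hσ.1) (by simpa using hσ.2)
  have hinv : ∀ σ ∈ Ioc a b, 𝓕⁻ (fun ξ ↦ G (linePoint σ ξ)) u = f u * cexp (-(σ * u)) :=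
    fun σ hσ ↦ fourierInv_comp_linePoint hf
      (fun ξ ↦ hL _ (by simpa using hσ.1) (by simpa using hσ.2))
      (hM'.mono' (continuous_comp_linePoint hG (Ioc_subset_Icc_self hσ)).aestronglyMeasurable
        (ae_of_all _ (hbound σ (Ioc_subset_Icc_self hσ)))) u
  have hleft : Tendsto (fun σ ↦ 𝓕⁻ (fun ξ ↦ G (linePoint σ ξ)) u) (𝓝[>] a)
      (𝓝 (𝓕⁻ (fun ξ ↦ G (linePoint a ξ)) u)) := by
    simp only [Real.fourierInv_eq', smul_eq_mul]
    refine tendsto_integral_filter_of_dominated_convergence _ ?_ ?_ hM' (ae_of_all _ fun ξ ↦ ?_)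
    · filter_upwards [hIoc] with σ hσ
      exact (Continuous.mul (by fun_prop) (continuous_comp_linePoint hG
        (Ioc_subset_Icc_self hσ))).aestronglyMeasurable
    · filter_upwards [hIoc] with σ hσ
      refine ae_of_all _ fun ξ ↦ ?_
      rw [norm_mul, Complex.norm_exp_ofReal_mul_I, one_mul]
      exact hbound σ (Ioc_subset_Icc_self hσ) ξ
    · have hline : ContinuousAt (fun σ : ℝ ↦ linePoint σ ξ) a := by
        unfold linePoint
        fun_prop
      have hGline : ContinuousAt (fun σ : ℝ ↦ G (linePoint σ ξ)) a :=
        (hG _ (by simp) (by simpa using hab.le)).comp hline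
      exact (hGline.tendsto.mono_left nhdsWithin_le_nhds).const_mul _
  have hright : Tendsto (fun σ : ℝ ↦ f u * cexp (-(σ * u))) (𝓝[>] a)
      (𝓝 (f u * cexp (-(a * u)))) :=
    (Continuous.tendsto (by fun_prop) a).mono_left nhdsWithin_le_nhds
  exact tendsto_nhds_unique hleft (hright.congr' (hIoc.mono fun σ hσ ↦ (hinv σ hσ).symm))

/-- Each integrable derivative of the Laplace transform on the boundary line gains one power of
`u`, by Riemann–Lebesgue. -/
theorem tendsto_pow_mul_of_hasLaplaceAt {n : ℕ} (hab : a < b) (hf : Continuous f)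
    (hL : ∀ s : ℂ, a < s.re → s.re ≤ b → HasLaplaceAt f s (G s))
    (hG : ∀ s, a ≤ s.re → s.re ≤ b → AnalyticAt ℂ G s)
    (hM : Integrable M) (hGM : ∀ s, a ≤ s.re → s.re ≤ b → ‖G s‖ ≤ M s.im)
    (hG' : ∀ k ≤ n, Integrable fun ξ ↦ iteratedDeriv k G (linePoint a ξ)) :
    Tendsto (fun u : ℝ ↦ (u : ℂ) ^ n * (f u * cexp (-(a * u)))) atTop (𝓝 0) := by
  set g : ℝ → ℂ := fun ξ ↦ G (linePoint a ξ) with hg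
  have hGline : ∀ ξ, AnalyticAt ℂ G (linePoint a ξ) := fun ξ ↦
    hG _ (by simp) (by simpa using hab.le)
  have hcont : ContDiff ℝ n g := by
    refine contDiff_iff_contDiffAt.2 fun ξ ↦ ?_
    have hline : ContDiff ℝ n (linePoint a) :=
      contDiff_const.add (contDiff_const.mul ofRealCLM.contDiff)
    exact ((hGline ξ).contDiffAt.restrict_scalars ℝ).comp ξ hline.contDiffAt
  have hint : ∀ k : ℕ, (k : ℕ∞) ≤ n → Integrable (iteratedDeriv k g) := fun k hk ↦ by
    rw [hg, iteratedDeriv_comp_linePoint hGline]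
    exact (hG' k (by exact_mod_cast hk)).const_mul _
  have hinv : ∀ u : ℝ, 𝓕 g (-u) = f u * cexp (-(a * u)) := fun u ↦ by
    rw [← Real.fourierInv_eq_fourier_neg]
    exact fourierInv_comp_linePoint_left hab hf hL
      (fun s hs hs' ↦ (hG s hs hs').continuousAt) hM hGM u
  have hRL := (Real.zero_at_infty_fourier (iteratedDeriv n g)).comp
    (tendsto_neg_atTop_atBot.mono_right atBot_le_cocompact)
  rw [Real.fourier_iteratedDeriv hcont hint le_rfl] at hRL
  have hc : (-(2 * Real.pi * I)) ^ n ≠ 0 := pow_ne_zero _ (by simp [Real.pi_ne_zero])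
  have hdiv := hRL.const_mul ((-(2 * Real.pi * I)) ^ n)⁻¹
  rw [mul_zero] at hdiv
  refine hdiv.congr fun u ↦ ?_
  simp only [Function.comp_apply, hinv, smul_eq_mul]
  rw [inv_mul_eq_iff_eq_mul₀ hc, ofReal_neg, mul_neg, ← neg_mul, mul_pow, mul_assoc]

end Laplace

section RemainderTransform

lemma exists_norm_le_mul_one_add_abs_im_rpow {f : ℂ → ℂ} {a b C r T : ℝ} (hr : 0 ≤ r) (hC : 0 ≤ C)
    (hT : 1 ≤ T) (hf : ∀ s : ℂ, s.re ∈ Icc a b → ContinuousAt f s)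
    (hfT : ∀ s : ℂ, s.re ∈ Icc a b → T ≤ |s.im| → ‖f s‖ ≤ C * |s.im| ^ (-r)) :
    ∃ C', ∀ s : ℂ, s.re ∈ Icc a b → ‖f s‖ ≤ C' * (1 + |s.im|) ^ (-r) := by
  obtain ⟨M, hM⟩ := ((isCompact_Icc (a := a) (b := b)).reProdIm
    (isCompact_Icc (a := -T) (b := T))).exists_bound_of_continuousOn (f := f)
    fun s hs ↦ (hf s hs.1).continuousWithinAt
  refine ⟨C * 2 ^ r + |M| * (1 + T) ^ r, fun s hs ↦ ?_⟩
  rcases le_total T |s.im| with hsT | hsT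
  · have him : |s.im| ^ (-r) ≤ ((1 + |s.im|) / 2) ^ (-r) :=
      Real.rpow_le_rpow_of_nonpos (by positivity) (by linarith) (by linarith)
    calc ‖f s‖ ≤ C * |s.im| ^ (-r) := hfT s hs hsT
      _ ≤ C * ((1 + |s.im|) / 2) ^ (-r) := by gcongr
      _ = C * 2 ^ r * (1 + |s.im|) ^ (-r) := by
        rw [Real.div_rpow (by positivity) (by norm_num), Real.rpow_neg zero_le_two]
        field_simp
      _ ≤ _ := by
        gcongr
        exact le_add_of_nonneg_right (by positivity)
  · have him : (1 + T) ^ (-r) ≤ (1 + |s.im|) ^ (-r) :=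
      Real.rpow_le_rpow_of_nonpos (by positivity) (by linarith) (by linarith)
    calc ‖f s‖ ≤ |M| := (hM s ⟨hs, abs_le.1 hsT⟩).trans (le_abs_self M)
      _ = |M| * (1 + T) ^ r * (1 + T) ^ (-r) := by
        rw [mul_assoc, ← Real.rpow_add (by positivity), add_neg_cancel, Real.rpow_zero, mul_one]
      _ ≤ |M| * (1 + T) ^ r * (1 + |s.im|) ^ (-r) := by gcongr
      _ ≤ _ := by
        gcongr
        exact le_add_of_nonneg_left (by positivity)

variable {q : ℕ} [NeZero q] {s : ℂ} {η : ℝ}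

/-- The Laplace transform of the remainder term in the smoothed prime number theorem for the
residue class `a` (see `hasLaplaceAt_smoothedRemainder`), continued to the line `Re s = 1`. -/
noncomputable def remainderTransform (a : ZMod q) (s : ℂ) : ℂ :=
  LFunctionResidueClassAux a s / s ^ 2

lemma analyticAt_remainderTransform (a : ZMod q) (hs : 1 ≤ s.re) :
    AnalyticAt ℂ (remainderTransform a) s := by
  have hs0 : s ≠ 0 := ne_zero_of_re_pos (by linarith)
  refine (analyticAt_LFunctionResidueClassAux a ?_).div (analyticAt_id.pow 2) (pow_ne_zero 2 hs0)
  exact (eq_or_ne s 1).imp_right fun h χ ↦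
    DirichletCharacter.LFunction_ne_zero_of_one_le_re χ (.inr h) hs

lemma exists_norm_remainderTransform_le (a : ZMod q) (hη : 0 < η) (hη1 : η ≤ 1) :
    ∃ δ C : ℝ, 0 < δ ∧ 0 < C ∧ ∀ s : ℂ, 1 - δ / |s.im| ^ η ≤ s.re → s.re ≤ 2 → 2 ≤ |s.im| →
      AnalyticAt ℂ (remainderTransform a) s ∧
        ‖remainderTransform a s‖ ≤ C * |s.im| ^ (η - 2) := by
  obtain ⟨δ, C, hδ, hC, hF⟩ := exists_norm_LFunctionResidueClassAux_le a hη hη1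
  refine ⟨δ, C, hδ, hC, fun s h1 h2 him ↦ ?_⟩
  obtain ⟨hFan, hFle⟩ := hF s h1 h2 him
  have hpos : 0 < |s.im| := by linarith
  have hs0 : s ≠ 0 := by
    rintro rfl
    simp at hpos
  refine ⟨hFan.div (analyticAt_id.pow 2) (pow_ne_zero 2 hs0), ?_⟩
  rw [remainderTransform, norm_div, norm_pow, Real.rpow_sub hpos, Real.rpow_two, ← mul_div_assoc]
  gcongr
  exact abs_im_le_norm s

lemma exists_norm_remainderTransform_le_of_mem_closedBall (a : ZMod q) (hη : 0 < η)
    (hη1 : η ≤ 1) : ∃ ρ C : ℝ, 0 < ρ ∧ 0 < C ∧ ∀ s : ℂ, s.re = 1 → 3 ≤ |s.im| →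
      ∀ z ∈ Metric.closedBall s (ρ / |s.im| ^ η), AnalyticAt ℂ (remainderTransform a) z ∧
        ‖remainderTransform a z‖ ≤ C * |s.im| ^ (η - 2) := by
  obtain ⟨δ, C, hδ, hC, hG⟩ := exists_norm_remainderTransform_le a hη hη1
  refine ⟨min (δ / 2) 1, 2 ^ (2 - η) * C, by positivity, by positivity, fun s hre him z hz ↦ ?_⟩
  have hpos : 0 < |s.im| := by linarith
  have hone : 1 ≤ |s.im| ^ η := Real.one_le_rpow (by linarith) hη.le
  rw [Metric.mem_closedBall, dist_eq_norm] at hz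
  have hrad : min (δ / 2) 1 / |s.im| ^ η ≤ 1 :=
    div_le_one_of_le₀ ((min_le_right _ _).trans hone) (by positivity)
  have hzre : |z.re - 1| ≤ min (δ / 2) 1 / |s.im| ^ η := by
    simpa [hre] using (abs_re_le_norm (z - s)).trans hz
  have hzim : |z.im - s.im| ≤ 1 := by
    simpa using (abs_im_le_norm (z - s)).trans (hz.trans hrad)
  have hlow : |s.im| - 1 ≤ |z.im| := by
    linarith [abs_sub_abs_le_abs_sub s.im z.im, abs_sub_comm s.im z.im]
  have hupp : |z.im| ≤ 2 * |s.im| := by linarith [abs_sub_abs_le_abs_sub z.im s.im]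
  have hzpos : 0 < |z.im| := by linarith
  have hwidth : min (δ / 2) 1 / |s.im| ^ η ≤ δ / |z.im| ^ η := by
    have := rpow_le_two_mul_rpow hη.le hη1 hpos.le hzpos.le hupp
    calc min (δ / 2) 1 / |s.im| ^ η ≤ δ / 2 / |s.im| ^ η := by gcongr; exact min_le_left _ _
      _ = δ / (2 * |s.im| ^ η) := div_div _ _ _
      _ ≤ _ := by gcongr
  rw [abs_le] at hzre
  obtain ⟨hGan, hGle⟩ := hG z (by linarith) (by linarith) (by linarith)
  refine ⟨hGan, ?_⟩
  calc ‖remainderTransform a z‖ ≤ C * |z.im| ^ (η - 2) := hGle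
    _ ≤ C * (|s.im| / 2) ^ (η - 2) := by
      gcongr C * ?_
      exact Real.rpow_le_rpow_of_nonpos (by positivity) (by linarith) (by linarith)
    _ = _ := by
      rw [Real.div_rpow hpos.le zero_le_two, ← neg_sub (2 : ℝ) η, Real.rpow_neg zero_le_two]
      field_simp

lemma exists_norm_iteratedDeriv_remainderTransform_le (a : ZMod q) (n : ℕ) :
    ∃ C, ∀ s : ℂ, s.re = 1 →
      ‖iteratedDeriv n (remainderTransform a) s‖ ≤ C * (1 + |s.im|) ^ (-(3 / 2) : ℝ) := by
  -- `n` derivatives on discs of radius `ρ / |t| ^ η` cost a factor `|t| ^ (n η)`, and this choice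
  -- gives `η - 2 + n η = -3 / 2`.
  set η : ℝ := 1 / (2 * (n + 1)) with hη
  have hη1 : η ≤ 1 := div_le_one_of_le₀ (by linarith [(n.cast_nonneg : (0 : ℝ) ≤ n)])
    (by positivity)
  obtain ⟨ρ, C, hρ, hC, hG⟩ :=
    exists_norm_remainderTransform_le_of_mem_closedBall a (η := η) (by positivity) hη1
  have hlarge : ∀ s : ℂ, s.re = 1 → 3 ≤ |s.im| →
      ‖iteratedDeriv n (remainderTransform a) s‖ ≤
        (n.factorial * C / ρ ^ n) * |s.im| ^ (-(3 / 2) : ℝ) := fun s hre him ↦ by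
    have hpos : 0 < |s.im| := by linarith
    have hexp : -(3 / 2) = η - 2 + η * n := by
      rw [hη]
      field_simp
      ring
    refine (norm_iteratedDeriv_le_of_forall_mem_sphere_norm_le n (by positivity) ?_ fun z hz ↦
      (hG s hre him z (Metric.sphere_subset_closedBall hz)).2).trans_eq ?_
    · exact DifferentiableOn.diffContOnCl_ball (fun z hz ↦
        (hG s hre him z hz).1.differentiableAt.differentiableWithinAt) subset_rfl
    · rw [hexp, Real.rpow_add hpos, Real.rpow_mul_natCast hpos.le, div_pow]
      field_simp
  have hre (s : ℂ) (hs : s.re ∈ Icc (1 : ℝ) 1) : s.re = 1 := le_antisymm hs.2 hs.1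
  obtain ⟨C', hC'⟩ := exists_norm_le_mul_one_add_abs_im_rpow
    (f := iteratedDeriv n (remainderTransform a)) (a := 1) (b := 1) (by norm_num) (by positivity)
    (by norm_num) (fun s hs ↦ by
      simpa only [iteratedDeriv_eq_iterate] using
        ((analyticAt_remainderTransform a hs.1).iterated_deriv n).continuousAt)
    fun s hs ↦ hlarge s (hre s hs)
  exact ⟨C', fun s hs ↦ hC' s (by simp [hs])⟩

lemma exists_norm_remainderTransform_le_one_add_abs_im_rpow (a : ZMod q) :
    ∃ C, ∀ s : ℂ, 1 ≤ s.re → s.re ≤ 2 →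
      ‖remainderTransform a s‖ ≤ C * (1 + |s.im|) ^ (-(3 / 2) : ℝ) := by
  obtain ⟨δ, C, hδ, hC, hG⟩ := exists_norm_remainderTransform_le a (η := 1 / 2) (by norm_num)
    (by norm_num)
  obtain ⟨C', hC'⟩ := exists_norm_le_mul_one_add_abs_im_rpow (f := remainderTransform a) (a := 1)
    (b := 2) (r := 3 / 2) (T := 2) (by norm_num) hC.le one_le_two
    (fun s hs ↦ (analyticAt_remainderTransform a hs.1).continuousAt) fun s hs him ↦ by
      have : 0 ≤ δ / |s.im| ^ (1 / 2 : ℝ) := by positivity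
      convert! (hG s (by linarith [hs.1]) hs.2 him).2 using 3
      norm_num
  exact ⟨C', fun s h1 h2 ↦ hC' s ⟨h1, h2⟩⟩

end RemainderTransform

section LaplaceTransforms

variable {f g : ℝ → ℂ} {s w z : ℂ} {b : ℕ → ℝ}

lemma integrable_tsum_of_summable_integral_norm {α ι E : Type*} [Countable ι]
    [MeasurableSpace α] {μ : Measure α} [NormedAddCommGroup E] {F : ι → α → E}
    (hF : ∀ i, Integrable (F i) μ) (hsum : Summable fun i ↦ ∫ x, ‖F i x‖ ∂μ)
    (hm : AEStronglyMeasurable (fun x ↦ ∑' i, F i x) μ) :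
    Integrable (fun x ↦ ∑' i, F i x) μ := by
  refine ⟨hm, ?_⟩
  rw [hasFiniteIntegral_iff_enorm]
  calc ∫⁻ x, ‖∑' i, F i x‖ₑ ∂μ
      ≤ ∫⁻ x, ∑' i, ‖F i x‖ₑ ∂μ := lintegral_mono fun x ↦ enorm_tsum_le_tsum_enorm
    _ = ∑' i, ∫⁻ x, ‖F i x‖ₑ ∂μ := lintegral_tsum fun i ↦ (hF i).1.enorm
    _ = ∑' i, ENNReal.ofReal (∫ x, ‖F i x‖ ∂μ) :=
      tsum_congr fun i ↦ (ofReal_integral_norm_eq_lintegral_enorm (hF i)).symm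
    _ < ⊤ := lt_top_iff_ne_top.2 hsum.tsum_ofReal_ne_top

lemma HasLaplaceAt.sub (hf : HasLaplaceAt f s w) (hg : HasLaplaceAt g s z) :
    HasLaplaceAt (fun u ↦ f u - g u) s (w - z) where
  integrable := by
    simp only [sub_mul]
    exact hf.integrable.sub hg.integrable
  integral_eq := by
    simp only [sub_mul]
    rw [integral_sub hf.integrable hg.integrable, hf.integral_eq, hg.integral_eq]

lemma HasLaplaceAt.const_mul (hf : HasLaplaceAt f s w) (c : ℂ) :
    HasLaplaceAt (fun u ↦ c * f u) s (c * w) where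
  integrable := by simpa only [mul_assoc] using hf.integrable.const_mul c
  integral_eq := by
    simp only [mul_assoc]
    rw [integral_const_mul, hf.integral_eq]

lemma HasLaplaceAt.comp_sub_right (hf : HasLaplaceAt f s w) (c : ℝ) :
    HasLaplaceAt (fun u ↦ f (u - c)) s (cexp (-(s * c)) * w) := by
  have hshift : (fun u : ℝ ↦ f (u - c) * cexp (-(s * u))) = fun u : ℝ ↦
      cexp (-(s * c)) * (f (u - c) * cexp (-(s * (u - c : ℝ)))) := by
    ext u
    rw [mul_left_comm, ← Complex.exp_add]
    congr 2
    push_cast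
    ring
  constructor
  · rw [hshift]
    exact (hf.integrable.comp_sub_right c).const_mul _
  · rw [hshift, integral_const_mul,
      integral_sub_right_eq_self fun u : ℝ ↦ f u * cexp (-(s * u)), hf.integral_eq]

lemma HasLaplaceAt.exp_mul {c : ℂ} (hf : HasLaplaceAt f (s - c) w) :
    HasLaplaceAt (fun u : ℝ ↦ cexp (c * u) * f u) s w := by
  have hshift : (fun u : ℝ ↦ cexp (c * u) * f u * cexp (-(s * u))) =
      fun u : ℝ ↦ f u * cexp (-((s - c) * u)) := by
    ext u
    rw [mul_comm (cexp _), mul_assoc, ← Complex.exp_add]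
    congr 2
    ring
  exact ⟨hshift ▸ hf.integrable, hshift ▸ hf.integral_eq⟩

lemma norm_pow_mul_cexp_neg_mul (k : ℕ) {u : ℝ} (hu : 0 ≤ u) :
    ‖(u : ℂ) ^ k * cexp (-(s * u))‖ = u ^ (k : ℝ) * Real.exp (-s.re * u) := by
  rw [norm_mul, norm_pow, Complex.norm_of_nonneg hu, Complex.norm_exp, Real.rpow_natCast]
  simp

lemma integrableOn_pow_mul_cexp_neg_mul (k : ℕ) (hs : 0 < s.re) :
    IntegrableOn (fun u : ℝ ↦ (u : ℂ) ^ k * cexp (-(s * u))) (Ioi 0) := by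
  have hdom : IntegrableOn (fun u : ℝ ↦ u ^ (k : ℝ) * Real.exp (-s.re * u)) (Ioi 0) := by
    simpa only [Real.rpow_one] using integrableOn_rpow_mul_exp_neg_mul_rpow (p := 1) (s := k)
      (neg_one_lt_zero.trans_le k.cast_nonneg) one_pos hs
  refine hdom.mono' (Continuous.aestronglyMeasurable (by fun_prop)) ?_
  filter_upwards [ae_restrict_mem measurableSet_Ioi] with u hu
  exact (norm_pow_mul_cexp_neg_mul k (le_of_lt hu)).le

lemma integral_pow_mul_cexp_neg_mul (k : ℕ) (hs : 0 < s.re) :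
    ∫ u in Ioi (0 : ℝ), (u : ℂ) ^ k * cexp (-(s * u)) = k.factorial / s ^ (k + 1) := by
  have hs0 : s ≠ 0 := ne_zero_of_re_pos hs
  induction k with
  | zero =>
    have h := integral_exp_mul_complex_Ioi (a := -s) (by simpa using hs) 0
    simpa [neg_div] using h
  | succ k ih =>
    have hderiv (x : ℝ) : HasDerivAt (fun u : ℝ ↦ (u : ℂ) ^ (k + 1) * cexp (-(s * u)))
        ((k + 1) * (x ^ k * cexp (-(s * x))) - s * (x ^ (k + 1) * cexp (-(s * x)))) x := by
      have hid : HasDerivAt (fun u : ℝ ↦ (u : ℂ)) 1 x := Complex.ofRealCLM.hasDerivAt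
      convert! (hid.pow (k + 1)).mul (hid.const_mul s).neg.cexp using 1
      simp
      ring
    have hlim : Tendsto (fun u : ℝ ↦ (u : ℂ) ^ (k + 1) * cexp (-(s * u))) atTop (𝓝 0) := by
      rw [tendsto_zero_iff_norm_tendsto_zero]
      refine (tendsto_rpow_mul_exp_neg_mul_atTop_nhds_zero (k + 1 : ℕ) s.re hs).congr' ?_
      filter_upwards [eventually_ge_atTop 0] with u hu
      exact (norm_pow_mul_cexp_neg_mul (k + 1) hu).symm
    have hint := (integrableOn_pow_mul_cexp_neg_mul k hs).const_mul ((k : ℂ) + 1)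
    have hint' := (integrableOn_pow_mul_cexp_neg_mul (k + 1) hs).const_mul s
    have hparts := integral_Ioi_of_hasDerivAt_of_tendsto (hderiv 0).continuousAt.continuousWithinAt
      (fun x _ ↦ hderiv x) (hint.sub hint') hlim
    rw [integral_sub hint hint', integral_const_mul, integral_const_mul, ih] at hparts
    simp only [ofReal_zero, zero_pow k.succ_ne_zero, zero_mul, sub_zero] at hparts
    have hrec := sub_eq_zero.1 hparts
    rw [Nat.factorial_succ, ← mul_right_inj' hs0, ← hrec]
    push_cast
    field_simp
    ring

lemma hasLaplaceAt_indicator_pow (k : ℕ) (hs : 0 < s.re) :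
    HasLaplaceAt ((Ioi 0).indicator fun u : ℝ ↦ (u : ℂ) ^ k) s (k.factorial / s ^ (k + 1)) := by
  have hind : (fun u : ℝ ↦ (Ioi 0).indicator (fun u : ℝ ↦ (u : ℂ) ^ k) u * cexp (-(s * u))) =
      (Ioi 0).indicator fun u : ℝ ↦ (u : ℂ) ^ k * cexp (-(s * u)) := by
    ext u
    rw [indicator_mul_left]
  constructor
  · rw [hind, integrable_indicator_iff measurableSet_Ioi]
    exact integrableOn_pow_mul_cexp_neg_mul k hs
  · rw [hind, integral_indicator measurableSet_Ioi, integral_pow_mul_cexp_neg_mul k hs]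

lemma hasLaplaceAt_max_zero (hs : 0 < s.re) :
    HasLaplaceAt (fun u : ℝ ↦ ((max 0 u : ℝ) : ℂ)) s (1 / s ^ 2) := by
  convert! hasLaplaceAt_indicator_pow 1 hs using 1
  · ext u
    rcases le_or_gt u 0 with hu | hu
    · simp [hu]
    · simp [hu, hu.le]
  · simp

lemma hasLaplaceAt_exp_max_zero_sub (hs : 1 < s.re) :
    HasLaplaceAt (fun u : ℝ ↦ ((Real.exp (max 0 u) - 1 - max 0 u : ℝ) : ℂ)) s
      (1 / (s ^ 2 * (s - 1))) := by
  have hs0 : s ≠ 0 := ne_zero_of_re_pos (by linarith)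
  have hs1 : s - 1 ≠ 0 := ne_zero_of_re_pos (by simpa using hs)
  have hexp := (hasLaplaceAt_indicator_pow (s := s - 1) 0 (by simpa using hs)).exp_mul
  have hone := hasLaplaceAt_indicator_pow (s := s) 0 (by linarith)
  convert! (hexp.sub hone).sub (hasLaplaceAt_max_zero (s := s) (by linarith)) using 1
  · ext u
    rcases le_or_gt u 0 with hu | hu
    · simp [hu]
    · simp [hu, hu.le]
  · simp only [Nat.factorial_zero, Nat.cast_one, zero_add, pow_one]
    field_simp
    ring

lemma HasLaplaceAt.integral_norm_eq {f : ℝ → ℝ} (hf : ∀ u, 0 ≤ f u) {w : ℝ}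
    (h : HasLaplaceAt (fun u ↦ (f u : ℂ)) s.re w) :
    ∫ u : ℝ, ‖(f u : ℂ) * cexp (-(s * u))‖ = w := by
  have hnorm : ∀ u : ℝ, ((‖(f u : ℂ) * cexp (-(s * u))‖ : ℝ) : ℂ) = f u * cexp (-(s.re * u)) := by
    intro u
    rw [norm_mul, Complex.norm_exp, Complex.norm_of_nonneg (hf u)]
    simp
  rw [← Complex.ofReal_inj, ← integral_complex_ofReal, ← h.integral_eq]
  exact integral_congr_ae (ae_of_all _ hnorm)

/-- The smoothed summatory function `∑ b(n) (u - log n)₊`. It is an antiderivative of the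
summatory function of `b` at `e ^ u`, and its Laplace transform is `L(b, s) / s ^ 2`. -/
noncomputable def smoothedSum (b : ℕ → ℝ) (u : ℝ) : ℝ := ∑' n : ℕ, b n * max 0 (u - Real.log n)

lemma smoothedSum_eq_sum {u : ℝ} {N : ℕ} (hN : Real.exp u ≤ N) :
    smoothedSum b u = ∑ n ∈ Finset.Icc 0 N, b n * max 0 (u - Real.log n) := by
  refine tsum_eq_sum fun n hn ↦ ?_
  have hNn : (N : ℝ) ≤ n := by
    rw [Finset.mem_Icc] at hn
    exact_mod_cast (by omega : N ≤ n)
  have hlog : u ≤ Real.log n :=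
    (Real.le_log_iff_exp_le ((Real.exp_pos u).trans_le (hN.trans hNn))).2 (hN.trans hNn)
  rw [max_eq_left (by linarith), mul_zero]

lemma continuous_smoothedSum (b : ℕ → ℝ) : Continuous (smoothedSum b) := by
  refine continuous_iff_continuousAt.2 fun u ↦ ?_
  obtain ⟨N, hN⟩ := exists_nat_ge (Real.exp (u + 1))
  have hloc : smoothedSum b =ᶠ[𝓝 u]
      fun v ↦ ∑ n ∈ Finset.Icc 0 N, b n * max 0 (v - Real.log n) := by
    filter_upwards [Iio_mem_nhds (lt_add_one u)] with v hv
    exact smoothedSum_eq_sum ((Real.exp_le_exp.2 (le_of_lt hv)).trans hN)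
  refine ContinuousAt.congr ?_ hloc.symm
  fun_prop

lemma hasLaplaceAt_mul_max_zero_sub_log (hs : 0 < s.re) (hb0 : b 0 = 0) (n : ℕ) :
    HasLaplaceAt (fun u : ℝ ↦ ((b n * max 0 (u - Real.log n) : ℝ) : ℂ)) s
      (LSeries.term (fun n ↦ (b n : ℂ)) s n / s ^ 2) := by
  convert! ((hasLaplaceAt_max_zero hs).comp_sub_right (Real.log n)).const_mul (b n) using 1
  · push_cast
    rfl
  · rcases eq_or_ne n 0 with rfl | hn
    · simp [hb0]
    · rw [LSeries.term_of_ne_zero hn, Complex.cpow_def_of_ne_zero (by exact_mod_cast hn),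
        Complex.exp_neg, ← Complex.natCast_log, mul_comm s]
      ring

theorem hasLaplaceAt_smoothedSum (hs : 0 < s.re) (hb0 : b 0 = 0) (hb : ∀ n, 0 ≤ b n)
    (hsum : LSeriesSummable (fun n ↦ (b n : ℂ)) s) :
    HasLaplaceAt (fun u ↦ (smoothedSum b u : ℂ)) s (LSeries (fun n ↦ (b n : ℂ)) s / s ^ 2) := by
  set F : ℕ → ℝ → ℂ := fun n u ↦ ((b n * max 0 (u - Real.log n) : ℝ) : ℂ) * cexp (-(s * u))
  have hterm := hasLaplaceAt_mul_max_zero_sub_log hs hb0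
  have htsum : (fun u : ℝ ↦ (smoothedSum b u : ℂ) * cexp (-(s * u))) = fun u ↦ ∑' n, F n u := by
    ext u
    rw [smoothedSum, Complex.ofReal_tsum, ← tsum_mul_right]
  have hnorm : ∀ n, ∫ u, ‖F n u‖ = ‖LSeries.term (fun n ↦ (b n : ℂ)) s n‖ / s.re ^ 2 := by
    intro n
    refine HasLaplaceAt.integral_norm_eq
      (fun u ↦ mul_nonneg (hb n) (le_max_left _ _)) ?_
    convert! hasLaplaceAt_mul_max_zero_sub_log (s := s.re) (by simpa using hs) hb0 n using 1
    rcases eq_or_ne n 0 with rfl | hn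
    · simp
    · rw [LSeries.norm_term_eq, if_neg hn, LSeries.term_of_ne_zero hn,
        Complex.norm_of_nonneg (hb n)]
      push_cast [Complex.ofReal_cpow n.cast_nonneg]
      rfl
  have hsumF : Summable fun n ↦ ∫ u, ‖F n u‖ := by
    simp_rw [hnorm]
    exact hsum.norm.div_const _
  constructor
  · have := continuous_smoothedSum b
    rw [htsum]
    refine integrable_tsum_of_summable_integral_norm (fun n ↦ (hterm n).integrable) hsumF ?_
    rw [← htsum]
    exact Continuous.aestronglyMeasurable (by fun_prop)
  · rw [htsum, ← (hasSum_integral_of_summable_integral_norm (fun n ↦ (hterm n).integrable)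
      hsumF).tsum_eq, LSeries, ← tsum_div_const]
    exact tsum_congr fun n ↦ (hterm n).integral_eq

end LaplaceTransforms

section SmoothedRemainder

variable {q : ℕ} [NeZero q] {a : ZMod q} {s : ℂ}

/-- The error term of the smoothed sum `∑ Λ(n) (u - log n)₊` over `n ≡ a mod q`, relative to its
main term `φ(q)⁻¹ (e ^ u - 1 - u)`, both cut off at `u = 0`. -/
noncomputable def smoothedRemainder (a : ZMod q) (u : ℝ) : ℝ :=
  smoothedSum (residueClass a) u - (q.totient : ℝ)⁻¹ * (Real.exp (max 0 u) - 1 - max 0 u)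

omit [NeZero q] in
lemma continuous_smoothedRemainder (a : ZMod q) : Continuous (smoothedRemainder a) :=
  (continuous_smoothedSum _).sub (by fun_prop)

lemma hasLaplaceAt_smoothedRemainder (ha : IsUnit a) (hs : 1 < s.re) :
    HasLaplaceAt (fun u ↦ (smoothedRemainder a u : ℂ)) s (remainderTransform a s) := by
  have hs0 : s ≠ 0 := ne_zero_of_re_pos (by linarith)
  have hs1 : s - 1 ≠ 0 := ne_zero_of_re_pos (by simpa using hs)
  have hsum : LSeriesSummable (fun n ↦ (residueClass a n : ℂ)) s :=
    LSeriesSummable_of_abscissaOfAbsConv_lt_re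
      ((ArithmeticFunction.vonMangoldt.abscissaOfAbsConv_residueClass_le_one a).trans_lt
        (by exact_mod_cast hs))
  have hS := hasLaplaceAt_smoothedSum (by linarith)
    (ArithmeticFunction.vonMangoldt.residueClass_apply_zero a)
    (ArithmeticFunction.vonMangoldt.residueClass_nonneg a) hsum
  convert! hS.sub ((hasLaplaceAt_exp_max_zero_sub hs).const_mul (q.totient : ℂ)⁻¹) using 1
  · ext u
    rw [smoothedRemainder]
    push_cast
    rfl
  · rw [remainderTransform,
      ArithmeticFunction.vonMangoldt.eqOn_LFunctionResidueClassAux ha hs]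
    field_simp

theorem tendsto_pow_mul_smoothedRemainder (ha : IsUnit a) (n : ℕ) :
    Tendsto (fun u : ℝ ↦ u ^ n * (smoothedRemainder a u * Real.exp (-u))) atTop (𝓝 0) := by
  obtain ⟨C, hC⟩ := exists_norm_remainderTransform_le_one_add_abs_im_rpow a
  have hdecay : Integrable fun t : ℝ ↦ (1 + |t|) ^ (-(3 / 2) : ℝ) := by
    simpa using integrable_one_add_norm (E := ℝ) (μ := volume) (r := 3 / 2) (by norm_num)
  have hderiv (k : ℕ) :
      Integrable fun ξ ↦ iteratedDeriv k (remainderTransform a) (linePoint 1 ξ) := by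
    obtain ⟨Ck, hCk⟩ := exists_norm_iteratedDeriv_remainderTransform_le a k
    refine ((hdecay.comp_mul_left' (R := 2 * Real.pi) (by positivity)).const_mul Ck).mono'
      (continuous_comp_linePoint (a := 1) (b := 1) (fun s hs _ ↦ ?_)
        ⟨le_rfl, le_rfl⟩).aestronglyMeasurable (ae_of_all _ fun ξ ↦ ?_)
    · simpa only [iteratedDeriv_eq_iterate] using
        ((analyticAt_remainderTransform a hs).iterated_deriv k).continuousAt
    · simpa using hCk (linePoint 1 ξ) (by simp)
  have hlim := tendsto_pow_mul_of_hasLaplaceAt (n := n) (a := 1) (b := 2) one_lt_two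
    (Complex.continuous_ofReal.comp (continuous_smoothedRemainder a))
    (fun s hs _ ↦ hasLaplaceAt_smoothedRemainder ha hs)
    (fun s hs _ ↦ analyticAt_remainderTransform a hs) (hdecay.const_mul C) hC fun k _ ↦ hderiv k
  rw [← tendsto_ofReal_iff]
  simpa using hlim

end SmoothedRemainder

section Tauberian

open Asymptotics

variable {b : ℕ → ℝ}

/-- The summatory function `∑_{n ≤ x} b(n)`. The sum starts at `n = 0`, as in Mathlib's Abel
summation formulas. -/
noncomputable def summatory (b : ℕ → ℝ) (x : ℝ) : ℝ := ∑ n ∈ Finset.Icc 0 ⌊x⌋₊, b n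

lemma summatory_eq_sum_ite {x : ℝ} (hx : 0 ≤ x) {N : ℕ} (hN : x ≤ N) :
    summatory b x = ∑ n ∈ Finset.Icc 0 N, if (n : ℝ) ≤ x then b n else 0 := by
  rw [summatory, ← Finset.sum_filter]
  refine Finset.sum_congr (Finset.ext fun n ↦ ?_) fun _ _ ↦ rfl
  simp only [Finset.mem_Icc, Finset.mem_filter, zero_le, true_and, Nat.le_floor_iff hx]
  exact ⟨fun h ↦ ⟨by exact_mod_cast h.trans hN, h⟩, And.right⟩

lemma mul_summatory_exp_le (hb0 : b 0 = 0) (hb : ∀ n, 0 ≤ b n) (u h : ℝ) :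
    h * summatory b (Real.exp u) ≤ smoothedSum b (u + h) - smoothedSum b u := by
  obtain ⟨N, hN⟩ := exists_nat_ge (max (Real.exp u) (Real.exp (u + h)))
  rw [max_le_iff] at hN
  rw [summatory_eq_sum_ite (Real.exp_pos u).le hN.1, smoothedSum_eq_sum hN.1,
    smoothedSum_eq_sum hN.2, ← Finset.sum_sub_distrib, Finset.mul_sum]
  refine Finset.sum_le_sum fun n _ ↦ ?_
  rcases eq_or_ne n 0 with rfl | hn
  · simp [hb0]
  have hlog : Real.log n ≤ u ↔ (n : ℝ) ≤ Real.exp u := Real.log_le_iff_le_exp (by positivity)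
  rw [← mul_sub]
  split_ifs with hnu
  · rw [mul_comm, max_eq_right (sub_nonneg.2 (hlog.2 hnu))]
    exact mul_le_mul_of_nonneg_left
      (by linarith [le_max_right 0 (u + h - Real.log n)]) (hb n)
  · rw [max_eq_left (sub_nonpos.2 (not_le.1 (hlog.not.2 hnu)).le), sub_zero, mul_zero]
    exact mul_nonneg (hb n) (le_max_left _ _)

lemma eventually_forall_abs_add_le_of_isLittleO {R : ℝ → ℝ} {k : ℕ}
    (hR : R =o[atTop] fun u ↦ Real.exp u / u ^ k) {ε : ℝ} (hε : 0 < ε) :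
    ∀ᶠ u in atTop, ∀ h, |h| ≤ 1 → |R (u + h)| ≤ ε * (Real.exp u / u ^ k) := by
  obtain ⟨U, hU⟩ := eventually_atTop.1 (hR.bound (c := ε / (3 * 2 ^ k)) (by positivity))
  filter_upwards [eventually_ge_atTop 2, eventually_ge_atTop (U + 1)] with u hu2 huU h hh
  obtain ⟨hhl, hhu⟩ := abs_le.1 hh
  have hexp : Real.exp (u + h) ≤ 3 * Real.exp u := by
    rw [Real.exp_add, mul_comm]
    gcongr
    linarith [Real.exp_le_exp.2 hhu, Real.exp_one_lt_d9]
  have hRu := hU (u + h) (by linarith)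
  rw [Real.norm_eq_abs, Real.norm_of_nonneg (div_nonneg (Real.exp_pos _).le
    (pow_nonneg (by linarith) k))] at hRu
  calc |R (u + h)| ≤ ε / (3 * 2 ^ k) * (Real.exp (u + h) / (u + h) ^ k) := hRu
    _ ≤ ε / (3 * 2 ^ k) * (3 * Real.exp u / (u / 2) ^ k) := by
      gcongr
      linarith
    _ = ε * (Real.exp u / u ^ k) := by
      rw [div_pow]
      field_simp

/-- `hA` says that `A u` is a subgradient of `S` at `u`, as when `S` is convex with derivative
`A`. -/
theorem isLittleO_sub_mul_exp_of_subgradient {A S : ℝ → ℝ} {κ : ℝ} (k : ℕ)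
    (hA : ∀ u h, h * A u ≤ S (u + h) - S u)
    (hS : (fun u ↦ S u - κ * Real.exp u) =o[atTop] fun u ↦ Real.exp u / u ^ (2 * k)) :
    (fun u ↦ A u - κ * Real.exp u) =o[atTop] fun u ↦ Real.exp u / u ^ k := by
  refine isLittleO_iff.2 fun c hc ↦ ?_
  set τ := min (c / (|κ| + 1)) 1
  have hτ0 : 0 < τ := by positivity
  have hτc : (|κ| + 1) * τ ≤ c := by
    rw [← le_div_iff₀' (by positivity)]
    exact min_le_left _ _
  filter_upwards [eventually_forall_abs_add_le_of_isLittleO hS (half_pos (pow_pos hτ0 2)),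
    eventually_ge_atTop 1] with u hR hu
  set E := Real.exp u
  have hE : 0 < E := Real.exp_pos u
  set η := τ / u ^ k with hη
  have hη0 : 0 < η := by positivity
  have hη1 : η ≤ 1 := div_le_one_of_le₀ ((min_le_right _ _).trans (one_le_pow₀ hu)) (by positivity)
  have hηE : τ ^ 2 / 2 * (E / u ^ (2 * k)) = η ^ 2 * E / 2 := by
    rw [hη]
    field_simp
    ring
  have hbound (h : ℝ) (hh : |h| = η) : h * (A u - κ * E) ≤ (|κ| + 1) * η ^ 2 * E := by
    have hexp : κ * E * (Real.exp h - 1 - h) ≤ |κ| * E * η ^ 2 := by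
      refine (le_abs_self _).trans ?_
      rw [abs_mul, abs_mul, abs_of_pos hE, ← hh, sq_abs]
      gcongr
      exact Real.abs_exp_sub_one_sub_id_le (hh.trans_le hη1)
    have hRh := (abs_le.1 (hR h (hh.trans_le hη1))).2
    have hR0 := (abs_le.1 (hR 0 (by simp))).1
    rw [hηE] at hRh hR0
    rw [Real.exp_add] at hRh
    rw [add_zero] at hR0
    linarith [hA u h]
  have habs : η * |A u - κ * E| ≤ η * ((|κ| + 1) * η * E) := by
    have hpos := hbound η (abs_of_pos hη0)
    have hneg := hbound (-η) (by rw [abs_neg, abs_of_pos hη0])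
    rcases abs_cases (A u - κ * E) with ⟨h, -⟩ | ⟨h, -⟩ <;> rw [h] <;> linarith
  rw [Real.norm_eq_abs, Real.norm_of_nonneg (by positivity)]
  calc |A u - κ * E| ≤ (|κ| + 1) * η * E := le_of_mul_le_mul_left habs hη0
    _ = (|κ| + 1) * τ * (E / u ^ k) := by rw [hη]; ring
    _ ≤ c * (E / u ^ k) := by gcongr

variable {q : ℕ} [NeZero q] {a : ZMod q}

lemma isLittleO_one_add_id_exp_div_pow (k : ℕ) :
    (fun u : ℝ ↦ 1 + u) =o[atTop] fun u ↦ Real.exp u / u ^ k := by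
  have hpow :=
    (Real.isLittleO_pow_exp_atTop (n := k)).add (Real.isLittleO_pow_exp_atTop (n := k + 1))
  refine (hpow.mul_isBigO (isBigO_refl (fun u ↦ (u ^ k)⁻¹) atTop)).congr' ?_ EventuallyEq.rfl
  filter_upwards [eventually_gt_atTop 0] with u hu
  field_simp
  ring

lemma isLittleO_smoothedSum_residueClass_sub (ha : IsUnit a) (k : ℕ) :
    (fun u ↦ smoothedSum (residueClass a) u - (q.totient : ℝ)⁻¹ * Real.exp u) =o[atTop]
      fun u ↦ Real.exp u / u ^ k := by
  have hR : smoothedRemainder a =o[atTop] fun u ↦ Real.exp u / u ^ k := by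
    have hlim := tendsto_pow_mul_smoothedRemainder ha k
    refine (isLittleO_iff_tendsto' ?_).2 (hlim.congr fun u ↦ ?_)
    · filter_upwards [eventually_gt_atTop 0] with u hu h
      exact absurd h (by positivity)
    · rw [Real.exp_neg, div_div_eq_mul_div]
      ring
  refine (hR.sub ((isLittleO_one_add_id_exp_div_pow k).const_mul_left (q.totient : ℝ)⁻¹)).congr' ?_
    EventuallyEq.rfl
  filter_upwards [eventually_ge_atTop 0] with u hu
  rw [smoothedRemainder, max_eq_right hu]
  ring

theorem isLittleO_summatory_residueClass_sub (ha : IsUnit a) (k : ℕ) :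
    (fun x ↦ summatory (residueClass a) x - (q.totient : ℝ)⁻¹ * x) =o[atTop]
      fun x ↦ x / Real.log x ^ k := by
  have hexp := isLittleO_sub_mul_exp_of_subgradient k
    (mul_summatory_exp_le (ArithmeticFunction.vonMangoldt.residueClass_apply_zero a)
      (ArithmeticFunction.vonMangoldt.residueClass_nonneg a))
    (isLittleO_smoothedSum_residueClass_sub ha (2 * k))
  refine (hexp.comp_tendsto Real.tendsto_log_atTop).congr' ?_ ?_ <;>
    filter_upwards [eventually_gt_atTop 0] with x hx <;>
    simp only [Function.comp_apply, Real.exp_log hx]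

end Tauberian

section PartialSummation

open Asymptotics

variable {b : ℕ → ℝ}

lemma isLittleO_rpow_div_log_pow (k : ℕ) {r : ℝ} (hr : r < 1) :
    (fun x : ℝ ↦ x ^ r) =o[atTop] fun x ↦ x / Real.log x ^ k := by
  have hlog := isLittleO_log_rpow_rpow_atTop (k : ℝ) (sub_pos.2 hr)
  refine ((isBigO_refl (fun x : ℝ ↦ x ^ r / Real.log x ^ k) atTop).mul_isLittleO hlog).congr' ?_ ?_
  · filter_upwards [eventually_gt_atTop 1] with x hx
    have := Real.log_pos hx
    rw [Real.rpow_natCast, div_mul_cancel₀ _ (by positivity)]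
  · filter_upwards [eventually_gt_atTop 0] with x hx
    rw [div_mul_eq_mul_div, ← Real.rpow_add hx, add_sub_cancel, Real.rpow_one]

lemma isLittleO_const_div_log_pow (k : ℕ) (c : ℝ) :
    (fun _ : ℝ ↦ c) =o[atTop] fun x ↦ x / Real.log x ^ k := by
  simpa only [Real.rpow_zero, mul_one] using
    (isLittleO_rpow_div_log_pow k zero_lt_one).const_mul_left c

lemma isLittleO_intervalIntegral {f g G : ℝ → ℝ} {a : ℝ}
    (hf : ∀ x, a ≤ x → IntervalIntegrable f volume a x)
    (hg : ∀ x, a ≤ x → IntervalIntegrable g volume a x) (hg0 : ∀ x, a ≤ x → 0 ≤ g x)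
    (hfg : f =o[atTop] g) (hgG : (fun x ↦ ∫ t in a..x, g t) =O[atTop] G)
    (hG : ∀ c : ℝ, (fun _ ↦ c) =o[atTop] G) :
    (fun x ↦ ∫ t in a..x, f t) =o[atTop] G := by
  refine isLittleO_iff.2 fun c hc ↦ ?_
  obtain ⟨K, hK, hgK⟩ := hgG.exists_pos
  obtain ⟨T₀, hT₀⟩ := eventually_atTop.1 (hfg.bound (c := c / (2 * K)) (by positivity))
  set T := max T₀ a
  have haT : a ≤ T := le_max_right _ _
  filter_upwards [eventually_ge_atTop T, hgK.bound,
    (hG (∫ t in a..T, f t)).bound (half_pos hc)] with x hx hgx hhead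
  have hax : a ≤ x := haT.trans hx
  have hfTx : IntervalIntegrable f volume T x := (hf T haT).symm.trans (hf x hax)
  have hgTx : IntervalIntegrable g volume T x := (hg T haT).symm.trans (hg x hax)
  have htail : ‖∫ t in T..x, f t‖ ≤ c / (2 * K) * ∫ t in T..x, g t := by
    rw [← intervalIntegral.integral_const_mul]
    refine intervalIntegral.norm_integral_le_of_norm_le hx (ae_of_all _ fun t ht ↦ ?_)
      (hgTx.const_mul _)
    rw [← Real.norm_of_nonneg (hg0 t (haT.trans ht.1.le))]
    exact hT₀ t ((le_max_left _ _).trans ht.1.le)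
  have hgmono : ∫ t in T..x, g t ≤ K * ‖G x‖ := by
    have hgaT := intervalIntegral.integral_nonneg (μ := volume) haT fun t ht ↦ hg0 t ht.1
    have hgsplit := intervalIntegral.integral_add_adjacent_intervals (hg T haT) hgTx
    linarith [(le_abs_self _).trans hgx]
  rw [← intervalIntegral.integral_add_adjacent_intervals (hf T haT) hfTx]
  calc ‖(∫ t in a..T, f t) + ∫ t in T..x, f t‖
      ≤ c / 2 * ‖G x‖ + c / (2 * K) * (K * ‖G x‖) := by
        refine (norm_add_le _ _).trans (add_le_add hhead (htail.trans ?_))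
        gcongr
    _ = c * ‖G x‖ := by
      field_simp
      ring

lemma intervalIntegrable_one_div_log_pow (k : ℕ) {x y : ℝ} (hx : 1 < x) (hy : 1 < y) :
    IntervalIntegrable (fun t ↦ 1 / Real.log t ^ k) volume x y := by
  refine ContinuousOn.intervalIntegrable fun t ht ↦ ContinuousAt.continuousWithinAt ?_
  have ht1 : 1 < t := (lt_min hx hy).trans_le ht.1
  have ht0 : t ≠ 0 := by linarith
  have hlog : Real.log t ^ k ≠ 0 := pow_ne_zero k (Real.log_pos ht1).ne'
  fun_prop (disch := assumption)

lemma isLittleO_integral_of_isLittleO_one_div_log_sq {f : ℝ → ℝ}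
    (hf : ∀ x, 2 ≤ x → IntervalIntegrable f volume 2 x)
    (hfo : f =o[atTop] fun t ↦ 1 / Real.log t ^ 2) :
    (fun x ↦ ∫ t in 2..x, f t) =o[atTop] fun x ↦ x / Real.log x ^ 2 :=
  isLittleO_intervalIntegral hf
    (fun _ hx ↦ intervalIntegrable_one_div_log_pow 2 one_lt_two (one_lt_two.trans_le hx))
    (fun _ _ ↦ by positivity) hfo Chebyshev.integral_one_div_log_sq_isBigO
    (isLittleO_const_div_log_pow 2)

lemma integral_one_div_log_sq_eq {x : ℝ} (hx : 2 ≤ x) :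
    ∫ t in 2..x, 1 / Real.log t ^ 2 = x / Real.log x ^ 2 - 2 / Real.log 2 ^ 2 +
      2 * ∫ t in 2..x, 1 / Real.log t ^ 3 := by
  have hsq := intervalIntegrable_one_div_log_pow 2 one_lt_two (one_lt_two.trans_le hx)
  have hcube := (intervalIntegrable_one_div_log_pow 3 one_lt_two
    (one_lt_two.trans_le hx)).const_mul 2
  have hderiv : ∀ t ∈ uIcc 2 x, HasDerivAt (fun t ↦ t / Real.log t ^ 2)
      (1 / Real.log t ^ 2 - 2 * (1 / Real.log t ^ 3)) t := by
    intro t ht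
    rw [uIcc_of_le hx] at ht
    have ht0 : t ≠ 0 := by linarith [ht.1]
    have hlog : Real.log t ≠ 0 := (Real.log_pos (by linarith [ht.1])).ne'
    convert! (hasDerivAt_id t).div ((Real.hasDerivAt_log ht0).pow 2) (pow_ne_zero 2 hlog) using 1
    simp only [id, Nat.cast_ofNat, Nat.add_one_sub_one, pow_one, Pi.pow_apply]
    field_simp
  have hFTC := intervalIntegral.integral_eq_sub_of_hasDerivAt hderiv (hsq.sub hcube)
  rw [intervalIntegral.integral_sub hsq hcube, intervalIntegral.integral_const_mul] at hFTC
  linarith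

lemma isLittleO_integral_one_div_log_sq_sub :
    (fun x ↦ (∫ t in 2..x, 1 / Real.log t ^ 2) - x / Real.log x ^ 2) =o[atTop]
      fun x ↦ x / Real.log x ^ 2 := by
  have hcube : (fun t ↦ 1 / Real.log t ^ 3) =o[atTop] fun t ↦ 1 / Real.log t ^ 2 := by
    have hinv : (fun t ↦ (Real.log t)⁻¹) =o[atTop] fun _ ↦ (1 : ℝ) :=
      (isLittleO_one_iff ℝ).2 Real.tendsto_log_atTop.inv_tendsto_atTop
    refine (hinv.mul_isBigO (isBigO_refl (fun t ↦ 1 / Real.log t ^ 2) atTop)).congr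
      (fun t ↦ ?_) fun t ↦ one_mul _
    rw [pow_succ' _ 2, one_div, one_div, mul_inv]
  have hint := isLittleO_integral_of_isLittleO_one_div_log_sq
    (fun x hx ↦ intervalIntegrable_one_div_log_pow 3 one_lt_two (one_lt_two.trans_le hx)) hcube
  refine ((hint.const_mul_left 2).sub
    (isLittleO_const_div_log_pow 2 (2 / Real.log 2 ^ 2))).congr' ?_ EventuallyEq.rfl
  filter_upwards [eventually_ge_atTop 2] with x hx
  rw [integral_one_div_log_sq_eq hx]
  ring

lemma intervalIntegrable_summatory_div_log_sq {x y : ℝ} (hx : 1 < x) (hxy : x ≤ y) :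
    IntervalIntegrable (fun t ↦ summatory b t / (t * Real.log t ^ 2)) volume x y := by
  rw [intervalIntegrable_iff_integrableOn_Icc_of_le hxy]
  have hmul : IntegrableOn (fun t ↦ (t * Real.log t ^ 2)⁻¹ * summatory b t) (Icc x y) := by
    refine integrableOn_mul_sum_Icc _ (by linarith) <| ContinuousOn.integrableOn_Icc fun t ht ↦
      ContinuousAt.continuousWithinAt ?_
    have ht0 : t ≠ 0 := by linarith [ht.1]
    have hden : t * Real.log t ^ 2 ≠ 0 :=
      mul_ne_zero ht0 (pow_ne_zero _ (Real.log_pos (hx.trans_le ht.1)).ne')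
    fun_prop (disch := assumption)
  simpa only [div_eq_inv_mul] using hmul

lemma summatory_inv_log_mul (hb0 : b 0 = 0) (hb1 : b 1 = 0) {x : ℝ} (hx : 2 ≤ x) :
    summatory (fun n ↦ (Real.log n)⁻¹ * b n) x =
      summatory b x / Real.log x + ∫ t in 2..x, summatory b t / (t * Real.log t ^ 2) := by
  have hlog {t : ℝ} (ht : t ∈ Icc 2 x) : t ≠ 0 ∧ Real.log t ≠ 0 :=
    ⟨by linarith [ht.1], (Real.log_pos (by linarith [ht.1])).ne'⟩
  have hint : ∫ t in 2..x, deriv (fun t ↦ (Real.log t)⁻¹) t * summatory b t =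
      -∫ t in 2..x, summatory b t / (t * Real.log t ^ 2) := by
    rw [← intervalIntegral.integral_neg]
    refine intervalIntegral.integral_congr fun t _ ↦ ?_
    simp only [Real.deriv_inv_log_apply]
    rw [div_eq_mul_inv, div_eq_mul_inv, mul_inv]
    ring
  rw [summatory, sum_mul_eq_sub_integral_mul₁ b (f := fun t ↦ (Real.log t)⁻¹) hb0 hb1 x,
    ← intervalIntegral.integral_of_le hx]
  · simp only [← summatory.eq_1]
    rw [hint, div_eq_inv_mul, sub_neg_eq_add]
  · intro t ht
    obtain ⟨ht0, hlt⟩ := hlog ht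
    fun_prop (disch := assumption)
  · refine ContinuousOn.integrableOn_Icc fun t ht ↦ ContinuousWithinAt.congr ?_
      (fun _ _ ↦ Real.deriv_inv_log_apply) Real.deriv_inv_log_apply
    obtain ⟨ht0, hlt⟩ := hlog ht
    have hlt2 := pow_ne_zero 2 hlt
    exact ContinuousAt.continuousWithinAt <| by fun_prop (disch := assumption)

theorem isLittleO_summatory_inv_log_mul_sub {κ : ℝ} (hb0 : b 0 = 0) (hb1 : b 1 = 0)
    (hb : (fun x ↦ summatory b x - κ * x) =o[atTop] fun x ↦ x / Real.log x) :
    (fun x ↦ summatory (fun n ↦ (Real.log n)⁻¹ * b n) x -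
      κ * (x / Real.log x + x / Real.log x ^ 2)) =o[atTop] fun x ↦ x / Real.log x ^ 2 := by
  have hboundary : (fun x ↦ (summatory b x - κ * x) / Real.log x) =o[atTop]
      fun x ↦ x / Real.log x ^ 2 :=
    (hb.mul_isBigO (isBigO_refl (fun x ↦ (Real.log x)⁻¹) atTop)).congr
      (fun x ↦ (div_eq_mul_inv _ _).symm) fun x ↦ by rw [← div_eq_mul_inv, div_div, sq]
  have hbid : (fun x ↦ summatory b x - κ * x) =o[atTop] fun x ↦ x := by
    refine hb.trans_isBigO (IsBigO.of_bound 1 ?_)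
    filter_upwards [eventually_ge_atTop (Real.exp 1)] with x hx
    have hx0 : 0 < x := (Real.exp_pos 1).trans_le hx
    rw [norm_div, one_mul]
    refine div_le_self (norm_nonneg _) ?_
    exact ((Real.le_log_iff_exp_le hx0).2 hx).trans (le_abs_self _)
  have hsub : (fun t ↦ summatory b t / (t * Real.log t ^ 2) - κ * (1 / Real.log t ^ 2)) =o[atTop]
      fun t ↦ 1 / Real.log t ^ 2 := by
    refine (hbid.mul_isBigO
      (isBigO_refl (fun t ↦ (t * Real.log t ^ 2)⁻¹) atTop)).congr' ?_ ?_ <;>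
    · filter_upwards [eventually_gt_atTop 1] with t ht
      have := Real.log_pos ht
      field_simp
  have hsq {x : ℝ} (hx : 2 ≤ x) := (intervalIntegrable_one_div_log_pow 2 one_lt_two
    (one_lt_two.trans_le hx)).const_mul κ
  have hint := isLittleO_integral_of_isLittleO_one_div_log_sq
    (fun x hx ↦ (intervalIntegrable_summatory_div_log_sq one_lt_two hx).sub (hsq hx)) hsub
  refine ((hboundary.add hint).add
    (isLittleO_integral_one_div_log_sq_sub.const_mul_left κ)).congr' ?_ EventuallyEq.rfl
  filter_upwards [eventually_ge_atTop 2] with x hx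
  rw [summatory_inv_log_mul hb0 hb1 hx, intervalIntegral.integral_sub
    (intervalIntegrable_summatory_div_log_sq one_lt_two hx) (hsq hx),
    intervalIntegral.integral_const_mul]
  have := Real.log_pos (one_lt_two.trans_le hx)
  field_simp
  ring

end PartialSummation

section PrimeCounting

open Asymptotics

variable {q : ℕ} {a : ZMod q}

/-- The von Mangoldt function restricted to the primes congruent to `a` modulo `q`. -/
noncomputable def primeResidueClass (a : ZMod q) : ℕ → ℝ :=
  {p : ℕ | p.Prime}.indicator (residueClass a)

lemma abs_summatory_residueClass_sub_primeResidueClass_le (a : ZMod q) (x : ℝ) :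
    |summatory (residueClass a) x - summatory (primeResidueClass a) x| ≤
      Chebyshev.psi x - Chebyshev.theta x := by
  have hsub : summatory (residueClass a) x - summatory (primeResidueClass a) x =
      ∑ n ∈ Finset.Ioc 0 ⌊x⌋₊ with ¬ n.Prime, residueClass a n := by
    have hterm (n : ℕ) : residueClass a n - primeResidueClass a n =
        if ¬ n.Prime then residueClass a n else 0 := by
      by_cases hn : n.Prime <;> simp [primeResidueClass, hn]
    simp only [summatory, ← Finset.sum_sub_distrib, hterm, Finset.sum_filter]
    rw [← Finset.add_sum_Ioc_eq_sum_Icc (Nat.zero_le _),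
      ArithmeticFunction.vonMangoldt.residueClass_apply_zero, ite_self, zero_add]
  have hnonneg := ArithmeticFunction.vonMangoldt.residueClass_nonneg a
  rw [hsub, Chebyshev.psi_sub_theta_eq_sum_not_prime,
    abs_of_nonneg (Finset.sum_nonneg fun n _ ↦ hnonneg n)]
  exact Finset.sum_le_sum fun n _ ↦ ArithmeticFunction.vonMangoldt.residueClass_le a n

lemma isLittleO_summatory_primeResidueClass_sub [NeZero q] (ha : IsUnit a) (k : ℕ) :
    (fun x ↦ summatory (primeResidueClass a) x - (q.totient : ℝ)⁻¹ * x) =o[atTop]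
      fun x ↦ x / Real.log x ^ k := by
  have hsqrt : Real.sqrt =o[atTop] fun x ↦ x / Real.log x ^ k := by
    simpa only [← Real.sqrt_eq_rpow] using
      isLittleO_rpow_div_log_pow k (r := 1 / 2) one_half_lt_one
  have hpow : (fun x ↦ summatory (residueClass a) x - summatory (primeResidueClass a) x) =o[atTop]
      fun x ↦ x / Real.log x ^ k :=
    ((IsBigO.of_bound 1 (Eventually.of_forall fun x ↦ by
      rw [one_mul]
      exact (abs_summatory_residueClass_sub_primeResidueClass_le a x).trans
        (le_abs_self _))).trans Chebyshev.isBigO_psi_sub_theta_sqrt).trans_isLittleO hsqrt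
  exact ((isLittleO_summatory_residueClass_sub ha k).sub hpow).congr_left fun x ↦ by ring

lemma piMod_eq_summatory (m : ℕ) (l : ℤ) {x : ℝ} (hx : 0 ≤ x) :
    (piMod x m l : ℝ) =
      summatory (fun n ↦ (Real.log n)⁻¹ * primeResidueClass (l : ZMod m) n) x := by
  have hset : {p : ℕ | p.Prime ∧ (p : ℝ) ≤ x ∧ (p : ℤ) ≡ l [ZMOD (m : ℤ)]} =
      (Finset.Icc 0 ⌊x⌋₊).filter fun p : ℕ ↦ p.Prime ∧ (p : ZMod m) = (l : ZMod m) := by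
    ext p
    have hmod := ZMod.intCast_eq_intCast_iff (p : ℤ) l m
    rw [Int.cast_natCast] at hmod
    simp only [Finset.coe_filter, Finset.mem_Icc, Nat.zero_le, true_and, mem_ofPred_eq,
      Nat.le_floor_iff hx, hmod]
    tauto
  rw [piMod, hset, Set.ncard_coe_finset, Finset.card_eq_sum_ones, Finset.sum_filter, summatory]
  push_cast
  refine Finset.sum_congr rfl fun n _ ↦ ?_
  by_cases hn : n.Prime
  · have hlog : Real.log n ≠ 0 := (Real.log_pos (by exact_mod_cast hn.one_lt)).ne'
    by_cases hl : (n : ZMod m) = l <;>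
      simp [hn, hl, primeResidueClass, residueClass,
        ArithmeticFunction.vonMangoldt_apply_prime hn, hlog]
  · simp [hn, primeResidueClass]

theorem isLittleO_piMod_sub {m : ℕ} [NeZero m] {l : ℤ} (hl : IsUnit (l : ZMod m)) :
    (fun x ↦ piMod x m l - (m.totient : ℝ)⁻¹ * (x / Real.log x + x / Real.log x ^ 2)) =o[atTop]
      fun x ↦ x / Real.log x ^ 2 := by
  have hθ := isLittleO_summatory_primeResidueClass_sub hl 1
  simp only [pow_one] at hθ
  refine (isLittleO_summatory_inv_log_mul_sub
    (by simp [primeResidueClass, Nat.not_prime_zero])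
    (by simp [primeResidueClass, Nat.not_prime_one]) hθ).congr' ?_ EventuallyEq.rfl
  filter_upwards [eventually_ge_atTop 0] with x hx
  rw [piMod_eq_summatory m l hx]

end PrimeCounting

end SiegelWalfisz

/-- Corollary of the Siegel–Walfisz theorem: for coprime `m ≥ 1` and `l`,
there is `X(m)` such that for all `x ≥ X(m)`,
`x/(φ(m) log x) < π(x; m, l) < (x/(φ(m) log x))(1 + 5/(2 log x))`. -/
theorem siegel_walfisz_corollary (m : ℕ) (l : ℤ) (hm : 1 ≤ m)
    (hml : IsCoprime (m : ℤ) l) :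
    ∃ X : ℝ, ∀ x : ℝ, X ≤ x →
      x / ((Nat.totient m : ℝ) * Real.log x) < (piMod x m l : ℝ) ∧
      (piMod x m l : ℝ) <
        x / ((Nat.totient m : ℝ) * Real.log x) * (1 + 5 / (2 * Real.log x)) := by
  have : NeZero m := ⟨by omega⟩
  have hl : IsUnit (l : ZMod m) := (ZMod.coe_int_isUnit_iff_isCoprime l m).2 hml
  have : 0 < (m.totient : ℝ) := by exact_mod_cast Nat.totient_pos.2 hm
  refine Filter.eventually_atTop.1 ?_
  filter_upwards [(SiegelWalfisz.isLittleO_piMod_sub hl).bound (c := (m.totient : ℝ)⁻¹ / 2)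
    (by positivity), Filter.eventually_gt_atTop 1] with x hπ hx
  have hlog := Real.log_pos hx
  have hmain : 0 < (m.totient : ℝ)⁻¹ * (x / Real.log x ^ 2) := by positivity
  have hlower : x / (m.totient * Real.log x) = (m.totient : ℝ)⁻¹ * (x / Real.log x) := by
    field_simp
  have hupper : x / (m.totient * Real.log x) * (1 + 5 / (2 * Real.log x)) =
      (m.totient : ℝ)⁻¹ * (x / Real.log x) +
        5 / 2 * ((m.totient : ℝ)⁻¹ * (x / Real.log x ^ 2)) := by
    field_simp
  rw [Real.norm_eq_abs, Real.norm_of_nonneg (by positivity), abs_le] at hπ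
  rw [hupper, hlower]
  constructor <;> linarith
end

section
/- For all coprime integers a, b with a > 60000 and b > a, the number π*(a,b) of primes not representable as au + bv with u, v nonnegative integers satisfies π*(a,b) > 0.0445 · π(S(a,b)), where S(a,b) = ab − a − b and π(x) is the number of primes not exceeding x. -/
/-- `piStar a b` is the number of primes not representable as `a*u + b*v`
with `u, v` nonnegative integers, i.e. the number of primes not in the
numerical semigroup `⟨a, b⟩`. -/
noncomputable def piStar (a b : ℕ) : ℕ :=
  Set.ncard {p : ℕ | p.Prime ∧ ¬ ∃ u v : ℕ, p = a * u + b * v}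

/-- `S a b = a*b - a - b` (the Frobenius-type quantity). -/
def S (a b : ℕ) : ℕ := a * b - a - b

/-!
A prime `p ≤ a * b / 7` of the form `a * u + b * v` is either `a` itself or lies in one of the rows
`{a * u + b * v}` with `1 ≤ v ≤ a / 7` and `v` coprime to `a`. In each row Selberg's `Λ²` sieve of
level `Q ≈ 0.4 * b ^ (1/3)`, using only the primes that do not divide `a`, bounds the number of such
primes. Leaving out the divisors of `a` costs a factor `a / φ(a)`, but only a proportion `φ(a) / a`
of the rows is coprime to `a`, so the two factors cancel on summing over `v`. Hence at most about
`6 / 98 * a * b / log (a * b)` of the primes up to `a * b / 7` are representable, whereas there are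
at least about `0.921 / 7 * a * b / log (a * b)` of them by Chebyshev. Comparing with Chebyshev's
upper bound `log 4` for `π(a * b)` leaves enough room for all error terms as soon as
`log (a * b) ≥ 22`; the proportion `1/7` is what balances the sieve against Chebyshev's constants.
-/

namespace PiStar

open Finset Real
open scoped ArithmeticFunction.Moebius ArithmeticFunction.vonMangoldt

section ChebyshevLowerBound

theorem sub_le_log_factorial (n : ℕ) : n * log n - n ≤ log n.factorial := by
  rcases n.eq_zero_or_pos with rfl | hn
  · simp
  · have hlog : 0 ≤ log n := log_natCast_nonneg n
    have hpi : 0 ≤ log (2 * π) := log_nonneg (by linarith [pi_gt_three])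
    linarith [Stirling.le_log_factorial_stirling hn.ne']

theorem log_factorial_le {n : ℕ} (hn : 1 ≤ n) :
    log n.factorial ≤ n * log n - n + log n + 1 := by
  induction n, hn using Nat.le_induction with
  | base => simp
  | succ n hn ih =>
    have : (0 : ℝ) < n := by exact_mod_cast hn
    have hlog : log n - log (n + 1) ≤ n / (n + 1) - 1 := by
      rw [← log_div (by positivity) (by positivity)]
      exact log_le_sub_one_of_pos (by positivity)
    have hmul : (n + 1) * (log n - log (n + 1)) ≤ -1 := by
      have h := mul_le_mul_of_nonneg_left hlog (by positivity : (0 : ℝ) ≤ n + 1)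
      field_simp at h
      linarith
    rw [Nat.factorial_succ]
    push_cast
    rw [log_mul (by positivity) (by positivity)]
    linarith

theorem log_factorial_eq_sum_vonMangoldt {n N : ℕ} (h : n ≤ N) :
    log n.factorial = ∑ k ∈ Ioc 0 N, Λ k * (n / k : ℕ) := by
  have hlog : log n.factorial = ∑ m ∈ Ioc 0 n, ArithmeticFunction.log m := by
    rw [← prod_Ico_id_eq_factorial, Nat.cast_prod, log_prod fun m hm => by
      have := (mem_Ico.1 hm).1
      positivity]
    rfl
  rw [hlog, ← ArithmeticFunction.vonMangoldt_mul_zeta,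
    ArithmeticFunction.sum_Ioc_mul_zeta_eq_sum]
  refine sum_subset (Ioc_subset_Ioc_right h) fun k hkN hkn => ?_
  have hnk : n < k := by simp only [mem_Ioc] at hkN hkn; omega
  simp [Nat.div_eq_of_lt hnk]

theorem log_factorial_combination_le_psi (n : ℕ) :
    log n.factorial - log (n / 2).factorial - log (n / 3).factorial - log (n / 5).factorial
      + log (n / 30).factorial ≤ Chebyshev.psi n := by
  rw [log_factorial_eq_sum_vonMangoldt le_rfl, log_factorial_eq_sum_vonMangoldt (n.div_le_self 2),
    log_factorial_eq_sum_vonMangoldt (n.div_le_self 3),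
    log_factorial_eq_sum_vonMangoldt (n.div_le_self 5),
    log_factorial_eq_sum_vonMangoldt (n.div_le_self 30), ← sum_sub_distrib, ← sum_sub_distrib,
    ← sum_sub_distrib, ← sum_add_distrib, Chebyshev.psi, Nat.floor_natCast]
  refine sum_le_sum fun k _ => ?_
  -- Chebyshev's choice `1 + 1/30 = 1/2 + 1/3 + 1/5` keeps every coefficient at most `1`.
  have hcoeff : n / k + n / k / 30 ≤ 1 + n / k / 2 + n / k / 3 + n / k / 5 := by omega
  have hcoeff' : ((n / k : ℕ) : ℝ) + (n / k / 30 : ℕ)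
      ≤ 1 + (n / k / 2 : ℕ) + (n / k / 3 : ℕ) + (n / k / 5 : ℕ) := by exact_mod_cast hcoeff
  rw [Nat.div_right_comm n 2, Nat.div_right_comm n 3, Nat.div_right_comm n 5,
    Nat.div_right_comm n 30]
  linarith [mul_le_mul_of_nonneg_left hcoeff'
    (ArithmeticFunction.vonMangoldt_nonneg (n := k))]

theorem le_psi_thirty_mul {m : ℕ} (hm : 1 ≤ m) :
    0.92129 * (30 * m) - 3 * log (30 * m) - 3 ≤ Chebyshev.psi (30 * m : ℕ) := by
  have hpsi := log_factorial_combination_le_psi (30 * m)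
  rw [show 30 * m / 2 = 15 * m by omega, show 30 * m / 3 = 10 * m by omega,
    show 30 * m / 5 = 6 * m by omega, show 30 * m / 30 = m by omega] at hpsi
  have h30 := sub_le_log_factorial (30 * m)
  have h1 := sub_le_log_factorial m
  have h15 := log_factorial_le (n := 15 * m) (by omega)
  have h10 := log_factorial_le (n := 10 * m) (by omega)
  have h6 := log_factorial_le (n := 6 * m) (by omega)
  have : (1 : ℝ) ≤ m := by exact_mod_cast hm
  have log_smul (c : ℝ) (hc : 0 < c) : log (c * m) = log c + log m :=
    log_mul hc.ne' (by positivity)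
  have log30 : log 30 = log 2 + log 3 + log 5 := by
    rw [← log_mul, ← log_mul] <;> norm_num
  have log15 : log 15 = log 3 + log 5 := by rw [← log_mul] <;> norm_num
  have log10 : log 10 = log 2 + log 5 := by rw [← log_mul] <;> norm_num
  have log6 : log 6 = log 2 + log 3 := by rw [← log_mul] <;> norm_num
  have hconst : 0.92129 * 30 * (m : ℝ) ≤ (14 * log 2 + 9 * log 3 + 5 * log 5) * m := by
    gcongr
    linarith [log_two_gt_d9, log_three_gt_d9, log_five_gt_d9]
  push_cast at hpsi h30 h15 h10 h6 ⊢
  rw [log_smul _ (by norm_num)] at h30 h15 h10 h6 ⊢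
  rw [log30] at h30 ⊢
  rw [log15] at h15
  rw [log10] at h10
  rw [log6] at h6
  linarith [log_two_gt_d9, log_three_gt_d9, log_five_gt_d9]

theorem log_le_two_mul_sqrt {x : ℝ} (hx : 0 < x) : log x ≤ 2 * √x := by
  have h := log_le_sub_one_of_pos (sqrt_pos.2 hx)
  rw [log_sqrt hx.le] at h
  linarith

theorem mul_div_log_le_primeCounting {x : ℝ} (hx : 500000000 ≤ x) :
    0.921 * x / log x ≤ Nat.primeCounting ⌊x⌋₊ := by
  rw [div_le_iff₀ (log_pos (by linarith))]
  refine le_trans ?_ (Chebyshev.psi_le_primeCounting_mul_log' x)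
  set m := ⌊x / 30⌋₊ with hm
  have hm_le : (m : ℝ) ≤ x / 30 := Nat.floor_le (by linarith)
  have hm_gt : x / 30 < m + 1 := Nat.lt_floor_add_one _
  have hm_pos : 1 ≤ m := by rw [hm, Nat.one_le_floor_iff]; linarith
  have : (1 : ℝ) ≤ m := by exact_mod_cast hm_pos
  have hlog : log (30 * m) ≤ log x := log_le_log (by positivity) (by linarith)
  have hsqrt : 20000 ≤ √x := le_sqrt_of_sq_le (by linarith)
  calc 0.921 * x ≤ 0.92129 * (30 * m) - 3 * log (30 * m) - 3 := by
        nlinarith [log_le_two_mul_sqrt (by linarith : 0 < x), mul_self_sqrt (by linarith : 0 ≤ x)]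
    _ ≤ Chebyshev.psi (30 * m : ℕ) := le_psi_thirty_mul hm_pos
    _ ≤ Chebyshev.psi x := Chebyshev.psi_mono (by push_cast; linarith)

end ChebyshevLowerBound

section ChebyshevUpperBound

theorem hasDerivAt_div_log_sq {t : ℝ} (ht : 1 < t) :
    HasDerivAt (fun t => t / log t ^ 2) (1 / log t ^ 2 - 2 / log t ^ 3) t := by
  have ht₀ : t ≠ 0 := by positivity
  have hlog : log t ≠ 0 := (log_pos ht).ne'
  refine ((hasDerivAt_id' t).fun_div ((hasDerivAt_log ht₀).fun_pow 2)
    (pow_ne_zero 2 hlog)).congr_deriv ?_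
  field_simp
  ring

theorem integral_one_div_log_sq_le_sub {y x : ℝ} (hy : exp 10 ≤ y) (hyx : y ≤ x) :
    ∫ t in y..x, 1 / log t ^ 2 ≤ 1.25 * (x / log x ^ 2) - 1.25 * (y / log y ^ 2) := by
  have hexp : 1 < exp 10 := one_lt_exp_iff.2 (by norm_num)
  have one_lt {t : ℝ} (ht : y ≤ t) : 1 < t := by linarith
  have hderiv (t : ℝ) (ht : y ≤ t) := (hasDerivAt_div_log_sq (one_lt ht)).const_mul 1.25
  refine intervalIntegral.integral_le_sub_of_hasDeriv_right_of_le hyx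
    (fun t ht => (hderiv t ht.1).continuousAt.continuousWithinAt)
    (fun t ht => (hderiv t ht.1.le).hasDerivWithinAt) ?_ fun t ht => ?_
  · refine ((intervalIntegrable_iff_integrableOn_Icc_of_le hyx).1
      (Chebyshev.intervalIntegrable_one_div_log_sq (one_lt le_rfl) (one_lt hyx)))
  · have hlog : 10 ≤ log t := (le_log_iff_exp_le (by linarith [one_lt ht.1.le])).2
      (hy.trans ht.1.le)
    have : 0 < log t := by linarith
    have hcube : 2 / log t ^ 3 ≤ 0.2 * (1 / log t ^ 2) := by
      rw [mul_one_div, div_le_div_iff₀ (by positivity) (by positivity)]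
      nlinarith [mul_nonneg (sq_nonneg (log t)) (sub_nonneg.2 hlog)]
    linarith

theorem exp_ten_le : exp 10 ≤ 32768 := by
  calc exp 10 = exp 1 ^ 10 := by rw [← exp_nat_mul]; norm_num
    _ ≤ 2.7182818286 ^ 10 := by gcongr; exact exp_one_lt_d9.le
    _ ≤ 32768 := by norm_num

theorem integral_one_div_log_sq_le {x : ℝ} (hx : 32768 ≤ x) :
    ∫ t in 2..x, 1 / log t ^ 2 ≤ 69000 + 1.25 * (x / log x ^ 2) := by
  have hint {y z : ℝ} (hy : 1 < y) (hz : 1 < z) :=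
    Chebyshev.intervalIntegrable_one_div_log_sq hy hz
  rw [← intervalIntegral.integral_add_adjacent_intervals (b := 32768)
    (hint (by norm_num) (by norm_num)) (hint (by norm_num) (by linarith))]
  have hsmall : ∫ t in (2 : ℝ)..32768, 1 / log t ^ 2 ≤ 69000 := by
    calc ∫ t in (2 : ℝ)..32768, 1 / log t ^ 2 ≤ ∫ t in (2 : ℝ)..32768, 1 / log 2 ^ 2 := by
          refine intervalIntegral.integral_mono_on (by norm_num)
            (hint (by norm_num) (by norm_num)) (by simp) fun t ht => ?_
          have := log_le_log two_pos ht.1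
          gcongr
      _ ≤ 69000 := by
          rw [intervalIntegral.integral_const, smul_eq_mul, mul_one_div,
            div_le_iff₀ (by positivity)]
          nlinarith [log_two_gt_d9]
  have hlarge := integral_one_div_log_sq_le_sub exp_ten_le hx
  have : 0 ≤ (32768 : ℝ) / log 32768 ^ 2 := by positivity
  linarith

theorem integral_theta_div_le {x : ℝ} (hx : 2 ≤ x) :
    ∫ t in 2..x, Chebyshev.theta t / (t * log t ^ 2)
      ≤ log 4 * ∫ t in 2..x, 1 / log t ^ 2 := by
  rw [← intervalIntegral.integral_const_mul]
  refine intervalIntegral.integral_mono_on hx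
    ((intervalIntegrable_iff_integrableOn_Icc_of_le hx).2
      (Chebyshev.integrableOn_theta_div_id_mul_log_sq x))
    ((Chebyshev.intervalIntegrable_one_div_log_sq (by norm_num) (by linarith)).const_mul _)
    fun t ht => ?_
  have ht₀ : 0 < t := by linarith [ht.1]
  calc Chebyshev.theta t / (t * log t ^ 2) ≤ log 4 * t / (t * log t ^ 2) := by
        gcongr
        exact Chebyshev.theta_le_log4_mul_x ht₀.le
    _ = log 4 * (1 / log t ^ 2) := by field_simp

theorem log_le_mul_sqrt {x : ℝ} (hx : 60000 ^ 2 ≤ x) : log x ≤ 23 / 60000 * √x := by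
  have hexp : (60000 : ℝ) ^ 2 ≤ exp 23 := by
    calc (60000 : ℝ) ^ 2 ≤ 2.7182818283 ^ 23 := by norm_num
      _ ≤ exp 1 ^ 23 := by gcongr; exact exp_one_gt_d9.le
      _ = exp 23 := by rw [← exp_nat_mul]; norm_num
  have hanti : log x / √x ≤ log (60000 ^ 2) / √(60000 ^ 2) := by
    have hexp_two : exp 2 ≤ 60000 ^ 2 := (exp_le_exp.2 (by norm_num)).trans
      (exp_ten_le.trans (by norm_num))
    exact log_div_sqrt_antitoneOn hexp_two (hexp_two.trans hx) hx
  rw [sqrt_sq (by norm_num)] at hanti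
  rw [← div_le_iff₀ (sqrt_pos.2 (by linarith))]
  refine hanti.trans ?_
  gcongr
  exact (log_le_iff_le_exp (by norm_num)).2 hexp

theorem primeCounting_le_log_four_mul {x : ℝ} (hx : 60000 ^ 2 ≤ x) :
    Nat.primeCounting ⌊x⌋₊ ≤ log 4 * (x / log x + 1.3 * (x / log x ^ 2)) := by
  have hlog : 0 < log x := log_pos (by linarith)
  have : 0 < log 4 := log_pos (by norm_num)
  have htheta : Chebyshev.theta x / log x ≤ log 4 * (x / log x) := by
    rw [← mul_div_assoc]
    gcongr
    exact Chebyshev.theta_le_log4_mul_x (by linarith)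
  have habsorb : 69000 ≤ 0.05 * (x / log x ^ 2) := by
    have hsq := pow_le_pow_left₀ hlog.le (log_le_mul_sqrt hx) 2
    rw [mul_pow, sq_sqrt (by linarith)] at hsq
    rw [← mul_div_assoc, le_div_iff₀ (by positivity)]
    linarith
  have hintegral : log 4 * ∫ t in 2..x, 1 / log t ^ 2 ≤ log 4 * (1.3 * (x / log x ^ 2)) := by
    gcongr
    linarith [integral_one_div_log_sq_le (by linarith : 32768 ≤ x)]
  rw [Chebyshev.primeCounting_eq_theta_div_log_add_integral (by linarith), mul_add]
  linarith [integral_theta_div_le (by linarith : 2 ≤ x)]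

end ChebyshevUpperBound

section TotientSum

theorem totient_eq_mul_prod_one_sub_inv (n : ℕ) :
    (n.totient : ℝ) = n * ∏ p ∈ n.primeFactors, (1 - (p : ℝ)⁻¹) := by
  simpa using congrArg ((↑) : ℚ → ℝ) n.totient_eq_mul_prod_factors

theorem sum_inv_le_div_totient {a : ℕ} (ha : a ≠ 0) {M : Finset ℕ}
    (hM : ∀ m ∈ M, m ∈ Nat.factoredNumbers a.primeFactors) :
    ∑ m ∈ M, (m : ℝ)⁻¹ ≤ a / a.totient := by
  let inv : ℕ →* ℝ := ⟨⟨fun n => (n : ℝ)⁻¹, by simp⟩, fun m n => by simp [mul_comm]⟩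
  have hinv {p : ℕ} (hp : p.Prime) : ‖inv p‖ < 1 := by
    have : (1 : ℝ) < p := by exact_mod_cast hp.one_lt
    simpa [inv] using inv_lt_one_of_one_lt₀ this
  have heuler := (EulerProduct.summable_and_hasSum_factoredNumbers_prod_filter_prime_geometric
    hinv a.primeFactors).2
  have hprod : ∏ p ∈ a.primeFactors with p.Prime, (1 - inv p)⁻¹ = a / a.totient := by
    have ha₀ : (a : ℝ) ≠ 0 := by exact_mod_cast ha
    rw [filter_true_of_mem fun p hp => Nat.prime_of_mem_primeFactors hp, prod_inv_distrib,
      totient_eq_mul_prod_one_sub_inv, div_mul_cancel_left₀ ha₀]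
    rfl
  rw [hprod] at heuler
  calc ∑ m ∈ M, (m : ℝ)⁻¹
      = ∑ m ∈ M.subtype (· ∈ Nat.factoredNumbers a.primeFactors), inv m := by
        rw [sum_subtype_of_mem (fun m => inv m) hM]
        rfl
    _ ≤ a / a.totient := sum_le_hasSum _ (fun m _ => inv_nonneg.2 m.1.cast_nonneg) heuler

/-- The squarefree numbers up to `Q` that are coprime to `a`: the moduli of the sieve. -/
def coprimeSquarefree (a Q : ℕ) : Finset ℕ := {q ∈ Icc 1 Q | Squarefree q ∧ q.Coprime a}

theorem mem_coprimeSquarefree {a Q q : ℕ} :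
    q ∈ coprimeSquarefree a Q ↔ (1 ≤ q ∧ q ≤ Q) ∧ Squarefree q ∧ q.Coprime a := by
  simp [coprimeSquarefree]

/-- The product of the primes that divide `n` but not `a`. -/
def coprimeRadical (a n : ℕ) : ℕ := ∏ p ∈ n.primeFactors \ a.primeFactors, p

theorem primeFactors_coprimeRadical (a n : ℕ) :
    (coprimeRadical a n).primeFactors = n.primeFactors \ a.primeFactors :=
  Nat.primeFactors_prod fun _ hp => Nat.prime_of_mem_primeFactors (sdiff_subset hp)

theorem coprimeRadical_dvd_prod_primeFactors (a n : ℕ) :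
    coprimeRadical a n ∣ ∏ p ∈ n.primeFactors, p :=
  prod_dvd_prod_of_subset _ _ _ sdiff_subset

theorem coprimeRadical_dvd (a n : ℕ) : coprimeRadical a n ∣ n :=
  (coprimeRadical_dvd_prod_primeFactors a n).trans n.prod_primeFactors_dvd

theorem squarefree_coprimeRadical (a n : ℕ) : Squarefree (coprimeRadical a n) :=
  (UniqueFactorizationMonoid.squarefree_radical (a := n)).squarefree_of_dvd <| by
    rw [Nat.radical_eq_prod_primeFactors]
    exact coprimeRadical_dvd_prod_primeFactors a n

theorem coprimeRadical_mem_coprimeSquarefree {a n Q : ℕ} (ha : a ≠ 0) (hn : n ∈ Icc 1 Q) :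
    coprimeRadical a n ∈ coprimeSquarefree a Q := by
  obtain ⟨hn₁, hnQ⟩ := mem_Icc.1 hn
  have hdvd := coprimeRadical_dvd a n
  have hpos : 1 ≤ coprimeRadical a n := Nat.pos_of_dvd_of_pos hdvd hn₁
  refine mem_coprimeSquarefree.2
    ⟨⟨hpos, (Nat.le_of_dvd hn₁ hdvd).trans hnQ⟩, squarefree_coprimeRadical a n, ?_⟩
  rw [← Nat.disjoint_primeFactors (by omega) ha, primeFactors_coprimeRadical]
  exact sdiff_disjoint

theorem div_coprimeRadical_mem_factoredNumbers {a n : ℕ} (ha : a ≠ 0) (hn : n ≠ 0) :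
    n / coprimeRadical a n ∈ Nat.factoredNumbers (a * coprimeRadical a n).primeFactors := by
  have hdvd := coprimeRadical_dvd a n
  have hrad : coprimeRadical a n ≠ 0 := ne_zero_of_dvd_ne_zero hn hdvd
  rw [Nat.mem_factoredNumbers_iff_primeFactors_subset, Nat.primeFactors_mul ha hrad,
    primeFactors_coprimeRadical, union_sdiff_self_eq_union]
  exact ⟨(Nat.div_pos (Nat.le_of_dvd (Nat.pos_of_ne_zero hn) hdvd)
    (Nat.pos_of_ne_zero hrad)).ne',
    (Nat.primeFactors_mono (Nat.div_dvd_of_dvd hdvd) hn).trans subset_union_right⟩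

theorem sum_inv_coprimeRadical_eq_le {a q : ℕ} (ha : a ≠ 0) (hq : q ≠ 0) (hqa : q.Coprime a)
    (Q : ℕ) :
    ∑ n ∈ Icc 1 Q with coprimeRadical a n = q, (n : ℝ)⁻¹
      ≤ a / a.totient * (q.totient : ℝ)⁻¹ := by
  set A := {n ∈ Icc 1 Q | coprimeRadical a n = q} with hA
  have mem_A {n : ℕ} (hn : n ∈ A) : n ≠ 0 ∧ coprimeRadical a n = q := by
    simp only [hA, mem_filter, mem_Icc] at hn
    exact ⟨by omega, hn.2⟩
  have hdvd {n : ℕ} (hn : n ∈ A) : q ∣ n := (mem_A hn).2 ▸ coprimeRadical_dvd a n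
  have hq₀ : (q : ℝ) ≠ 0 := by exact_mod_cast hq
  calc ∑ n ∈ A, (n : ℝ)⁻¹ = (q : ℝ)⁻¹ * ∑ m ∈ A.image (· / q), (m : ℝ)⁻¹ := by
        rw [sum_image fun n hn m hm => (Nat.div_left_inj (hdvd hn) (hdvd hm)).1, mul_sum]
        refine sum_congr rfl fun n hn => ?_
        rw [Nat.cast_div (hdvd hn) hq₀, inv_div]
        field_simp
    _ ≤ (q : ℝ)⁻¹ * ((a * q : ℕ) / (a * q).totient) := by
        gcongr
        refine sum_inv_le_div_totient (mul_ne_zero ha hq) fun m hm => ?_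
        obtain ⟨n, hn, rfl⟩ := mem_image.1 hm
        obtain ⟨hn₀, hrad⟩ := mem_A hn
        simpa only [hrad] using div_coprimeRadical_mem_factoredNumbers ha hn₀
    _ = a / a.totient * (q.totient : ℝ)⁻¹ := by
        rw [Nat.totient_mul hqa.symm]
        push_cast
        field_simp

/-- Group the `n ≤ Q` by the product of the primes dividing `n` but not `a`. -/
theorem harmonic_le_mul_sum_inv_totient {a : ℕ} (ha : a ≠ 0) (Q : ℕ) :
    harmonic Q ≤ a / a.totient * ∑ q ∈ coprimeSquarefree a Q, (q.totient : ℝ)⁻¹ := by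
  have hharmonic : (harmonic Q : ℝ) = ∑ n ∈ Icc 1 Q, (n : ℝ)⁻¹ := by
    rw [harmonic_eq_sum_Icc]
    push_cast
    rfl
  rw [hharmonic, ← sum_fiberwise_of_maps_to (t := coprimeSquarefree a Q) fun n hn =>
    coprimeRadical_mem_coprimeSquarefree ha hn, mul_sum]
  refine sum_le_sum fun q hq => ?_
  obtain ⟨⟨hq, -⟩, -, hqa⟩ := mem_coprimeSquarefree.1 hq
  exact sum_inv_coprimeRadical_eq_le ha (by omega) hqa Q

theorem log_add_le_harmonic {Q : ℕ} (hQ : 15 ≤ Q) : log (Q + 1) + 0.545 ≤ harmonic Q := by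
  have hmono : eulerMascheroniSeq 15 ≤ harmonic Q - log (Q + 1) :=
    strictMono_eulerMascheroniSeq.monotone hQ
  have hlog : log 16 = 4 * log 2 := by
    rw [show (16 : ℝ) = 2 ^ 4 by norm_num, log_pow]
    norm_num
  have hbase : 0.545 ≤ eulerMascheroniSeq 15 := by
    have h15 : harmonic 15 = 1195757 / 360360 := by
      norm_num [harmonic, sum_range_succ]
    rw [eulerMascheroniSeq, h15]
    norm_num [hlog]
    linarith [log_two_lt_d9]
  linarith

end TotientSum

section SelbergSieve

theorem sum_divisors_moebius (n : ℕ) : ∑ d ∈ n.divisors, (μ d : ℝ) = if n = 1 then 1 else 0 := by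
  have h := ArithmeticFunction.coe_mul_zeta_apply (f := μ) (x := n)
  rw [ArithmeticFunction.moebius_mul_coe_zeta, ArithmeticFunction.one_apply] at h
  exact_mod_cast h.symm

theorem sum_moebius_filter_dvd {l m : ℕ} (hm : Squarefree m) :
    ∑ d ∈ m.divisors with l ∣ d, (μ d : ℝ) = if m = l then (μ l : ℝ) else 0 := by
  by_cases hl : l ∣ m
  swap
  · rw [if_neg fun h => hl h.symm.dvd, filter_false_of_mem fun d hd hld =>
      hl (hld.trans (Nat.dvd_of_mem_divisors hd)), sum_empty]
  obtain ⟨c, rfl⟩ := hl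
  have hl₀ : l ≠ 0 := left_ne_zero_of_mul hm.ne_zero
  have hc₀ : c ≠ 0 := right_ne_zero_of_mul hm.ne_zero
  have himage : {d ∈ (l * c).divisors | l ∣ d} = c.divisors.image (l * ·) := by
    ext d
    simp only [mem_filter, Nat.mem_divisors, mem_image]
    constructor
    · rintro ⟨⟨hd, -⟩, e, rfl⟩
      exact ⟨e, ⟨Nat.dvd_of_mul_dvd_mul_left (Nat.pos_of_ne_zero hl₀) hd, hc₀⟩, rfl⟩
    · rintro ⟨e, ⟨he, -⟩, rfl⟩
      exact ⟨⟨mul_dvd_mul_left l he, hm.ne_zero⟩, dvd_mul_right l e⟩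
  have hmul (e : ℕ) (he : e ∈ c.divisors) : (μ (l * e) : ℝ) = μ l * μ e := by
    exact_mod_cast ArithmeticFunction.isMultiplicative_moebius.map_mul_of_coprime
      ((Nat.coprime_of_squarefree_mul hm).coprime_dvd_right (Nat.dvd_of_mem_divisors he))
  rw [himage, sum_image fun x _ y _ h => Nat.eq_of_mul_eq_mul_left (Nat.pos_of_ne_zero hl₀) h,
    sum_congr rfl hmul, ← mul_sum, sum_divisors_moebius]
  simp [hl₀]

open BoundingSieve

/-- The part of Selberg's sum `∑ m ∈ D, g m` coming from the multiples of `d`. -/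
noncomputable def selbergTail (s : BoundingSieve) (D : Finset ℕ) (d : ℕ) : ℝ :=
  ∑ m ∈ D with d ∣ m, s.selbergTerms m

/-- Selberg's optimal weights with support `D`, normalised by `selbergWeight s D 1 = 1`. -/
noncomputable def selbergWeight (s : BoundingSieve) (D : Finset ℕ) (d : ℕ) : ℝ :=
  μ d * (s.nu d)⁻¹ * selbergTail s D d / ∑ m ∈ D, s.selbergTerms m

variable {s : BoundingSieve} {D : Finset ℕ}

theorem sum_selbergTerms_pos (hDP : ∀ d ∈ D, d ∣ s.prodPrimes) (hD₁ : 1 ∈ D) :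
    0 < ∑ m ∈ D, s.selbergTerms m :=
  sum_pos (fun m hm => selbergTerms_pos (hDP m hm)) ⟨1, hD₁⟩

theorem selbergTail_nonneg (hDP : ∀ d ∈ D, d ∣ s.prodPrimes) (d : ℕ) : 0 ≤ selbergTail s D d :=
  sum_nonneg fun m hm => (selbergTerms_pos (hDP m (mem_filter.1 hm).1)).le

theorem selbergWeight_one (hDP : ∀ d ∈ D, d ∣ s.prodPrimes) (hD₁ : 1 ∈ D) :
    selbergWeight s D 1 = 1 := by
  simp [selbergWeight, selbergTail, s.nu_mult.map_one, (sum_selbergTerms_pos hDP hD₁).ne']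

theorem selbergWeight_eq_zero (hD : ∀ d ∈ D, ∀ e, e ∣ d → e ∈ D) {d : ℕ} (hd : d ∉ D) :
    selbergWeight s D d = 0 := by
  have htail : selbergTail s D d = 0 := by
    rw [selbergTail, filter_false_of_mem fun m hm hdm => hd (hD m hm d hdm), sum_empty]
  simp [selbergWeight, htail]

theorem coprime_div_of_squarefree {d m : ℕ} (hm : Squarefree m) (hdm : d ∣ m) :
    (m / d).Coprime d :=
  Nat.coprime_of_squarefree_mul (by rwa [Nat.div_mul_cancel hdm])

-- One recovers `k` from `k * (m / d)` as its gcd with `d`.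
theorem injOn_mul_div (d : ℕ) :
    Set.InjOn (fun x : ℕ × ℕ => x.1 * (x.2 / d)) {x | x.1 ∣ d ∧ d ∣ x.2 ∧ Squarefree x.2} := by
  rintro ⟨k, m⟩ hx ⟨l, n⟩ hy hxy
  obtain ⟨hk, hdm, hm⟩ : k ∣ d ∧ d ∣ m ∧ Squarefree m := hx
  obtain ⟨hl, hdn, hn⟩ : l ∣ d ∧ d ∣ n ∧ Squarefree n := hy
  have hgcd := congrArg (Nat.gcd · d) hxy
  simp only [(coprime_div_of_squarefree hm hdm).gcd_mul_right_cancel,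
    (coprime_div_of_squarefree hn hdn).gcd_mul_right_cancel,
    Nat.gcd_eq_left hk, Nat.gcd_eq_left hl] at hgcd
  subst hgcd
  have hk₀ : 0 < k := Nat.pos_of_dvd_of_pos (hk.trans hdm) (Nat.pos_of_ne_zero hm.ne_zero)
  rw [(Nat.div_left_inj hdm hdn).1 (Nat.eq_of_mul_eq_mul_left hk₀ hxy)]

theorem selbergTerms_mul_div {k d m : ℕ} (hk : k ∣ d) (hdm : d ∣ m) (hm : m ∣ s.prodPrimes) :
    s.selbergTerms (k * (m / d))
      = (s.selbergTerms d)⁻¹ * (s.selbergTerms k * s.selbergTerms m) := by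
  have hcoprime := coprime_div_of_squarefree (squarefree_of_dvd_prodPrimes hm) hdm
  have hgd : s.selbergTerms d ≠ 0 := (selbergTerms_pos (hdm.trans hm)).ne'
  rw [selbergTerms_isMultiplicative.map_mul_of_coprime (hcoprime.coprime_dvd_right hk).symm]
  nth_rw 2 [← Nat.div_mul_cancel hdm]
  rw [selbergTerms_isMultiplicative.map_mul_of_coprime hcoprime]
  field_simp

theorem inv_nu_eq_inv_selbergTerms_mul_sum {d : ℕ} (hd : d ∣ s.prodPrimes) :
    (s.nu d)⁻¹ = (s.selbergTerms d)⁻¹ * ∑ k ∈ d.divisors, s.selbergTerms k := by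
  have h := sum_divisors_selbergTerms_eq_selbergTerms_mul_nu_inv hd
  rw [← sum_filter, Nat.divisors_filter_dvd_of_dvd prodPrimes_ne_zero hd] at h
  rw [h, inv_mul_cancel_left₀ (selbergTerms_pos hd).ne']

theorem inv_nu_mul_selbergTail_le (hDP : ∀ d ∈ D, d ∣ s.prodPrimes)
    (hD : ∀ d ∈ D, ∀ e, e ∣ d → e ∈ D) {d : ℕ} (hd : d ∈ D) :
    (s.nu d)⁻¹ * selbergTail s D d ≤ ∑ m ∈ D, s.selbergTerms m := by
  have hmem {x : ℕ × ℕ} (hx : x ∈ d.divisors ×ˢ {m ∈ D | d ∣ m}) :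
      x.1 ∣ d ∧ x.2 ∈ D ∧ d ∣ x.2 := by
    simp only [mem_product, mem_filter, Nat.mem_divisors] at hx
    exact ⟨hx.1.1, hx.2⟩
  have hinj : Set.InjOn (fun x : ℕ × ℕ => x.1 * (x.2 / d))
      (d.divisors ×ˢ {m ∈ D | d ∣ m} : Finset (ℕ × ℕ)) :=
    (injOn_mul_div d).mono fun x hx => by
      obtain ⟨hk, hm, hdm⟩ := hmem hx
      exact ⟨hk, hdm, squarefree_of_dvd_prodPrimes (hDP _ hm)⟩
  have hterm (x : ℕ × ℕ) (hx : x ∈ d.divisors ×ˢ {m ∈ D | d ∣ m}) :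
      (s.selbergTerms d)⁻¹ * (s.selbergTerms x.1 * s.selbergTerms x.2)
        = s.selbergTerms (x.1 * (x.2 / d)) :=
    have ⟨hk, hm, hdm⟩ := hmem hx
    (selbergTerms_mul_div hk hdm (hDP _ hm)).symm
  rw [inv_nu_eq_inv_selbergTerms_mul_sum (hDP d hd), selbergTail, mul_assoc, sum_mul_sum,
    ← sum_product', mul_sum, sum_congr rfl hterm, ← sum_image hinj]
  refine sum_le_sum_of_subset_of_nonneg ?_ fun m hm _ => (selbergTerms_pos (hDP m hm)).le
  intro n hn
  obtain ⟨x, hx, rfl⟩ := mem_image.1 hn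
  obtain ⟨hk, hm, hdm⟩ := hmem hx
  exact hD _ hm _ ((mul_dvd_mul_right hk _).trans (Nat.mul_div_cancel' hdm).dvd)

theorem abs_selbergWeight_le_one (hDP : ∀ d ∈ D, d ∣ s.prodPrimes)
    (hD : ∀ d ∈ D, ∀ e, e ∣ d → e ∈ D) (hD₁ : 1 ∈ D) (d : ℕ) : |selbergWeight s D d| ≤ 1 := by
  by_cases hd : d ∈ D
  swap
  · simp [selbergWeight_eq_zero hD hd]
  have hG := sum_selbergTerms_pos hDP hD₁
  have hnu : 0 < s.nu d := nu_pos_of_dvd_prodPrimes (hDP d hd)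
  have htail : 0 ≤ (s.nu d)⁻¹ * selbergTail s D d :=
    mul_nonneg (by positivity) (selbergTail_nonneg hDP d)
  have hμ : |(μ d : ℝ)| ≤ 1 := by exact_mod_cast ArithmeticFunction.abs_moebius_le_one
  rw [selbergWeight, abs_div, abs_of_pos hG, div_le_one hG, mul_assoc, abs_mul, abs_of_nonneg htail]
  exact (mul_le_of_le_one_left htail hμ).trans (inv_nu_mul_selbergTail_le hDP hD hd)

theorem sum_nu_mul_selbergWeight (hDP : ∀ d ∈ D, d ∣ s.prodPrimes) (l : ℕ) :
    (∑ d ∈ s.prodPrimes.divisors, if l ∣ d then s.nu d * selbergWeight s D d else 0)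
      = if l ∈ D then μ l * s.selbergTerms l / ∑ m ∈ D, s.selbergTerms m else 0 := by
  have hweight (d : ℕ) (hd : d ∈ s.prodPrimes.divisors) :
      (if l ∣ d then s.nu d * selbergWeight s D d else 0)
        = ∑ m ∈ D, if d ∣ m ∧ l ∣ d then
            μ d * (s.selbergTerms m / ∑ m ∈ D, s.selbergTerms m) else 0 := by
    have hnu : s.nu d ≠ 0 := nu_ne_zero (Nat.dvd_of_mem_divisors hd)
    split_ifs with hld
    · simp only [hld, and_true]
      rw [← sum_filter, ← mul_sum, ← sum_div, selbergWeight, selbergTail]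
      field_simp
    · simp [hld]
  have hmoebius (m : ℕ) (hm : m ∈ D) :
      (∑ d ∈ s.prodPrimes.divisors, if d ∣ m ∧ l ∣ d then
          μ d * (s.selbergTerms m / ∑ m ∈ D, s.selbergTerms m) else 0)
        = if m = l then μ l * s.selbergTerms l / ∑ m ∈ D, s.selbergTerms m else 0 := by
    rw [← sum_filter, ← sum_mul, ← filter_filter,
      Nat.divisors_filter_dvd_of_dvd prodPrimes_ne_zero (hDP m hm),
      sum_moebius_filter_dvd (squarefree_of_dvd_prodPrimes (hDP m hm))]
    split_ifs with hml
    · rw [hml, mul_div_assoc]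
    · rw [zero_mul]
  rw [sum_congr rfl hweight, sum_comm, sum_congr rfl hmoebius, sum_ite_eq']

theorem mainSum_selbergWeight (hDP : ∀ d ∈ D, d ∣ s.prodPrimes) :
    s.mainSum (lambdaSquared (selbergWeight s D)) = (∑ m ∈ D, s.selbergTerms m)⁻¹ := by
  set G := ∑ m ∈ D, s.selbergTerms m with hG
  have hterm (l : ℕ) (hl : l ∈ s.prodPrimes.divisors) :
      (s.selbergTerms l)⁻¹ * (if l ∈ D then μ l * s.selbergTerms l / G else 0) ^ 2
        = if l ∈ D then s.selbergTerms l / G ^ 2 else 0 := by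
    split_ifs with hlD
    · have hg : s.selbergTerms l ≠ 0 := (selbergTerms_pos (hDP l hlD)).ne'
      have hμ : (μ l : ℝ) ^ 2 = 1 := by
        exact_mod_cast ArithmeticFunction.moebius_sq_eq_one_of_squarefree
          (squarefree_of_mem_divisors_prodPrimes hl)
      rw [div_pow, mul_pow, hμ]
      field_simp
    · simp
  have hsub : D ⊆ s.prodPrimes.divisors := fun d hd =>
    Nat.mem_divisors.2 ⟨hDP d hd, prodPrimes_ne_zero⟩
  simp_rw [mainSum_lambdaSquared_eq_sum_mul_sum_sq, sum_nu_mul_selbergWeight hDP, ← hG]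
  rw [sum_congr rfl hterm, sum_ite_mem, inter_eq_right.2 hsub, ← sum_div, ← hG, sq,
    div_self_mul_self']

theorem abs_lambdaSquared_le_card {w : ℕ → ℝ} (hw : ∀ d, |w d| ≤ 1) (hwD : ∀ d ∉ D, w d = 0)
    (d : ℕ) : |lambdaSquared w d| ≤ #{x ∈ D ×ˢ D | x.1.lcm x.2 = d} := by
  have hite (x : ℕ × ℕ) : |if d = x.1.lcm x.2 then w x.1 * w x.2 else 0|
      ≤ if x ∈ {x ∈ D ×ˢ D | x.1.lcm x.2 = d} then 1 else 0 := by
    by_cases hx : x.1 ∈ D ∧ x.2 ∈ D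
    · by_cases hlcm : d = x.1.lcm x.2
      · simpa [hx, ← hlcm, abs_mul] using mul_le_one₀ (hw x.1) (abs_nonneg _) (hw x.2)
      · simp [hlcm, Ne.symm hlcm]
    · have hzero : w x.1 * w x.2 = 0 := by
        rcases not_and_or.1 hx with h | h <;> simp [hwD _ h]
      simp only [hzero, ite_self, abs_zero]
      positivity
  rw [lambdaSquared, ← sum_product']
  refine (abs_sum_le_sum_abs _ _).trans ((sum_le_sum fun x _ => hite x).trans ?_)
  rw [sum_boole]
  exact_mod_cast card_le_card fun x hx => (mem_filter.1 hx).2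

theorem errSum_lambdaSquared_le (hDP : ∀ d ∈ D, d ∣ s.prodPrimes) {w : ℕ → ℝ}
    (hw : ∀ d, |w d| ≤ 1) (hwD : ∀ d ∉ D, w d = 0) :
    s.errSum (lambdaSquared w) ≤ ∑ x ∈ D ×ˢ D, |s.rem (x.1.lcm x.2)| := by
  have hmaps (x : ℕ × ℕ) (hx : x ∈ D ×ˢ D) : x.1.lcm x.2 ∈ s.prodPrimes.divisors :=
    Nat.mem_divisors.2 ⟨Nat.lcm_dvd (hDP _ (mem_product.1 hx).1) (hDP _ (mem_product.1 hx).2),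
      prodPrimes_ne_zero⟩
  rw [errSum, ← sum_fiberwise_of_maps_to hmaps]
  refine sum_le_sum fun d _ => ?_
  rw [sum_congr rfl fun x hx => by rw [(mem_filter.1 hx).2], sum_const, nsmul_eq_mul]
  gcongr
  exact abs_lambdaSquared_le_card hw hwD d

theorem siftedSum_le_totalMass_div_add (hDP : ∀ d ∈ D, d ∣ s.prodPrimes)
    (hD : ∀ d ∈ D, ∀ e, e ∣ d → e ∈ D) (hD₁ : 1 ∈ D) :
    s.siftedSum ≤ s.totalMass / ∑ m ∈ D, s.selbergTerms m
      + ∑ x ∈ D ×ˢ D, |s.rem (x.1.lcm x.2)| := by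
  have h := siftedSum_le_mainSum_errSum_of_upperMoebius (s := s) _
    (upperMoebius_lambdaSquared _ (selbergWeight_one hDP hD₁))
  rw [mainSum_selbergWeight hDP, ← div_eq_mul_inv] at h
  exact h.trans <| add_le_add_right (errSum_lambdaSquared_le hDP
    (abs_selbergWeight_le_one hDP hD hD₁) fun d hd => selbergWeight_eq_zero hD hd) _

end SelbergSieve

section ProgressionSieve

theorem exists_dvd_mul_add_iff_modEq {a l : ℕ} [NeZero l] (hal : a.Coprime l) (r : ℕ) :
    ∃ v, ∀ u, l ∣ a * u + r ↔ u ≡ v [MOD l] := by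
  refine ⟨(-(r : ZMod l) * (a : ZMod l)⁻¹).val, fun u => ?_⟩
  have ha : (a : ZMod l) * (a : ZMod l)⁻¹ = 1 := ZMod.coe_mul_inv_eq_one a hal
  rw [← ZMod.natCast_eq_natCast_iff, ← ZMod.natCast_eq_zero_iff, ZMod.natCast_zmod_val]
  push_cast
  constructor
  · intro h
    linear_combination (a : ZMod l)⁻¹ * h - u * ha
  · rintro h
    rw [h]
    linear_combination -(r : ZMod l) * ha

theorem abs_card_dvd_sub_div_le_one {a l : ℕ} (hl : 0 < l) (hal : a.Coprime l) (r : ℕ) {Y : ℝ}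
    (hY : 0 ≤ Y) :
    |(#{u ∈ range (⌊Y⌋₊ + 1) | l ∣ a * u + r} : ℝ) - Y / l| ≤ 1 := by
  have : NeZero l := ⟨hl.ne'⟩
  obtain ⟨v, hv⟩ := exists_dvd_mul_add_iff_modEq hal r
  set N := ⌊Y⌋₊
  set n := #{u ∈ range (N + 1) | l ∣ a * u + r}
  have hn : n = (N + 1) / l + if v % l < (N + 1) % l then 1 else 0 := by
    simp_rw [n, hv, ← Nat.count_eq_card_filter_range, Nat.count_modEq_card _ hl]
  have hdiv := Nat.div_add_mod' (N + 1) l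
  have hmod := Nat.mod_lt (N + 1) hl
  have hupper : n * l ≤ N + l := by
    rw [hn, add_mul]
    split_ifs <;> omega
  have hlower : N + 1 ≤ (n + 1) * l := by
    rw [hn, add_mul, add_mul]
    split_ifs <;> omega
  have hN := Nat.floor_le hY
  have hN' := Nat.lt_floor_add_one Y
  have hl₀ : (0 : ℝ) < l := by exact_mod_cast hl
  have hupper' : (n : ℝ) * l ≤ N + l := by exact_mod_cast hupper
  have hlower' : (N : ℝ) + 1 ≤ (n + 1) * l := by exact_mod_cast hlower
  rw [abs_sub_le_iff, sub_le_iff_le_add', sub_le_iff_le_add', div_le_iff₀ hl₀, div_add_one hl₀.ne',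
    le_div_iff₀ hl₀]
  constructor <;> linarith

theorem one_mem_coprimeSquarefree {a Q : ℕ} (hQ : 1 ≤ Q) : 1 ∈ coprimeSquarefree a Q :=
  mem_coprimeSquarefree.2 ⟨⟨le_rfl, hQ⟩, squarefree_one, a.coprime_one_left⟩

theorem mem_coprimeSquarefree_of_dvd {a Q d e : ℕ} (hd : d ∈ coprimeSquarefree a Q) (he : e ∣ d) :
    e ∈ coprimeSquarefree a Q := by
  obtain ⟨⟨hd₁, hdQ⟩, hsq, hda⟩ := mem_coprimeSquarefree.1 hd
  exact mem_coprimeSquarefree.2 ⟨⟨Nat.pos_of_dvd_of_pos he hd₁, (Nat.le_of_dvd hd₁ he).trans hdQ⟩,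
    hsq.squarefree_of_dvd he, hda.coprime_dvd_left he⟩

theorem card_coprimeSquarefree_le (a Q : ℕ) : #(coprimeSquarefree a Q) ≤ Q - Q / 4 := by
  have hsub : coprimeSquarefree a Q ⊆ Ioc 0 Q \ {q ∈ Ioc 0 Q | 4 ∣ q} := by
    intro q hq
    obtain ⟨⟨hq₁, hqQ⟩, hsq, -⟩ := mem_coprimeSquarefree.1 hq
    simp only [mem_sdiff, mem_filter, mem_Ioc, not_and]
    exact ⟨⟨hq₁, hqQ⟩, fun _ h4 => by simpa using hsq 2 h4⟩
  refine (card_le_card hsub).trans ?_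
  rw [card_sdiff_of_subset (filter_subset _ _), Nat.Ioc_filter_dvd_card_eq_div, Nat.card_Ioc,
    Nat.sub_zero]

theorem dvd_coprimeRadical_primorial {a Q d : ℕ} (hd : d ∈ coprimeSquarefree a Q) :
    d ∣ coprimeRadical a (primorial Q) := by
  obtain ⟨⟨-, hdQ⟩, hsq, hda⟩ := mem_coprimeSquarefree.1 hd
  rw [← Nat.prod_primeFactors_of_squarefree hsq, coprimeRadical, primeFactors_primorial]
  refine prod_dvd_prod_of_subset _ _ _ (subset_sdiff.2 ⟨fun p hp => ?_, hda.disjoint_primeFactors⟩)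
  exact Nat.mem_primesLE.2 ⟨(Nat.le_of_mem_primeFactors hp).trans hdQ,
    Nat.prime_of_mem_primeFactors hp⟩

/-- The sieve problem for the terms `a * u + r`, `0 ≤ u ≤ Y`, of an arithmetic progression, sifted
by the primes up to `Q` that do not divide the difference `a`. -/
noncomputable def progressionSieve (a r Q : ℕ) (Y : ℝ) : BoundingSieve where
  support := (range (⌊Y⌋₊ + 1)).image (a * · + r)
  prodPrimes := coprimeRadical a (primorial Q)
  prodPrimes_squarefree := squarefree_coprimeRadical a _
  weights _ := 1
  weights_nonneg _ := zero_le_one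
  totalMass := Y
  nu := ⟨fun d => (d : ℝ)⁻¹, by simp⟩
  nu_mult := ⟨by simp, fun {m n} _ => by simp [mul_comm]⟩
  nu_pos_of_prime p hp _ := inv_pos.2 (by exact_mod_cast hp.pos)
  nu_lt_one_of_prime p hp _ := inv_lt_one_of_one_lt₀ (by exact_mod_cast hp.one_lt)

variable {a : ℕ} (r Q : ℕ)

theorem selbergTerms_progressionSieve (Y : ℝ) (d : ℕ) :
    (progressionSieve a r Q Y).selbergTerms d = (d.totient : ℝ)⁻¹ := by
  rw [BoundingSieve.selbergTerms_apply, totient_eq_mul_prod_one_sub_inv, mul_inv,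
    prod_inv_distrib]
  rfl

theorem abs_rem_progressionSieve_le_one (ha : a ≠ 0) {Y : ℝ} (hY : 0 ≤ Y) {d : ℕ} (hd : 0 < d)
    (had : a.Coprime d) : |(progressionSieve a r Q Y).rem d| ≤ 1 := by
  have hmultSum : (progressionSieve a r Q Y).multSum d
      = #{u ∈ range (⌊Y⌋₊ + 1) | d ∣ a * u + r} := by
    rw [BoundingSieve.multSum, progressionSieve, sum_image fun u _ v _ h => by simpa [ha] using h,
      sum_boole]
  rw [BoundingSieve.rem, hmultSum]
  convert abs_card_dvd_sub_div_le_one hd had r hY using 3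
  exact (div_eq_inv_mul Y d).symm

variable {r Q}

theorem card_prime_le_siftedSum_progressionSieve (ha : a ≠ 0) (hr : Q < r) (Y : ℝ) :
    #{u ∈ range (⌊Y⌋₊ + 1) | (a * u + r).Prime} ≤ (progressionSieve a r Q Y).siftedSum := by
  rw [BoundingSieve.siftedSum, progressionSieve, sum_image fun u _ v _ h => by simpa [ha] using h,
    sum_boole]
  refine Nat.cast_le.2 (card_le_card fun u hu => ?_)
  obtain ⟨hu, hprime⟩ := mem_filter.1 hu
  refine mem_filter.2 ⟨hu, ((Nat.Prime.coprime_iff_not_dvd hprime).2 fun hdvd => ?_).symm⟩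
  have hQ := (Nat.Prime.dvd_primorial_iff hprime).1 (hdvd.trans (coprimeRadical_dvd a _))
  omega

theorem card_prime_progression_le (ha : a ≠ 0) (hQ : 1 ≤ Q) (hr : Q < r) {Y : ℝ} (hY : 0 ≤ Y) :
    #{u ∈ range (⌊Y⌋₊ + 1) | (a * u + r).Prime}
      ≤ Y / ∑ q ∈ coprimeSquarefree a Q, (q.totient : ℝ)⁻¹
        + (#(coprimeSquarefree a Q) : ℝ) ^ 2 := by
  set D := coprimeSquarefree a Q
  have hrem (x : ℕ × ℕ) (hx : x ∈ D ×ˢ D) :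
      |(progressionSieve a r Q Y).rem (x.1.lcm x.2)| ≤ 1 := by
    obtain ⟨⟨hd₁, -⟩, -, hda⟩ := mem_coprimeSquarefree.1 (mem_product.1 hx).1
    obtain ⟨⟨he₁, -⟩, -, hea⟩ := mem_coprimeSquarefree.1 (mem_product.1 hx).2
    exact abs_rem_progressionSieve_le_one r Q ha hY (Nat.lcm_pos hd₁ he₁)
      ((hda.symm.mul_right hea.symm).coprime_dvd_right (Nat.lcm_dvd_mul _ _))
  have hselberg := siftedSum_le_totalMass_div_add (s := progressionSieve a r Q Y) (D := D)
    (fun d hd => dvd_coprimeRadical_primorial hd)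
    (fun d hd e he => mem_coprimeSquarefree_of_dvd hd he) (one_mem_coprimeSquarefree hQ)
  simp only [selbergTerms_progressionSieve] at hselberg
  refine (card_prime_le_siftedSum_progressionSieve ha hr Y).trans (hselberg.trans ?_)
  refine add_le_add_right ((sum_le_card_nsmul _ _ _ hrem).trans_eq ?_) _
  rw [card_product, nsmul_one, Nat.cast_mul, sq]

end ProgressionSieve

section CoprimeSum

theorem sum_coprime_eq_sum_moebius {n : ℕ} (hn : n ≠ 0) (A : Finset ℕ) (f : ℕ → ℝ) :
    ∑ v ∈ A with v.Coprime n, f v = ∑ d ∈ n.divisors, μ d * ∑ v ∈ A with d ∣ v, f v := by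
  have hindicator (v : ℕ) :
      (if v.Coprime n then f v else 0) = ∑ d ∈ n.divisors, if d ∣ v then μ d * f v else 0 := by
    have hgcd : {d ∈ n.divisors | d ∣ v} = (v.gcd n).divisors := by
      ext d
      simp [Nat.dvd_gcd_iff, hn, and_comm]
    rw [← sum_filter, hgcd, ← sum_mul, sum_divisors_moebius, ite_mul, one_mul, zero_mul]
  simp_rw [mul_sum, sum_filter, hindicator]
  exact sum_comm

theorem abs_sum_sub_le {y : ℝ} (hy : 0 ≤ y) :
    |∑ m ∈ Icc 1 ⌊y⌋₊, (y - m) - (y ^ 2 / 2 - y / 4)| ≤ y / 4 := by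
  have hsum (M : ℕ) : ∑ m ∈ Icc 1 M, (y - m) = M * y - M * (M + 1) / 2 := by
    induction M with
    | zero => simp
    | succ n ih =>
      rw [sum_Icc_succ_top (by omega), ih]
      push_cast
      ring
  have hfloor := Nat.floor_le hy
  have hfloor' := Nat.lt_floor_add_one y
  have : (0 : ℝ) ≤ ⌊y⌋₊ := Nat.cast_nonneg _
  rw [hsum, abs_le]
  constructor <;> nlinarith

theorem sum_filter_dvd_eq_mul_sum {d : ℕ} (hd : 0 < d) (V : ℝ) :
    ∑ v ∈ Icc 1 ⌊V⌋₊ with d ∣ v, (V - v) = d * ∑ m ∈ Icc 1 ⌊V / d⌋₊, (V / d - m) := by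
  have hd₀ : (d : ℝ) ≠ 0 := by exact_mod_cast hd.ne'
  have himage : {v ∈ Icc 1 ⌊V⌋₊ | d ∣ v} = (Icc 1 ⌊V / d⌋₊).image (d * ·) := by
    ext v
    simp only [mem_filter, mem_Icc, mem_image, Nat.floor_div_natCast, Nat.le_div_iff_mul_le hd]
    constructor
    · rintro ⟨⟨hv₁, hvV⟩, m, rfl⟩
      exact ⟨m, ⟨Nat.pos_of_mul_pos_left hv₁, by rwa [mul_comm]⟩, rfl⟩
    · rintro ⟨m, ⟨hm₁, hmV⟩, rfl⟩
      exact ⟨⟨Nat.mul_pos hd hm₁, by rwa [mul_comm]⟩, dvd_mul_right d m⟩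
  rw [himage, sum_image fun m _ n _ h => Nat.eq_of_mul_eq_mul_left hd h, mul_sum]
  refine sum_congr rfl fun m _ => ?_
  push_cast
  field_simp

theorem abs_sum_filter_dvd_sub_le {d : ℕ} (hd : 0 < d) {V : ℝ} (hV : 0 ≤ V) :
    |∑ v ∈ Icc 1 ⌊V⌋₊ with d ∣ v, (V - v) - (V ^ 2 / 2 * (d : ℝ)⁻¹ - V / 4)| ≤ V / 4 := by
  have hd₀ : (0 : ℝ) < d := by exact_mod_cast hd
  have hscale : ∑ v ∈ Icc 1 ⌊V⌋₊ with d ∣ v, (V - v) - (V ^ 2 / 2 * (d : ℝ)⁻¹ - V / 4)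
      = d * (∑ m ∈ Icc 1 ⌊V / d⌋₊, (V / d - m) - ((V / d) ^ 2 / 2 - V / d / 4)) := by
    rw [sum_filter_dvd_eq_mul_sum hd]
    field_simp
  rw [hscale, abs_mul, abs_of_pos hd₀]
  calc d * |∑ m ∈ Icc 1 ⌊V / d⌋₊, (V / d - m) - ((V / d) ^ 2 / 2 - V / d / 4)|
      ≤ d * (V / d / 4) := by gcongr; exact abs_sum_sub_le (by positivity)
    _ = V / 4 := by field_simp

theorem totient_div_eq_sum_moebius {n : ℕ} (hn : Squarefree n) :
    (n.totient / n : ℝ) = ∑ d ∈ n.divisors, μ d * (d : ℝ)⁻¹ := by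
  have hn₀ : (n : ℝ) ≠ 0 := by exact_mod_cast hn.ne_zero
  let inv : ArithmeticFunction ℝ := ⟨fun d => (d : ℝ)⁻¹, by simp⟩
  have hinv : inv.IsMultiplicative := ⟨by simp [inv], fun {m n} _ => by simp [inv, mul_comm]⟩
  rw [totient_eq_mul_prod_one_sub_inv, mul_div_cancel_left₀ _ hn₀]
  exact hinv.prodPrimeFactors_one_sub_of_squarefree _ hn

theorem card_divisors_of_squarefree {n : ℕ} (hn : Squarefree n) :
    #n.divisors = 2 ^ #n.primeFactors := by
  have h := ArithmeticFunction.isMultiplicative_zeta.prodPrimeFactors_one_add_of_squarefree hn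
  rw [prod_congr rfl fun p hp => by
      rw [ArithmeticFunction.zeta_apply_ne (Nat.prime_of_mem_primeFactors hp).ne_zero],
    prod_const, sum_congr rfl fun d hd => ArithmeticFunction.zeta_apply_ne
      (Nat.pos_of_mem_divisors hd).ne', sum_const, smul_eq_mul, mul_one] at h
  exact h.symm

theorem sum_coprime_sub_le_of_squarefree {n : ℕ} (hn : Squarefree n) (hn₁ : n ≠ 1) {V : ℝ}
    (hV : 0 ≤ V) :
    ∑ v ∈ Icc 1 ⌊V⌋₊ with v.Coprime n, (V - v)
      ≤ V ^ 2 / 2 * (n.totient / n) + 2 ^ #n.primeFactors * (V / 4) := by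
  have hterm (d : ℕ) (hd : d ∈ n.divisors) :
      μ d * ∑ v ∈ Icc 1 ⌊V⌋₊ with d ∣ v, (V - v)
        ≤ V ^ 2 / 2 * (μ d * (d : ℝ)⁻¹) - V / 4 * μ d + V / 4 := by
    have hμ : |(μ d : ℝ)| ≤ 1 := by exact_mod_cast ArithmeticFunction.abs_moebius_le_one
    have h := mul_le_mul hμ (abs_sum_filter_dvd_sub_le (Nat.pos_of_mem_divisors hd) hV)
      (abs_nonneg _) zero_le_one
    rw [← abs_mul, one_mul] at h
    linarith [le_of_abs_le h]
  rw [sum_coprime_eq_sum_moebius hn.ne_zero]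
  refine (sum_le_sum hterm).trans_eq ?_
  rw [sum_add_distrib, sum_sub_distrib, ← mul_sum, ← mul_sum, ← totient_div_eq_sum_moebius hn,
    sum_divisors_moebius, if_neg hn₁, sum_const, card_divisors_of_squarefree hn, nsmul_eq_mul]
  push_cast
  ring

theorem sum_coprime_sub_le {a : ℕ} (ha : 1 < a) {V : ℝ} (hV : 0 ≤ V) :
    ∑ v ∈ Icc 1 ⌊V⌋₊ with v.Coprime a, (V - v)
      ≤ V ^ 2 / 2 * (a.totient / a) + 2 ^ #a.primeFactors * (V / 4) := by
  have hcoprime (v : ℕ) (hv : v ∈ Icc 1 ⌊V⌋₊) :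
      v.Coprime a ↔ v.Coprime (UniqueFactorizationMonoid.radical a) := by
    have hv₀ : v ≠ 0 := by grind
    rw [← Nat.disjoint_primeFactors hv₀ (by omega), ← Nat.disjoint_primeFactors hv₀
      (Nat.radical_pos a).ne', Nat.primeFactors_radical]
  have htotient : (a.totient / a : ℝ) = (UniqueFactorizationMonoid.radical a).totient
      / (UniqueFactorizationMonoid.radical a : ℕ) := by
    have ha₀ : (a : ℝ) ≠ 0 := by positivity
    have hrad : ((UniqueFactorizationMonoid.radical a : ℕ) : ℝ) ≠ 0 := by
      exact_mod_cast (Nat.radical_pos a).ne'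
    rw [totient_eq_mul_prod_one_sub_inv, totient_eq_mul_prod_one_sub_inv, Nat.primeFactors_radical,
      mul_div_cancel_left₀ _ ha₀, mul_div_cancel_left₀ _ hrad]
  rw [filter_congr hcoprime, htotient, ← Nat.primeFactors_radical a]
  exact sum_coprime_sub_le_of_squarefree UniqueFactorizationMonoid.squarefree_radical
    (Nat.one_lt_radical_iff.2 ha).ne' hV

end CoprimeSum

section TwoPowOmega

/-- The factor at `p` in the bound `(2 ^ ω(n) * n / φ(n)) ^ 3 ≤ C * n`: the least `w ≥ 1`, up to
rounding, such that `(2 * p / (p - 1)) ^ 3 ≤ w * p`. Only `p ≤ 7` need `w > 1`. -/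
noncomputable def localWeight (p : ℕ) : ℝ :=
  if p = 2 then 32 else if p = 3 then 9 else if p = 5 then 3.125 else if p = 7 then 1.8149 else 1

theorem one_le_localWeight (p : ℕ) : 1 ≤ localWeight p := by
  unfold localWeight
  split_ifs <;> norm_num

theorem two_mul_inv_pow_three_le {p : ℕ} (hp : p.Prime) :
    (2 * (1 - (p : ℝ)⁻¹)⁻¹) ^ 3 ≤ localWeight p * p := by
  unfold localWeight
  split_ifs with h2 h3 h5 h7
  · norm_num [h2]
  · norm_num [h3]
  · norm_num [h5]
  · norm_num [h7]
  · have h11 : 11 ≤ p := by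
      by_contra! hlt
      interval_cases p <;> revert hp <;> first | contradiction | decide
    have hp₁₁ : (11 : ℝ) ≤ p := by exact_mod_cast h11
    have hinv : (p : ℝ)⁻¹ ≤ 11⁻¹ := by gcongr
    have hpos : 0 < 1 - (p : ℝ)⁻¹ := by linarith
    calc (2 * (1 - (p : ℝ)⁻¹)⁻¹) ^ 3 ≤ (2 * (1 - (11 : ℝ)⁻¹)⁻¹) ^ 3 := by
          gcongr
      _ ≤ 11 := by norm_num
      _ ≤ 1 * p := by simpa using hp₁₁

theorem prod_localWeight_le (P : Finset ℕ) : ∏ p ∈ P, localWeight p ≤ 1634 := by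
  have hne_one (p : ℕ) (hp : localWeight p ≠ 1) : p ∈ ({2, 3, 5, 7} : Finset ℕ) := by
    unfold localWeight at hp
    grind
  calc ∏ p ∈ P, localWeight p = ∏ p ∈ P with localWeight p ≠ 1, localWeight p :=
        (prod_filter_ne_one P).symm
    _ ≤ ∏ p ∈ {2, 3, 5, 7}, localWeight p :=
        prod_le_prod_of_subset_of_one_le (fun p hp => hne_one p (mem_filter.1 hp).2)
          (fun p _ => zero_le_one.trans (one_le_localWeight p))
          fun p _ _ => one_le_localWeight p
    _ ≤ 1634 := by norm_num [localWeight]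

theorem two_pow_card_primeFactors_mul_pow_three_le {n : ℕ} (hn : n ≠ 0) :
    (2 ^ #n.primeFactors * (n / n.totient : ℝ)) ^ 3 ≤ 1634 * n := by
  have hn₀ : (n : ℝ) ≠ 0 := by exact_mod_cast hn
  have hprod : 2 ^ #n.primeFactors * (n / n.totient : ℝ)
      = ∏ p ∈ n.primeFactors, 2 * (1 - (p : ℝ)⁻¹)⁻¹ := by
    rw [totient_eq_mul_prod_one_sub_inv, div_mul_cancel_left₀ hn₀, prod_mul_distrib, prod_const,
      prod_inv_distrib]
  have hrad : ∏ p ∈ n.primeFactors, (p : ℝ) ≤ n := by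
    rw [← Nat.cast_prod]
    exact_mod_cast Nat.le_of_dvd (Nat.pos_of_ne_zero hn) (Nat.prod_primeFactors_dvd n)
  have hnonneg (p : ℕ) : 0 ≤ (2 * (1 - (p : ℝ)⁻¹)⁻¹) ^ 3 := by
    have := Nat.cast_inv_le_one (α := ℝ) p
    have : 0 ≤ 1 - (p : ℝ)⁻¹ := by linarith
    positivity
  rw [hprod, ← prod_pow]
  calc ∏ p ∈ n.primeFactors, (2 * (1 - (p : ℝ)⁻¹)⁻¹) ^ 3
      ≤ ∏ p ∈ n.primeFactors, localWeight p * p :=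
        prod_le_prod (fun p _ => hnonneg p) fun p hp =>
          two_mul_inv_pow_three_le (Nat.prime_of_mem_primeFactors hp)
    _ = (∏ p ∈ n.primeFactors, localWeight p) * ∏ p ∈ n.primeFactors, (p : ℝ) :=
        prod_mul_distrib
    _ ≤ 1634 * n := by
        gcongr
        exact prod_localWeight_le _

end TwoPowOmega

section RepresentablePrimes

open Classical in
/-- The primes `p ≤ N` lying in the numerical semigroup `⟨a, b⟩`. -/
noncomputable def representablePrimes (a b N : ℕ) : Finset ℕ :=
  {p ∈ Nat.primesLE N | ∃ u v : ℕ, p = a * u + b * v}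

theorem mem_representablePrimes {a b N p : ℕ} :
    p ∈ representablePrimes a b N ↔ (p ≤ N ∧ p.Prime) ∧ ∃ u v : ℕ, p = a * u + b * v := by
  classical
  rw [representablePrimes, mem_filter, Nat.mem_primesLE]

theorem finite_not_representable {a b : ℕ} (h : a.Coprime b) :
    {p : ℕ | p.Prime ∧ ¬∃ u v : ℕ, p = a * u + b * v}.Finite := by
  refine (Set.finite_lt_nat ((a - 1) * (b - 1))).subset fun p ⟨_, hp⟩ => ?_
  by_contra hge
  obtain ⟨u, v, huv⟩ := Nat.exists_add_mul_eq_of_gcd_dvd_of_mul_pred_le a b p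
    (by simp [h.gcd_eq_one]) (not_lt.1 hge)
  exact hp ⟨u, v, by rw [← huv]; ring⟩

theorem primeCounting_le_piStar_add {a b : ℕ} (h : a.Coprime b) (N : ℕ) :
    Nat.primeCounting N ≤ piStar a b + #(representablePrimes a b N) := by
  classical
  have hnot : #{p ∈ Nat.primesLE N | ¬∃ u v : ℕ, p = a * u + b * v} ≤ piStar a b := by
    rw [← Set.ncard_coe_finset]
    refine Set.ncard_le_ncard (fun p hp => ?_) (finite_not_representable h)
    obtain ⟨hp, hrep⟩ := mem_filter.1 (mem_coe.1 hp)
    exact ⟨(Nat.mem_primesLE.1 hp).2, hrep⟩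
  have hsplit := card_filter_add_card_filter_not (s := Nat.primesLE N)
    (fun p => ∃ u v : ℕ, p = a * u + b * v)
  rw [Nat.primesLE_card_eq_primeCounting] at hsplit
  rw [← hsplit, add_comm, representablePrimes]
  gcongr

theorem coprime_of_prime_mul_add_mul {a b u v : ℕ} (hb : 1 < b) (hv : 0 < v)
    (hp : (a * u + b * v).Prime) : v.Coprime a := by
  have hdvd : v.gcd a ∣ a * u + b * v :=
    dvd_add ((Nat.gcd_dvd_right v a).mul_right u) ((Nat.gcd_dvd_left v a).mul_left b)
  refine ((Nat.dvd_prime hp).1 hdvd).resolve_right fun hgcd => ?_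
  have hle := Nat.gcd_le_left a hv
  nlinarith

/-- The `u` for which `a * u + b * v` is a prime at most `a * b / 7`: the latter condition reads
`u ≤ b / a * (a / 7 - v)`. -/
noncomputable def primeRow (a b v : ℕ) : Finset ℕ :=
  {u ∈ range (⌊(b / a * (a / 7 - v) : ℝ)⌋₊ + 1) | (a * u + b * v).Prime}

variable {a b : ℕ}

theorem representablePrimes_subset (ha : 1 < a) (hb : 1 < b) :
    representablePrimes a b ⌊(a * b / 7 : ℝ)⌋₊
      ⊆ {a} ∪ {v ∈ Icc 1 ⌊(a / 7 : ℝ)⌋₊ | v.Coprime a}.biUnion fun v =>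
        (primeRow a b v).image (a * · + b * v) := by
  have ha₀ : (0 : ℝ) < a := by positivity
  have hb₀ : (0 : ℝ) < b := by positivity
  intro p hp
  obtain ⟨⟨hpN, hprime⟩, u, v, rfl⟩ := mem_representablePrimes.1 hp
  rw [mem_union, mem_singleton, mem_biUnion]
  obtain rfl | hv := v.eq_zero_or_pos
  · left
    rw [mul_zero, add_zero] at hprime ⊢
    obtain ⟨-, rfl⟩ | ⟨-, ha₁⟩ := Nat.prime_mul_iff.1 hprime
    · rw [mul_one]
    · omega
  right
  have hle : (a * u + b * v : ℝ) ≤ a * b / 7 := by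
    exact_mod_cast (Nat.le_floor_iff (by positivity)).1 hpN
  have hvV : (v : ℝ) ≤ a / 7 := by
    rw [le_div_iff₀ (by norm_num)]
    nlinarith [mul_nonneg ha₀.le u.cast_nonneg (α := ℝ)]
  have hu : (u : ℝ) ≤ b / a * (a / 7 - v) := by
    rw [div_mul_eq_mul_div, le_div_iff₀ ha₀]
    linarith
  refine ⟨v, mem_filter.2 ⟨mem_Icc.2 ⟨hv, Nat.le_floor hvV⟩,
    coprime_of_prime_mul_add_mul hb hv hprime⟩, mem_image.2 ⟨u, mem_filter.2 ⟨?_, hprime⟩, rfl⟩⟩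
  exact mem_range.2 (Nat.lt_succ_of_le (Nat.le_floor hu))

theorem card_representablePrimes_le_sum (ha : 1 < a) (hb : 1 < b) :
    #(representablePrimes a b ⌊(a * b / 7 : ℝ)⌋₊)
      ≤ 1 + ∑ v ∈ Icc 1 ⌊(a / 7 : ℝ)⌋₊ with v.Coprime a, #(primeRow a b v) := by
  refine (card_le_card (representablePrimes_subset ha hb)).trans ((card_union_le _ _).trans ?_)
  rw [card_singleton]
  gcongr
  exact card_biUnion_le.trans (sum_le_sum fun v _ => card_image_le)

theorem inv_sum_inv_totient_le (ha : a ≠ 0) {Q : ℕ} (hQ : 1 ≤ Q) :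
    (∑ q ∈ coprimeSquarefree a Q, (q.totient : ℝ)⁻¹)⁻¹ ≤ a / a.totient / harmonic Q := by
  have hsum : 0 < ∑ q ∈ coprimeSquarefree a Q, (q.totient : ℝ)⁻¹ :=
    sum_pos' (fun q _ => by positivity) ⟨1, one_mem_coprimeSquarefree hQ, by simp⟩
  have hharmonic : (0 : ℝ) < harmonic Q := by exact_mod_cast harmonic_pos (by omega)
  rw [inv_le_iff_one_le_mul₀ hsum, div_mul_eq_mul_div, one_le_div₀ hharmonic]
  exact harmonic_le_mul_sum_inv_totient ha Q

theorem card_primeRow_le (ha : a ≠ 0) {v Q : ℕ} (hQ : 1 ≤ Q) (hQb : Q < b) (hv : 1 ≤ v)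
    (hva : (v : ℝ) ≤ a / 7) :
    #(primeRow a b v) ≤ b / a * (a / 7 - v) * (a / a.totient / harmonic Q)
      + ((Q - Q / 4 : ℕ) : ℝ) ^ 2 := by
  have hY : (0 : ℝ) ≤ b / a * (a / 7 - v) := mul_nonneg (by positivity) (sub_nonneg.2 hva)
  refine (card_prime_progression_le ha hQ (hQb.trans_le (Nat.le_mul_of_pos_right b hv)) hY).trans ?_
  rw [div_eq_mul_inv]
  gcongr
  · exact inv_sum_inv_totient_le ha hQ
  · exact card_coprimeSquarefree_le a Q

theorem card_representablePrimes_le (ha : 1 < a) {Q : ℕ} (hQ : 1 ≤ Q) (hQb : Q < b) :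
    #(representablePrimes a b ⌊(a * b / 7 : ℝ)⌋₊)
      ≤ 1 + b / a * ((a / 7) ^ 2 / 2 + 2 ^ #a.primeFactors * (a / a.totient) * (a / 7 / 4))
        / harmonic Q + a / 7 * ((Q - Q / 4 : ℕ) : ℝ) ^ 2 := by
  set W := {v ∈ Icc 1 ⌊(a / 7 : ℝ)⌋₊ | v.Coprime a}
  have hV : (0 : ℝ) ≤ a / 7 := by positivity
  have hφ : (a.totient : ℝ) ≠ 0 := by exact_mod_cast (Nat.totient_pos.2 (by omega)).ne'
  have hrow (v : ℕ) (hv : v ∈ W) : (#(primeRow a b v) : ℝ)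
      ≤ b / a * (a / 7 - v) * (a / a.totient / harmonic Q) + ((Q - Q / 4 : ℕ) : ℝ) ^ 2 := by
    obtain ⟨hv₁, hvV⟩ := mem_Icc.1 (mem_filter.1 hv).1
    exact card_primeRow_le (by omega) hQ hQb hv₁ ((Nat.le_floor_iff hV).1 hvV)
  have hW : (#W : ℝ) ≤ a / 7 := by
    refine (Nat.cast_le.2 (card_filter_le _ _)).trans ?_
    simpa using Nat.floor_le hV
  have hharmonic : (0 : ℝ) ≤ harmonic Q := by exact_mod_cast (harmonic_pos (by omega)).le
  calc (#(representablePrimes a b ⌊(a * b / 7 : ℝ)⌋₊) : ℝ)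
      ≤ 1 + ∑ v ∈ W, (#(primeRow a b v) : ℝ) := by
        exact_mod_cast card_representablePrimes_le_sum ha (by omega)
    _ ≤ 1 + ∑ v ∈ W, (b / a * (a / 7 - v) * (a / a.totient / harmonic Q)
          + ((Q - Q / 4 : ℕ) : ℝ) ^ 2) := by gcongr with v hv; exact hrow v hv
    _ = 1 + b / a * (∑ v ∈ W, (a / 7 - v : ℝ)) * (a / a.totient / harmonic Q)
          + #W * ((Q - Q / 4 : ℕ) : ℝ) ^ 2 := by
        rw [sum_add_distrib, ← sum_mul, ← mul_sum, sum_const, nsmul_eq_mul, add_assoc]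
    _ ≤ 1 + b / a * ((a / 7) ^ 2 / 2 * (a.totient / a) + 2 ^ #a.primeFactors * (a / 7 / 4))
          * (a / a.totient / harmonic Q) + a / 7 * ((Q - Q / 4 : ℕ) : ℝ) ^ 2 := by
        gcongr
        exact sum_coprime_sub_le ha hV
    _ = _ := by
        have : (a : ℝ) ≠ 0 := by positivity
        field_simp

end RepresentablePrimes

section Numerics

theorem le_log_seven : 1.945 ≤ log 7 := by
  have h := log_le_log (by norm_num) (by norm_num : (2 : ℝ) ^ 87 ≤ 7 ^ 31)
  rw [log_pow, log_pow] at h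
  push_cast at h
  linarith [log_two_gt_d9]

theorem le_log_two_fifths : -0.917 ≤ log 0.4 := by
  rw [show (0.4 : ℝ) = 2 / 5 by norm_num, log_div (by norm_num) (by norm_num)]
  linarith [log_two_gt_d9, log_five_lt_d9]

theorem log_four_le : log 4 ≤ 1.386295 := by
  rw [show (4 : ℝ) = 2 ^ 2 by norm_num, log_pow]
  push_cast
  linarith [log_two_lt_d9]

theorem le_log_of_sq_le {x : ℝ} (hx : 60000 ^ 2 ≤ x) : 22 ≤ log x := by
  rw [le_log_iff_exp_le (by linarith)]
  calc exp 22 = exp 1 ^ 22 := by rw [← exp_nat_mul]; norm_num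
    _ ≤ 2.7182818286 ^ 22 := by gcongr; exact exp_one_lt_d9.le
    _ ≤ x := by linarith

theorem mul_sq_le_exp {w : ℝ} (hw : 11 / 3 ≤ w) : 2.85 * w ^ 2 ≤ exp w := by
  have hexp : 39 ≤ exp (11 / 3) := by
    refine le_of_pow_le_pow_left₀ three_ne_zero (exp_pos _).le ?_
    calc (39 : ℝ) ^ 3 ≤ 2.7182818283 ^ 11 := by norm_num
      _ ≤ exp 1 ^ 11 := by gcongr; exact exp_one_gt_d9.le
      _ = exp (11 / 3) ^ 3 := by rw [← exp_nat_mul, ← exp_nat_mul]; norm_num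
  have hs : 0 ≤ w - 11 / 3 := by linarith
  calc 2.85 * w ^ 2 ≤ 39 * (1 + (w - 11 / 3) + (w - 11 / 3) ^ 2 / 2) := by nlinarith
    _ ≤ exp (11 / 3) * exp (w - 11 / 3) := by gcongr; exact quadratic_le_exp_of_nonneg hs
    _ = exp w := by rw [← exp_add, add_sub_cancel]

theorem density_inequality {T : ℝ} (hT : 22 ≤ T) :
    1.027 / 98 / (T / 6 - 0.372) + 0.1857 / T ^ 2 + 0.0445 * (1.386295 * (1 / T + 1.3 / T ^ 2))
      < 0.921 / 7 / (T - 1.945) := by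
  have hT₀ : 0 < T := by linarith
  have hsieve : 1.027 / 98 / (T / 6 - 0.372) ≤ 0.06288 / (T - 2.232) := by
    rw [div_div, div_le_div_iff₀ (by linarith) (by linarith)]
    linarith
  have hlower : 0.1857 / T ^ 2 + 0.0445 * (1.386295 * (1 / T + 1.3 / T ^ 2))
      ≤ (0.0617 * T + 0.266) / T ^ 2 := by
    rw [le_div_iff₀ (by positivity)]
    field_simp
    linarith
  have hclear : 0.06288 / (T - 2.232) + (0.0617 * T + 0.266) / T ^ 2
      < 0.921 / 7 / (T - 1.945) := by
    have hsub : 0 < T - 2.232 := by linarith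
    have hsub' : 0 < T - 1.945 := by linarith
    obtain ⟨t, rfl⟩ : ∃ t, T = 22 + t := ⟨T - 22, by ring⟩
    have ht : 0 ≤ t := by linarith
    rw [div_add_div _ _ hsub.ne' (by positivity), div_lt_div_iff₀ (by positivity) hsub']
    nlinarith [pow_nonneg ht 2, pow_nonneg ht 3]
  linarith

theorem log_sub_le_harmonic_floor {β : ℝ} (hβ : 37.5 ≤ β) :
    log β - 0.372 ≤ harmonic ⌊0.4 * β⌋₊ := by
  have hlog : log 0.4 + log β ≤ log (⌊0.4 * β⌋₊ + 1) := by
    rw [← log_mul (by norm_num) (by linarith)]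
    exact log_le_log (by linarith) (Nat.lt_floor_add_one _).le
  have hharmonic := log_add_le_harmonic (Nat.le_floor (by push_cast; linarith : (15 : ℕ) ≤ 0.4 * β))
  linarith [le_log_two_fifths]

theorem floor_sub_floor_div_four_le {β : ℝ} (hβ : 37.5 ≤ β) :
    ((⌊0.4 * β⌋₊ - ⌊0.4 * β⌋₊ / 4 : ℕ) : ℝ) ≤ 0.32 * β := by
  have hfloor := Nat.floor_le (by linarith : 0 ≤ 0.4 * β)
  have hquarter : 4 * (⌊0.4 * β⌋₊ - ⌊0.4 * β⌋₊ / 4) ≤ 3 * (⌊0.4 * β⌋₊ + 1) := by omega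
  have hquarter' : (4 : ℝ) * (⌊0.4 * β⌋₊ - ⌊0.4 * β⌋₊ / 4 : ℕ) ≤ 3 * (⌊0.4 * β⌋₊ + 1) := by
    exact_mod_cast hquarter
  linarith

theorem two_pow_card_primeFactors_mul_le {a : ℕ} (ha : 60000 < a) :
    3.5 * (2 ^ #a.primeFactors * (a / a.totient : ℝ)) ≤ 0.027 * a := by
  have ha₀ : (60000 : ℝ) < a := by exact_mod_cast ha
  refine le_of_pow_le_pow_left₀ three_ne_zero (by positivity) ?_
  calc (3.5 * (2 ^ #a.primeFactors * (a / a.totient : ℝ))) ^ 3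
      = 3.5 ^ 3 * (2 ^ #a.primeFactors * (a / a.totient : ℝ)) ^ 3 := mul_pow _ _ _
    _ ≤ 3.5 ^ 3 * (1634 * a) := by
        gcongr
        exact two_pow_card_primeFactors_mul_pow_three_le (by omega)
    _ ≤ 0.027 ^ 3 * (60000 ^ 2 * a) := by linarith
    _ ≤ 0.027 ^ 3 * (a ^ 2 * a) := by gcongr
    _ = (0.027 * a) ^ 3 := by ring

theorem one_add_div_seven_mul_sq_le {a b β : ℝ} (hab : 60000 ^ 2 ≤ a * b) (ha : 0 < a)
    (hβ : 0 < β) (hβb : β ^ 3 = b) (hlog : log (a * b) / 6 ≤ log β) :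
    1 + a / 7 * (0.32 * β) ^ 2 ≤ a * b * (0.1857 / log (a * b) ^ 2) := by
  set T := log (a * b)
  have hT : 22 ≤ T := le_log_of_sq_le hab
  have hexp : 2.85 * (T / 6) ^ 2 ≤ exp (T / 6) := mul_sq_le_exp (by linarith)
  have hpow : exp (T / 6) ^ 6 = a * b := by
    rw [← exp_nat_mul, ← exp_log (by linarith : 0 < a * b)]
    congr 1
    push_cast
    ring
  have hexpβ : exp (T / 6) ≤ β := (le_log_iff_exp_le hβ).1 hlog
  have hone : 1 ≤ 0.00001 * (a * b / exp (T / 6)) := by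
    have h38 : 38 ≤ exp (T / 6) := by nlinarith
    calc (1 : ℝ) ≤ 0.00001 * 38 ^ 5 := by norm_num
      _ ≤ 0.00001 * exp (T / 6) ^ 5 := by gcongr
      _ = 0.00001 * (a * b / exp (T / 6)) := by rw [← hpow]; field_simp
  have hrows : a * β ^ 2 ≤ a * b / exp (T / 6) := by
    rw [le_div_iff₀ (exp_pos _), ← hβb]
    calc a * β ^ 2 * exp (T / 6) ≤ a * β ^ 2 * β := by gcongr
      _ = a * β ^ 3 := by ring
  calc 1 + a / 7 * (0.32 * β) ^ 2 = 1 + 0.1024 / 7 * (a * β ^ 2) := by ring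
    _ ≤ 0.00001 * (a * b / exp (T / 6)) + 0.1024 / 7 * (a * b / exp (T / 6)) := by gcongr
    _ ≤ 0.0147 * (a * b / exp (T / 6)) := by
        rw [← add_mul]
        gcongr
        norm_num
    _ ≤ 0.0147 * (a * b / (2.85 * (T / 6) ^ 2)) := by gcongr
    _ = a * b * (0.0147 * 36 / 2.85 / T ^ 2) := by ring
    _ ≤ a * b * (0.1857 / T ^ 2) := by
        gcongr
        norm_num

end Numerics

section NumericalSemigroup

variable {a b : ℕ}

theorem rows_main_term_le (ha : 60000 < a) (b : ℕ) :
    b / a * ((a / 7) ^ 2 / 2 + 2 ^ #a.primeFactors * (a / a.totient) * (a / 7 / 4) : ℝ)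
      ≤ a * b * (1.027 / 98) := by
  have ha₀ : (a : ℝ) ≠ 0 := by positivity
  calc b / a * ((a / 7) ^ 2 / 2 + 2 ^ #a.primeFactors * (a / a.totient) * (a / 7 / 4) : ℝ)
      = b / 98 * (a + 3.5 * (2 ^ #a.primeFactors * (a / a.totient))) := by
        field_simp
        ring
    _ ≤ b / 98 * (a + 0.027 * a) := by
        gcongr b / 98 * (a + ?_)
        exact two_pow_card_primeFactors_mul_le ha
    _ = a * b * (1.027 / 98) := by ring

theorem card_representablePrimes_le_div_log (ha : 60000 < a) (hab : a < b) :
    #(representablePrimes a b ⌊(a * b / 7 : ℝ)⌋₊)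
      ≤ a * b * (1.027 / 98 / (log (a * b) / 6 - 0.372) + 0.1857 / log (a * b) ^ 2) := by
  have ha₀ : (60000 : ℝ) < a := by exact_mod_cast ha
  have hab₀ : (a : ℝ) < b := by exact_mod_cast hab
  have hmul : (60000 ^ 2 : ℝ) ≤ a * b := by nlinarith
  have hT := le_log_of_sq_le hmul
  set β : ℝ := (b : ℝ) ^ (3⁻¹ : ℝ)
  have hβ₀ : 0 < β := rpow_pos_of_pos (by linarith) _
  have hβb : β ^ 3 = b := rpow_inv_natCast_pow b.cast_nonneg three_ne_zero
  have hβ : 37.5 ≤ β := le_of_pow_le_pow_left₀ three_ne_zero hβ₀.le (by rw [hβb]; linarith)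
  have hlogβ : log (a * b) / 6 ≤ log β := by
    rw [log_rpow (by linarith), log_mul (by linarith) (by linarith)]
    linarith [log_le_log (by linarith) hab₀.le]
  have hQb : ⌊0.4 * β⌋₊ < b := by
    rw [Nat.floor_lt (by positivity), ← hβb]
    have hsq : 37.5 ^ 2 ≤ β ^ 2 := by gcongr
    nlinarith
  have hharmonic : log (a * b) / 6 - 0.372 ≤ harmonic ⌊0.4 * β⌋₊ := by
    linarith [log_sub_le_harmonic_floor hβ]
  have hdenom : 0 < log (a * b) / 6 - 0.372 := by linarith
  have hmain := rows_main_term_le ha b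
  refine (card_representablePrimes_le (by omega)
    (Nat.le_floor (by push_cast; linarith)) hQb).trans ?_
  calc _ ≤ 1 + a * b * (1.027 / 98) / (log (a * b) / 6 - 0.372) + a / 7 * (0.32 * β) ^ 2 := by
        gcongr
        exact floor_sub_floor_div_four_le hβ
    _ = a * b * (1.027 / 98 / (log (a * b) / 6 - 0.372)) + (1 + a / 7 * (0.32 * β) ^ 2) := by ring
    _ ≤ _ := by
        rw [mul_add]
        gcongr
        exact one_add_div_seven_mul_sq_le hmul (by linarith) hβ₀ hβb hlogβ

theorem mul_primeCounting_mul_lt_piStar (ha : 60000 < a) (hab : a < b) (h : a.Coprime b) :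
    0.0445 * (Nat.primeCounting (a * b) : ℝ) < piStar a b := by
  have ha₀ : (60000 : ℝ) < a := by exact_mod_cast ha
  have hab₀ : (a : ℝ) < b := by exact_mod_cast hab
  have hmul : (60000 ^ 2 : ℝ) ≤ a * b := by nlinarith
  have hT := le_log_of_sq_le hmul
  have hsplit : (Nat.primeCounting ⌊(a * b / 7 : ℝ)⌋₊ : ℝ)
      ≤ piStar a b + #(representablePrimes a b ⌊(a * b / 7 : ℝ)⌋₊) := by
    exact_mod_cast primeCounting_le_piStar_add h _
  have hrep := card_representablePrimes_le_div_log ha hab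
  have hlower : a * b * (0.921 / 7 / (log (a * b) - 1.945))
      ≤ (Nat.primeCounting ⌊(a * b / 7 : ℝ)⌋₊ : ℝ) := by
    refine le_trans ?_ (mul_div_log_le_primeCounting (by linarith))
    calc a * b * (0.921 / 7 / (log (a * b) - 1.945) : ℝ)
        = 0.921 * (a * b / 7) / (log (a * b) - 1.945) := by ring
      _ ≤ 0.921 * (a * b / 7) / (log (a * b) - log 7) := by
          gcongr
          · linarith [log_le_sub_one_of_pos (by norm_num : (0 : ℝ) < 7)]
          · exact le_log_seven
      _ = 0.921 * (a * b / 7) / log (a * b / 7) := by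
          rw [log_div (by linarith) (by norm_num)]
  have hupper : (Nat.primeCounting (a * b) : ℝ)
      ≤ a * b * (1.386295 * (1 / log (a * b) + 1.3 / log (a * b) ^ 2)) := by
    have hfloor : ⌊(a * b : ℝ)⌋₊ = a * b := by exact_mod_cast Nat.floor_natCast (R := ℝ) (a * b)
    have hπ := primeCounting_le_log_four_mul hmul
    rw [hfloor] at hπ
    calc (Nat.primeCounting (a * b) : ℝ)
        ≤ log 4 * (a * b / log (a * b) + 1.3 * (a * b / log (a * b) ^ 2)) := hπ
      _ ≤ 1.386295 * (a * b / log (a * b) + 1.3 * (a * b / log (a * b) ^ 2)) := by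
          gcongr
          exact log_four_le
      _ = a * b * (1.386295 * (1 / log (a * b) + 1.3 / log (a * b) ^ 2)) := by ring
  have hdensity := mul_lt_mul_of_pos_left (density_inequality hT) (by linarith : (0 : ℝ) < a * b)
  linarith

end NumericalSemigroup

end PiStar

theorem piStar_gt_case1 (a b : ℕ) (ha : 60000 < a) (hab : a < b)
    (h : Nat.Coprime a b) :
    (0.0445 : ℝ) * (Nat.primeCounting (S a b) : ℝ) < (piStar a b : ℝ) := by
  have hS : S a b ≤ a * b := (Nat.sub_le _ _).trans (Nat.sub_le _ _)
  have hmono : (Nat.primeCounting (S a b) : ℝ) ≤ Nat.primeCounting (a * b) := by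
    exact_mod_cast Nat.monotone_primeCounting hS
  linarith [PiStar.mul_primeCounting_mul_lt_piStar ha hab h]
end
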